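/- Dimensions of the graded levels of the simplest rank-2 hyperbolic Kac–Moody algebra with respect to its standard sl₂ subalgebra: let g = g(A) with A = [[2,−3],[−3,2]], and let D be the level derivation of g with respect to node 1 (the unique derivation with D(e_1)=e_1, D(f_1)=−f_1, D(e_2)=D(f_2)=0, D(h_i)=0). Then the eigenspaces of D with eigenvalues l = 1,2,3,4,5,6,7,8 have dimensions 4, 6, 20, 49, 160, 494, 1636 and 5410 respectively. -/

import Mathlib

noncomputable section

open CartanMatrix

/-- A generalized Cartan matrix: `A i i = 2`, off-diagonal entries are non-positive, and
`A i j = 0 ↔ A j i = 0`. -/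
def IsGCM {B : Type*} (A : Matrix B B ℤ) : Prop :=
  (∀ i, A i i = 2) ∧ (∀ i j, i ≠ j → A i j ≤ 0) ∧ (∀ i j, A i j = 0 ↔ A j i = 0)

/-- The images in the Kac–Moody algebra `Matrix.ToLieAlgebra ℚ A` of the generators of the
free Lie algebra. -/
def KMgen {B : Type*} [DecidableEq B] (A : Matrix B B ℤ) (x : Generators B) :
    Matrix.ToLieAlgebra ℚ A :=
  LieSubmodule.Quotient.mk (N := Relations.toIdeal ℚ A) (FreeLieAlgebra.of ℚ x)

/-- The Cartan generator `h i`. -/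
def gH {B : Type*} [DecidableEq B] (A : Matrix B B ℤ) (i : B) : Matrix.ToLieAlgebra ℚ A :=
  KMgen A (Generators.H i)

/-- The raising generator `e i`. -/
def gE {B : Type*} [DecidableEq B] (A : Matrix B B ℤ) (i : B) : Matrix.ToLieAlgebra ℚ A :=
  KMgen A (Generators.E i)

/-- The lowering generator `f i`. -/
def gF {B : Type*} [DecidableEq B] (A : Matrix B B ℤ) (i : B) : Matrix.ToLieAlgebra ℚ A :=
  KMgen A (Generators.F i)

/-- The Cartan matrix of the simplest rank-2 hyperbolic Kac–Moody algebra. -/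
def A2hyp : Matrix (Fin 2) (Fin 2) ℤ := !![2, -3; -3, 2]

set_option linter.all false

namespace KMLevel

attribute [local instance 100] LieRing.ofAssociativeRing

/-- The four letters, standing for the basis of the level-one module. -/
inductive Lt
  | L0 | L1 | L2 | L3
  deriving DecidableEq

open Lt

instance : Fintype Lt := ⟨{L0, L1, L2, L3}, by intro x; cases x <;> decide⟩

/-- The free associative algebra on four letters. -/
abbrev T := FreeAlgebra ℚ Lt

def X (l : Lt) : T := FreeAlgebra.ι ℚ l

def word (w : List Lt) : T := (w.map X).prod

@[simp] lemma word_nil : word [] = 1 := rfl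
@[simp] lemma word_cons (l : Lt) (w : List Lt) : word (l :: w) = X l * word w := by simp [word]
lemma word_append (v w : List Lt) : word (v ++ w) = word v * word w := by simp [word]

def wordBasis : Module.Basis (FreeMonoid Lt) ℚ T := FreeAlgebra.basisFreeMonoid ℚ Lt

lemma wordBasis_apply (w : List Lt) : wordBasis (FreeMonoid.ofList w) = word w := by
  unfold wordBasis
  simp [FreeAlgebra.basisFreeMonoid, FreeAlgebra.equivMonoidAlgebraFreeMonoid]
  rfl

lemma lin_ext {M : Type*} [AddCommGroup M] [Module ℚ M] {f g : T →ₗ[ℚ] M}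
    (h : ∀ w, f (word w) = g (word w)) : f = g := by
  apply wordBasis.ext
  intro i
  have := h (FreeMonoid.toList i)
  rw [← wordBasis_apply] at this
  simpa using this

/-- Linear extension from words. -/
def ext' {M : Type*} [AddCommGroup M] [Module ℚ M] (f : List Lt → M) : T →ₗ[ℚ] M :=
  wordBasis.constr ℚ (fun i => f (FreeMonoid.toList i))

lemma ext'_word {M : Type*} [AddCommGroup M] [Module ℚ M] (f : List Lt → M) (w : List Lt) :
    ext' f (word w) = f w := by
  rw [← wordBasis_apply]; unfold ext'; rw [Module.Basis.constr_basis]; simp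

/-- Left multiplication by a letter. -/
def Lm (l : Lt) : Module.End ℚ T := LinearMap.mulLeft ℚ (X l)

@[simp] lemma Lm_apply (l : Lt) (u : T) : Lm l u = X l * u := rfl

def dw (C : Lt → Module.End ℚ T) : List Lt → T
  | [] => 0
  | l :: w => X l * dw C w + C l (word w)

/-- The operator killing `1` whose commutator with left multiplication by `l` is `C l`. -/
def dOp (C : Lt → Module.End ℚ T) : Module.End ℚ T := ext' (dw C)

lemma dOp_one (C) : dOp C 1 = 0 := by
  rw [← word_nil]; unfold dOp; rw [ext'_word]; rfl

lemma dOp_word_cons (C l w) : dOp C (word (l :: w)) = X l * dOp C (word w) + C l (word w) := by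
  unfold dOp; rw [ext'_word, ext'_word]; rfl

lemma dOp_mul (C l u) : dOp C (X l * u) = X l * dOp C u + C l u := by
  have : (dOp C) ∘ₗ Lm l = Lm l ∘ₗ dOp C + C l := by
    apply lin_ext; intro w; simpa using dOp_word_cons C l w
  simpa using LinearMap.congr_fun this u

lemma dOp_lie (C l) : ⁅dOp C, Lm l⁆ = C l := by
  ext1 u
  simp [LieRing.of_associative_ring_bracket, dOp_mul]

/-- An operator killing `1` and commuting with left multiplications vanishes. -/
lemma op_zero (A : Module.End ℚ T) (h1 : A 1 = 0) (h : ∀ l, ⁅A, Lm l⁆ = 0) : A = 0 := by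
  apply lin_ext
  intro w
  induction w with
  | nil => simpa using h1
  | cons l w ih =>
    have := LinearMap.congr_fun (h l) (word w)
    simp only [LieRing.of_associative_ring_bracket, LinearMap.sub_apply, Module.End.mul_apply,
      Lm_apply, LinearMap.zero_apply, ih, mul_zero, sub_zero] at this
    simpa using this

lemma op_eq (A B : Module.End ℚ T) (h1 : A 1 = B 1) (h : ∀ l, ⁅A, Lm l⁆ = ⁅B, Lm l⁆) : A = B := by
  rw [← sub_eq_zero]
  apply op_zero
  · simp [h1]
  · intro l; rw [sub_lie, h, sub_self]

def E1 : Module.End ℚ T := Lm L0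

def E2 : Module.End ℚ T := dOp fun
  | L0 => Lm L1
  | L1 => (2 : ℚ) • Lm L2
  | L2 => (3 : ℚ) • Lm L3
  | L3 => 0

def F2 : Module.End ℚ T := dOp fun
  | L0 => 0
  | L1 => (3 : ℚ) • Lm L0
  | L2 => (2 : ℚ) • Lm L1
  | L3 => Lm L2

def H1 : Module.End ℚ T := dOp fun
  | L0 => (2 : ℚ) • Lm L0
  | L1 => (-1 : ℚ) • Lm L1
  | L2 => (-4 : ℚ) • Lm L2
  | L3 => (-7 : ℚ) • Lm L3

def H2 : Module.End ℚ T := dOp fun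
  | L0 => (-3 : ℚ) • Lm L0
  | L1 => (-1 : ℚ) • Lm L1
  | L2 => (1 : ℚ) • Lm L2
  | L3 => (3 : ℚ) • Lm L3

def F1 : Module.End ℚ T := dOp fun
  | L0 => - H1
  | L1 => (-3 : ℚ) • E2
  | L2 => 0
  | L3 => 0

lemma E2_lie (l) : ⁅E2, Lm l⁆ = match l with
  | L0 => Lm L1 | L1 => (2 : ℚ) • Lm L2 | L2 => (3 : ℚ) • Lm L3 | L3 => 0 := dOp_lie _ l
lemma F2_lie (l) : ⁅F2, Lm l⁆ = match l with
  | L0 => 0 | L1 => (3 : ℚ) • Lm L0 | L2 => (2 : ℚ) • Lm L1 | L3 => Lm L2 := dOp_lie _ l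
lemma H1_lie (l) : ⁅H1, Lm l⁆ = match l with
  | L0 => (2 : ℚ) • Lm L0 | L1 => (-1 : ℚ) • Lm L1 | L2 => (-4 : ℚ) • Lm L2
  | L3 => (-7 : ℚ) • Lm L3 := dOp_lie _ l
lemma H2_lie (l) : ⁅H2, Lm l⁆ = match l with
  | L0 => (-3 : ℚ) • Lm L0 | L1 => (-1 : ℚ) • Lm L1 | L2 => (1 : ℚ) • Lm L2
  | L3 => (3 : ℚ) • Lm L3 := dOp_lie _ l
lemma F1_lie (l) : ⁅F1, Lm l⁆ = match l with
  | L0 => - H1 | L1 => (-3 : ℚ) • E2 | L2 => 0 | L3 => 0 := dOp_lie _ l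

@[simp] lemma E2_one : E2 1 = 0 := dOp_one _
@[simp] lemma F2_one : F2 1 = 0 := dOp_one _
@[simp] lemma H1_one : H1 1 = 0 := dOp_one _
@[simp] lemma H2_one : H2 1 = 0 := dOp_one _
@[simp] lemma F1_one : F1 1 = 0 := dOp_one _

lemma br_apply (A B : Module.End ℚ T) (u : T) : ⁅A, B⁆ u = A (B u) - B (A u) := rfl

lemma rel_H1H2 : ⁅H1, H2⁆ = 0 := by
  apply op_zero
  · simp [br_apply]
  · intro l; rw [lie_lie]; cases l <;> simp [H1_lie, H2_lie, lie_smul, smul_smul] <;> module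

lemma rel_E2F2 : ⁅E2, F2⁆ = H2 := by
  apply op_eq
  · simp [br_apply]
  · intro l; rw [lie_lie]
    cases l <;> simp [E2_lie, F2_lie, H2_lie, lie_smul, smul_smul] <;> module

lemma rel_H1E2 : ⁅H1, E2⁆ = (-3 : ℚ) • E2 := by
  apply op_eq
  · simp [br_apply]
  · intro l; rw [lie_lie]
    cases l <;> simp [E2_lie, H1_lie, lie_smul, smul_smul] <;> module

lemma rel_H2E2 : ⁅H2, E2⁆ = (2 : ℚ) • E2 := by
  apply op_eq
  · simp [br_apply]
  · intro l; rw [lie_lie]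
    cases l <;> simp [E2_lie, H2_lie, lie_smul, smul_smul] <;> module

lemma rel_H1F2 : ⁅H1, F2⁆ = (3 : ℚ) • F2 := by
  apply op_eq
  · simp [br_apply]
  · intro l; rw [lie_lie]
    cases l <;> simp [F2_lie, H1_lie, lie_smul, smul_smul] <;> module

lemma rel_H2F2 : ⁅H2, F2⁆ = (-2 : ℚ) • F2 := by
  apply op_eq
  · simp [br_apply]
  · intro l; rw [lie_lie]
    cases l <;> simp [F2_lie, H2_lie, lie_smul, smul_smul] <;> module

lemma rel_E1F2 : ⁅E1, F2⁆ = 0 := by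
  unfold E1; rw [← lie_skew, F2_lie]; simp

lemma rel_H1E1 : ⁅H1, E1⁆ = (2 : ℚ) • E1 := by unfold E1; rw [H1_lie]
lemma rel_H2E1 : ⁅H2, E1⁆ = (-3 : ℚ) • E1 := by unfold E1; rw [H2_lie]

lemma rel_E1F1 : ⁅E1, F1⁆ = H1 := by
  unfold E1; rw [← lie_skew, F1_lie]; simp

lemma rel_E2F1 : ⁅E2, F1⁆ = 0 := by
  apply op_zero
  · simp [br_apply]
  · intro l; rw [lie_lie]
    cases l <;> simp [E2_lie, F1_lie, lie_smul, smul_smul]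
    rw [rel_H1E2]; module

lemma rel_H1F1 : ⁅H1, F1⁆ = (-2 : ℚ) • F1 := by
  apply op_eq
  · simp [br_apply]
  · intro l; rw [lie_lie]
    cases l <;> simp [H1_lie, F1_lie, lie_smul, smul_smul, rel_H1E2] <;> module

lemma rel_H2F1 : ⁅H2, F1⁆ = (3 : ℚ) • F1 := by
  apply op_eq
  · simp [br_apply]
  · intro l; rw [lie_lie]
    cases l <;> simp [H2_lie, F1_lie, lie_smul, smul_smul, rel_H2E2]
    · exact rel_H1H2
    all_goals module

end KMLevel

namespace KMLevel
open Lt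

attribute [local instance 100] LieRing.ofAssociativeRing

section abstract
variable {L : Type*} [LieRing L] [LieAlgebra ℚ L]

lemma serre_comm_self (e f h g : L) (hef : ⁅e, f⁆ = h) (hf : ⁅h, f⁆ = (-2 : ℚ) • f)
    (hg : ⁅h, g⁆ = (3 : ℚ) • g) (heg : ⁅e, g⁆ = 0) : ⁅e, ⁅f, ⁅f, ⁅f, ⁅f, g⁆⁆⁆⁆⁆ = 0 := by
  have key : ∀ (x : L) (a b : ℚ) (y : L), ⁅e, x⁆ = a • y → ⁅h, x⁆ = b • x →
      ⁅e, ⁅f, x⁆⁆ = b • x + a • ⁅f, y⁆ := by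
    intro x a b y h1 h2
    rw [leibniz_lie, hef, h1, h2, lie_smul]
  have wt : ∀ (x : L) (b : ℚ), ⁅h, x⁆ = b • x → ⁅h, ⁅f, x⁆⁆ = (b - 2) • ⁅f, x⁆ := by
    intro x b h2
    rw [leibniz_lie, hf, h2, smul_lie, lie_smul]; module
  have w1 := wt _ _ hg
  have w2 := wt _ _ w1
  have w3 := wt _ _ w2
  have e1 : ⁅e, ⁅f, g⁆⁆ = (3 : ℚ) • g := by
    rw [key g 0 3 0 (by rw [heg]; simp) hg]; simp
  have e2 : ⁅e, ⁅f, ⁅f, g⁆⁆⁆ = (4 : ℚ) • ⁅f, g⁆ := by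
    rw [key _ _ _ _ e1 w1]; module
  have e3 : ⁅e, ⁅f, ⁅f, ⁅f, g⁆⁆⁆⁆ = (3 : ℚ) • ⁅f, ⁅f, g⁆⁆ := by
    rw [key _ _ _ _ e2 w2]; module
  rw [key _ _ _ _ e3 w3]; module

lemma serre_comm_other (e f h g : L) (hef : ⁅e, f⁆ = 0) (hg : ⁅e, g⁆ = h)
    (hf : ⁅h, f⁆ = (3 : ℚ) • f) : ⁅e, ⁅f, ⁅f, ⁅f, ⁅f, g⁆⁆⁆⁆⁆ = 0 := by
  have key : ∀ x : L, ⁅e, ⁅f, x⁆⁆ = ⁅f, ⁅e, x⁆⁆ := by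
    intro x; rw [leibniz_lie, hef]; simp
  have : ⁅f, h⁆ = (-3 : ℚ) • f := by rw [← lie_skew, hf]; module
  rw [key, key, key, key, hg, this]; simp
end abstract

/-! Derivation property -/

lemma dOp_der (C : Lt → Module.End ℚ T) (c : Lt → T) (hC : ∀ l, C l = LinearMap.mulLeft ℚ (c l))
    (u v : T) : dOp C (u * v) = dOp C u * v + u * dOp C v := by
  have : (dOp C) ∘ₗ (LinearMap.mulRight ℚ v) = (LinearMap.mulRight ℚ v) ∘ₗ dOp C
      + LinearMap.mulRight ℚ (dOp C v) := by
    apply lin_ext; intro w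
    induction w with
    | nil => simp [dOp_one]
    | cons l w ih =>
      simp only [LinearMap.comp_apply, LinearMap.mulRight_apply, LinearMap.add_apply] at ih
      simp only [LinearMap.comp_apply, LinearMap.mulRight_apply, LinearMap.add_apply, word_cons,
        mul_assoc, dOp_mul, hC, LinearMap.mulLeft_apply, ih, mul_add, add_mul]
      abel
  simpa using LinearMap.congr_fun this u

lemma mulLeft_smul' (a : ℚ) (x : T) : a • LinearMap.mulLeft ℚ x = LinearMap.mulLeft ℚ (a • x) := by
  ext1 y; simp

lemma E2_der (u v : T) : E2 (u * v) = E2 u * v + u * E2 v :=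
  dOp_der _ (fun | L0 => X L1 | L1 => (2 : ℚ) • X L2 | L2 => (3 : ℚ) • X L3 | L3 => 0)
    (by intro l; cases l <;> simp [Lm, mulLeft_smul']) u v
lemma F2_der (u v : T) : F2 (u * v) = F2 u * v + u * F2 v :=
  dOp_der _ (fun | L0 => 0 | L1 => (3 : ℚ) • X L0 | L2 => (2 : ℚ) • X L1 | L3 => X L2)
    (by intro l; cases l <;> simp [Lm, mulLeft_smul']) u v
lemma H1_der (u v : T) : H1 (u * v) = H1 u * v + u * H1 v :=
  dOp_der _ (fun | L0 => (2 : ℚ) • X L0 | L1 => (-1 : ℚ) • X L1 | L2 => (-4 : ℚ) • X L2 | L3 => (-7 : ℚ) • X L3)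
    (by intro l; cases l <;> simp only [Lm, mulLeft_smul']) u v
lemma H2_der (u v : T) : H2 (u * v) = H2 u * v + u * H2 v :=
  dOp_der _ (fun | L0 => (-3 : ℚ) • X L0 | L1 => (-1 : ℚ) • X L1 | L2 => (1 : ℚ) • X L2 | L3 => (3 : ℚ) • X L3)
    (by intro l; cases l <;> simp only [Lm, mulLeft_smul']) u v

abbrev LM (u : T) : Module.End ℚ T := LinearMap.mulLeft ℚ u

lemma LM_lie (u v : T) : ⁅LM u, LM v⁆ = LM ⁅u, v⁆ := by
  ext1 y; simp [LieRing.of_associative_ring_bracket, mul_assoc, sub_mul]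

/-- The Serre element. -/
def w1 : T := ⁅X L0, ⁅X L0, ⁅X L0, X L1⁆⁆⁆

lemma E2_X0 : E2 (X L0) = X L1 := by
  have := LinearMap.congr_fun (E2_lie L0) 1
  simpa [LieRing.of_associative_ring_bracket] using this

lemma adE1_E2 : ⁅E1, ⁅E1, ⁅E1, ⁅E1, E2⁆⁆⁆⁆ = - LM w1 := by
  have : ⁅E1, E2⁆ = - LM (X L1) := by
    unfold E1; rw [← lie_skew, E2_lie]; rfl
  rw [this]
  have e : E1 = LM (X L0) := rfl
  rw [e, lie_neg, lie_neg, lie_neg, LM_lie, LM_lie, LM_lie]; rfl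

def W : ℕ → T
  | 0 => w1
  | k + 1 => E2 (W k)

lemma LM_w1 : LM w1 = - ⁅E1, ⁅E1, ⁅E1, ⁅E1, E2⁆⁆⁆⁆ := by rw [adE1_E2, neg_neg]

lemma rel_F1E1 : ⁅F1, E1⁆ = -H1 := by rw [← lie_skew, rel_E1F1]
lemma rel_F1E2 : ⁅F1, E2⁆ = 0 := by rw [← lie_skew, rel_E2F1, neg_zero]
lemma rel_F2E1 : ⁅F2, E1⁆ = 0 := by rw [← lie_skew, rel_E1F2, neg_zero]
lemma rel_F2E2 : ⁅F2, E2⁆ = -H2 := by rw [← lie_skew, rel_E2F2]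

lemma F1_w1 : ⁅F1, LM w1⁆ = 0 := by
  rw [LM_w1, lie_neg, serre_comm_self F1 E1 (-H1) E2 rel_F1E1, neg_zero]
  · rw [neg_lie, rel_H1E1]; module
  · rw [neg_lie, rel_H1E2]; module
  · exact rel_F1E2

lemma F2_w1' : ⁅F2, LM w1⁆ = 0 := by
  rw [LM_w1, lie_neg, serre_comm_other F2 E1 (-H2) E2 rel_F2E1 rel_F2E2, neg_zero]
  rw [neg_lie, rel_H2E1]; module

lemma E2_LM (u : T) : ⁅E2, LM u⁆ = LM (E2 u) := by
  ext1 y; simp [LieRing.of_associative_ring_bracket, E2_der]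

lemma F1_W (k : ℕ) : ⁅F1, LM (W k)⁆ = 0 := by
  induction k with
  | zero => exact F1_w1
  | succ k ih =>
    change ⁅F1, LM (E2 (W k))⁆ = 0
    rw [← E2_LM, leibniz_lie, ih, rel_F1E2]; simp

lemma F2_w1 : F2 w1 = 0 := by
  have := LinearMap.congr_fun F2_w1' 1
  simpa [LieRing.of_associative_ring_bracket] using this

lemma H1_X (l) : H1 (X l) = ⁅H1, Lm l⁆ 1 := by
  simp [LieRing.of_associative_ring_bracket]
lemma H2_X (l) : H2 (X l) = ⁅H2, Lm l⁆ 1 := by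
  simp [LieRing.of_associative_ring_bracket]

lemma H1_w1 : H1 w1 = (5 : ℚ) • w1 := by
  have h0 : H1 (X L0) = (2 : ℚ) • X L0 := by rw [H1_X, H1_lie]; simp
  have h1 : H1 (X L1) = (-1 : ℚ) • X L1 := by rw [H1_X, H1_lie]; simp
  have key : ∀ (u v : T) (a b : ℚ), H1 u = a • u → H1 v = b • v → H1 ⁅u, v⁆ = (a + b) • ⁅u, v⁆ := by
    intro u v a b hu hv
    simp only [LieRing.of_associative_ring_bracket, map_sub, H1_der, hu, hv, smul_mul_assoc,
      mul_smul_comm]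
    module
  unfold w1
  rw [key _ _ _ _ h0 (key _ _ _ _ h0 (key _ _ _ _ h0 h1))]; norm_num

lemma H2_w1 : H2 w1 = (-10 : ℚ) • w1 := by
  have h0 : H2 (X L0) = (-3 : ℚ) • X L0 := by rw [H2_X, H2_lie]; simp
  have h1 : H2 (X L1) = (-1 : ℚ) • X L1 := by rw [H2_X, H2_lie]; simp
  have key : ∀ (u v : T) (a b : ℚ), H2 u = a • u → H2 v = b • v → H2 ⁅u, v⁆ = (a + b) • ⁅u, v⁆ := by
    intro u v a b hu hv
    simp only [LieRing.of_associative_ring_bracket, map_sub, H2_der, hu, hv, smul_mul_assoc,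
      mul_smul_comm]
    module
  unfold w1
  rw [key _ _ _ _ h0 (key _ _ _ _ h0 (key _ _ _ _ h0 h1))]; norm_num

lemma op_swap {A B : Module.End ℚ T} {C} (h : ⁅A, B⁆ = C) (u : T) : A (B u) = B (A u) + C u := by
  rw [← h]; simp [LieRing.of_associative_ring_bracket]

lemma H1_W (k : ℕ) : ∃ c : ℚ, H1 (W k) = c • W k := by
  induction k with
  | zero => exact ⟨_, H1_w1⟩
  | succ k ih =>
    obtain ⟨c, hc⟩ := ih
    refine ⟨c - 3, ?_⟩
    change H1 (E2 (W k)) = _ • E2 (W k)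
    rw [op_swap rel_H1E2, hc, map_smul, LinearMap.smul_apply]; module

lemma H2_W (k : ℕ) : ∃ c : ℚ, H2 (W k) = c • W k := by
  induction k with
  | zero => exact ⟨_, H2_w1⟩
  | succ k ih =>
    obtain ⟨c, hc⟩ := ih
    refine ⟨c + 2, ?_⟩
    change H2 (E2 (W k)) = _ • E2 (W k)
    rw [op_swap rel_H2E2, hc, map_smul, LinearMap.smul_apply]; module

lemma F2_W (k : ℕ) : ∃ c : ℚ, F2 (W (k + 1)) = c • W k := by
  induction k with
  | zero =>
    refine ⟨10, ?_⟩
    change F2 (E2 w1) = (10 : ℚ) • w1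
    rw [op_swap rel_F2E2, F2_w1, LinearMap.neg_apply, H2_w1]; simp
  | succ k ih =>
    obtain ⟨c, hc⟩ := ih
    obtain ⟨d, hd⟩ := H2_W (k + 1)
    refine ⟨c - d, ?_⟩
    change F2 (E2 (W (k + 1))) = _ • (W (k + 1))
    rw [op_swap rel_F2E2, hc, map_smul, LinearMap.neg_apply, hd]
    change c • W (k + 1) + _ = _
    module

/-- The ideal of Serre relations. -/
def I : Submodule ℚ T := Submodule.span ℚ {x | ∃ (u : T) (k : ℕ) (v : T), x = u * W k * v}

lemma mem_I (u : T) (k : ℕ) (v : T) : u * W k * v ∈ I := Submodule.subset_span ⟨u, k, v, rfl⟩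

lemma I_le {A : Module.End ℚ T} (h : ∀ u k v, A (u * W k * v) ∈ I) : I ≤ I.comap A := by
  unfold I; rw [Submodule.span_le]
  rintro x ⟨u, k, v, rfl⟩
  exact h u k v

lemma I_mulLeft (a : T) : I ≤ I.comap (LM a) := I_le fun u k v => by
  simpa [mul_assoc] using mem_I (a * u) k v

lemma I_mulRight (a : T) : I ≤ I.comap (LinearMap.mulRight ℚ a) := I_le fun u k v => by
  simpa [mul_assoc] using mem_I u k (v * a)

lemma I_der {A : Module.End ℚ T} (hA : ∀ u v, A (u * v) = A u * v + u * A v)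
    (hW : ∀ k, A (W k) ∈ I) : I ≤ I.comap A := I_le fun u k v => by
  rw [hA, hA]
  refine I.add_mem ?_ (mem_I u k _)
  rw [add_mul]
  refine I.add_mem (mem_I _ k v) ?_
  exact I_mulRight v (I_mulLeft u (hW k))

lemma W_mem (k) : W k ∈ I := by simpa using mem_I 1 k 1

lemma I_E2 : I ≤ I.comap E2 := I_der E2_der fun k => W_mem (k + 1)
lemma I_H1 : I ≤ I.comap H1 := I_der H1_der fun k => by
  obtain ⟨c, hc⟩ := H1_W k
  rw [hc]; exact I.smul_mem _ (W_mem k)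
lemma I_H2 : I ≤ I.comap H2 := I_der H2_der fun k => by
  obtain ⟨c, hc⟩ := H2_W k
  rw [hc]; exact I.smul_mem _ (W_mem k)
lemma I_F2 : I ≤ I.comap F2 := I_der F2_der fun k => by
  cases k with
  | zero => change F2 w1 ∈ I; rw [F2_w1]; exact I.zero_mem
  | succ k =>
    obtain ⟨c, hc⟩ := F2_W k
    rw [hc]; exact I.smul_mem _ (W_mem k)
lemma I_E1 : I ≤ I.comap E1 := I_mulLeft _

lemma I_F1 : I ≤ I.comap F1 := I_le fun u k v => by
  have key : ∀ w : List Lt, F1 (word w * W k * v) ∈ I := by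
    intro w
    induction w with
    | nil =>
      have := LinearMap.congr_fun (F1_W k) v
      simp only [LieRing.of_associative_ring_bracket, LinearMap.sub_apply, Module.End.mul_apply,
        LinearMap.mulLeft_apply, LinearMap.zero_apply] at this
      rw [word_nil, one_mul, sub_eq_zero.1 this]
      simpa using mem_I 1 k (F1 v)
    | cons l w ih =>
      rw [word_cons, mul_assoc, mul_assoc, ← mul_assoc (word w)]
      have := op_swap (A := F1) (B := Lm l) rfl (word w * W k * v)
      simp only [Lm_apply] at this
      rw [this]
      refine I.add_mem (I_mulLeft _ ih) ?_
      rw [F1_lie]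
      cases l
      · exact I.neg_mem (I_H1 (mem_I _ _ _))
      · exact I.smul_mem _ (I_E2 (mem_I _ _ _))
      · exact I.zero_mem
      · exact I.zero_mem
  let J : Submodule ℚ T := I.comap (F1 ∘ₗ LinearMap.mulRight ℚ v ∘ₗ LinearMap.mulRight ℚ (W k))
  change u ∈ J
  have hJ : J = ⊤ := by
    rw [eq_top_iff, ← wordBasis.span_eq, Submodule.span_le]
    rintro _ ⟨i, rfl⟩
    have := wordBasis_apply (FreeMonoid.toList i)
    simp only [FreeMonoid.ofList_toList] at this
    rw [this]
    exact key _
  rw [hJ]; trivial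

/-! Serre relations for the F's on T. -/

lemma op_zero' (S : Module.End ℚ T) (h1 : S 1 = 0) (hE1 : ⁅E1, S⁆ = 0) (hE2 : ⁅E2, S⁆ = 0) :
    S = 0 := by
  have a0 : ⁅S, Lm L0⁆ = 0 := by
    have h : ⁅Lm L0, S⁆ = 0 := hE1
    rw [← lie_skew, h, neg_zero]
  have hE : ⁅S, E2⁆ = 0 := by rw [← lie_skew, hE2, neg_zero]
  have st : ∀ l, ⁅S, Lm l⁆ = 0 → ⁅S, ⁅E2, Lm l⁆⁆ = 0 := by
    intro l h; rw [leibniz_lie, hE, h]; simp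
  have a1 : ⁅S, Lm L1⁆ = 0 := by simpa [E2_lie] using st L0 a0
  have a2 : ⁅S, Lm L2⁆ = 0 := by simpa [E2_lie, lie_smul] using st L1 a1
  have a3 : ⁅S, Lm L3⁆ = 0 := by simpa [E2_lie, lie_smul] using st L2 a2
  apply op_zero S h1
  intro l; cases l <;> assumption

lemma serre_F12 : ⁅F1, ⁅F1, ⁅F1, ⁅F1, F2⁆⁆⁆⁆ = 0 := by
  refine op_zero' _ ?_ ?_ ?_
  · simp only [br_apply, F1_one, F2_one, map_zero, sub_zero]
  · exact serre_comm_self E1 F1 H1 F2 rel_E1F1 rel_H1F1 rel_H1F2 rel_E1F2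
  · have := serre_comm_other E2 F1 H2 F2 rel_E2F1 rel_E2F2 rel_H2F1
    rw [this]

lemma serre_F21 : ⁅F2, ⁅F2, ⁅F2, ⁅F2, F1⁆⁆⁆⁆ = 0 := by
  refine op_zero' _ ?_ ?_ ?_
  · simp only [br_apply, F1_one, F2_one, map_zero, sub_zero]
  · exact serre_comm_other E1 F2 H1 F1 rel_E1F2 rel_E1F1 rel_H1F2
  · have := serre_comm_self E2 F2 H2 F1 rel_E2F2 rel_H2F2 rel_H2F1 rel_E2F1
    rw [this]

lemma serre_E21 : ⁅E2, ⁅E2, ⁅E2, ⁅E2, E1⁆⁆⁆⁆ = 0 := by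
  unfold E1; simp [E2_lie, lie_smul]

end KMLevel

namespace KMLevel
open Lt

attribute [local instance 100] LieRing.ofAssociativeRing

/-- The Kac-Moody algebra. -/
abbrev 𝔤 := Matrix.ToLieAlgebra ℚ A2hyp

/-- The projection from the free Lie algebra. -/
def pr : FreeLieAlgebra ℚ (Generators (Fin 2)) →ₗ⁅ℚ⁆ 𝔤 where
  toFun x := LieSubmodule.Quotient.mk (N := Relations.toIdeal ℚ A2hyp) x
  map_add' _ _ := rfl
  map_smul' _ _ := rfl
  map_lie' := rfl

lemma pr_surj : Function.Surjective pr := fun x => Quotient.inductionOn' x fun y => ⟨y, rfl⟩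

lemma pr_of (x) : pr (FreeLieAlgebra.of ℚ x) = KMgen A2hyp x := rfl

lemma pr_zero {x} (h : x ∈ Relations.toIdeal ℚ A2hyp) : pr x = 0 :=
  (LieSubmodule.Quotient.mk_eq_zero' (N := Relations.toIdeal ℚ A2hyp)).2 h

lemma pr_rel {x} (h : x ∈ Relations.toSet ℚ A2hyp) : pr x = 0 :=
  pr_zero (LieSubmodule.subset_lieSpan h)

theorem kmLift {L : Type*} [LieRing L] [LieAlgebra ℚ L] (f : Generators (Fin 2) → L)
    (hrel : ∀ r ∈ Relations.toSet ℚ A2hyp, FreeLieAlgebra.lift ℚ f r = 0) :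
    ∃ φ : 𝔤 →ₗ⁅ℚ⁆ L, ∀ x, φ (KMgen A2hyp x) = f x := by
  have hk : Relations.toIdeal ℚ A2hyp ≤ (FreeLieAlgebra.lift ℚ f).ker := by
    unfold Relations.toIdeal
    rw [LieSubmodule.lieSpan_le]
    intro r hr
    exact hrel r hr
  let φ₀ : 𝔤 →ₗ[ℚ] L := Submodule.liftQ (Relations.toIdeal ℚ A2hyp).toSubmodule
    (FreeLieAlgebra.lift ℚ f : _ →ₗ[ℚ] L) (by intro x hx; exact hk hx)
  have h0 : ∀ x, φ₀ (pr x) = FreeLieAlgebra.lift ℚ f x := fun x => rfl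
  refine ⟨{ φ₀ with map_lie' := ?_ }, ?_⟩
  · intro x y
    obtain ⟨x, rfl⟩ := pr_surj x
    obtain ⟨y, rfl⟩ := pr_surj y
    change φ₀ ⁅pr x, pr y⁆ = ⁅φ₀ (pr x), φ₀ (pr y)⁆
    rw [← LieHom.map_lie, h0, h0, h0, LieHom.map_lie]
  · intro x
    change φ₀ (pr (FreeLieAlgebra.of ℚ x)) = _
    rw [h0, FreeLieAlgebra.lift_of_apply]

def e1 : 𝔤 := gE A2hyp 0
def e2 : 𝔤 := gE A2hyp 1
def f1 : 𝔤 := gF A2hyp 0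
def f2 : 𝔤 := gF A2hyp 1
def h1 : 𝔤 := gH A2hyp 0
def h2 : 𝔤 := gH A2hyp 1

lemma gg_HH (i j) : ⁅gH A2hyp i, gH A2hyp j⁆ = 0 := by
  have := pr_rel (x := Relations.HH ℚ (i, j)) (by simp [Relations.toSet])
  simpa [Relations.HH, pr_of, gH, gE, gF] using this
lemma gg_EF (i) : ⁅gE A2hyp i, gF A2hyp i⁆ = gH A2hyp i := by
  have := pr_rel (x := Relations.EF ℚ (i, i)) (by unfold Relations.toSet; aesop)
  simpa [Relations.EF, pr_of, gH, gE, gF, sub_eq_zero] using this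
lemma gg_EF' (i j) (h : i ≠ j) : ⁅gE A2hyp i, gF A2hyp j⁆ = 0 := by
  have := pr_rel (x := Relations.EF ℚ (i, j)) (by unfold Relations.toSet; aesop)
  simpa [Relations.EF, pr_of, gH, gE, gF, h] using this
lemma gg_HE (i j) : ⁅gH A2hyp i, gE A2hyp j⁆ = A2hyp i j • gE A2hyp j := by
  have := pr_rel (x := Relations.HE ℚ A2hyp (i, j)) (by unfold Relations.toSet; aesop)
  simpa [Relations.HE, pr_of, gH, gE, gF, sub_eq_zero] using this
lemma gg_HF (i j) : ⁅gH A2hyp i, gF A2hyp j⁆ = -(A2hyp i j • gF A2hyp j) := by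
  have := pr_rel (x := Relations.HF ℚ A2hyp (i, j)) (by unfold Relations.toSet; aesop)
  simpa [Relations.HF, pr_of, gH, gE, gF, ← eq_neg_iff_add_eq_zero] using this


lemma gg_adE (i j) : ((LieAlgebra.ad ℚ 𝔤 (gE A2hyp i)) ^ (-A2hyp i j).toNat)
    ⁅gE A2hyp i, gE A2hyp j⁆ = 0 := by
  have := pr_rel (x := Relations.adE ℚ A2hyp (i, j)) (by unfold Relations.toSet; aesop)
  rw [← this]
  simp only [Relations.adE, Function.uncurry_apply_pair]
  generalize (-A2hyp i j).toNat = n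
  induction n with
  | zero => simp [pr_of, gE]
  | succ n ih => simp only [pow_succ', Module.End.mul_apply, LieAlgebra.ad_apply, LieHom.map_lie, ih]; rfl
lemma gg_adF (i j) : ((LieAlgebra.ad ℚ 𝔤 (gF A2hyp i)) ^ (-A2hyp i j).toNat)
    ⁅gF A2hyp i, gF A2hyp j⁆ = 0 := by
  have := pr_rel (x := Relations.adF ℚ A2hyp (i, j)) (by unfold Relations.toSet; aesop)
  rw [← this]
  simp only [Relations.adF, Function.uncurry_apply_pair]
  generalize (-A2hyp i j).toNat = n
  induction n with
  | zero => simp [pr_of, gF]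
  | succ n ih => simp only [pow_succ', Module.End.mul_apply, LieAlgebra.ad_apply, LieHom.map_lie, ih]; rfl

/-- The defining relations. -/
structure KMRel {L : Type*} [LieRing L] [LieAlgebra ℚ L] (e1 e2 f1 f2 h1 h2 : L) : Prop where
  hh : ⁅h1, h2⁆ = 0
  e1f1 : ⁅e1, f1⁆ = h1
  e2f2 : ⁅e2, f2⁆ = h2
  e1f2 : ⁅e1, f2⁆ = 0
  e2f1 : ⁅e2, f1⁆ = 0
  h1e1 : ⁅h1, e1⁆ = (2 : ℚ) • e1
  h1e2 : ⁅h1, e2⁆ = (-3 : ℚ) • e2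
  h2e1 : ⁅h2, e1⁆ = (-3 : ℚ) • e1
  h2e2 : ⁅h2, e2⁆ = (2 : ℚ) • e2
  h1f1 : ⁅h1, f1⁆ = (-2 : ℚ) • f1
  h1f2 : ⁅h1, f2⁆ = (3 : ℚ) • f2
  h2f1 : ⁅h2, f1⁆ = (3 : ℚ) • f1
  h2f2 : ⁅h2, f2⁆ = (-2 : ℚ) • f2
  sE12 : ⁅e1, ⁅e1, ⁅e1, ⁅e1, e2⁆⁆⁆⁆ = 0
  sE21 : ⁅e2, ⁅e2, ⁅e2, ⁅e2, e1⁆⁆⁆⁆ = 0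
  sF12 : ⁅f1, ⁅f1, ⁅f1, ⁅f1, f2⁆⁆⁆⁆ = 0
  sF21 : ⁅f2, ⁅f2, ⁅f2, ⁅f2, f1⁆⁆⁆⁆ = 0

lemma KMRel.swap {L : Type*} [LieRing L] [LieAlgebra ℚ L] {e1 e2 f1 f2 h1 h2 : L}
    (r : KMRel e1 e2 f1 f2 h1 h2) : KMRel f1 f2 e1 e2 (-h1) (-h2) where
  hh := by simp [r.hh]
  e1f1 := by rw [← lie_skew, r.e1f1]
  e2f2 := by rw [← lie_skew, r.e2f2]
  e1f2 := by rw [← lie_skew, r.e2f1, neg_zero]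
  e2f1 := by rw [← lie_skew, r.e1f2, neg_zero]
  h1e1 := by rw [neg_lie, r.h1f1]; module
  h1e2 := by rw [neg_lie, r.h1f2]; module
  h2e1 := by rw [neg_lie, r.h2f1]; module
  h2e2 := by rw [neg_lie, r.h2f2]; module
  h1f1 := by rw [neg_lie, r.h1e1]; module
  h1f2 := by rw [neg_lie, r.h1e2]; module
  h2f1 := by rw [neg_lie, r.h2e1]; module
  h2f2 := by rw [neg_lie, r.h2e2]; module
  sE12 := r.sF12
  sE21 := r.sF21
  sF12 := r.sE12
  sF21 := r.sE21

lemma A00 : A2hyp 0 0 = 2 := rfl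
lemma A01 : A2hyp 0 1 = -3 := rfl
lemma A10 : A2hyp 1 0 = -3 := rfl
lemma A11 : A2hyp 1 1 = 2 := rfl

lemma g_rel : KMRel e1 e2 f1 f2 h1 h2 where
  hh := gg_HH 0 1
  e1f1 := gg_EF 0
  e2f2 := gg_EF 1
  e1f2 := gg_EF' 0 1 (by decide)
  e2f1 := gg_EF' 1 0 (by decide)
  h1e1 := by have := gg_HE 0 0; rw [A00] at this; unfold h1 e1; rw [this]; module
  h1e2 := by have := gg_HE 0 1; rw [A01] at this; unfold h1 e2; rw [this]; module
  h2e1 := by have := gg_HE 1 0; rw [A10] at this; unfold h2 e1; rw [this]; module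
  h2e2 := by have := gg_HE 1 1; rw [A11] at this; unfold h2 e2; rw [this]; module
  h1f1 := by have := gg_HF 0 0; rw [A00] at this; unfold h1 f1; rw [this]; module
  h1f2 := by have := gg_HF 0 1; rw [A01] at this; unfold h1 f2; rw [this]; module
  h2f1 := by have := gg_HF 1 0; rw [A10] at this; unfold h2 f1; rw [this]; module
  h2f2 := by have := gg_HF 1 1; rw [A11] at this; unfold h2 f2; rw [this]; module
  sE12 := by have := gg_adE 0 1; rw [A01] at this; exact this
  sE21 := by have := gg_adE 1 0; rw [A10] at this; exact this
  sF12 := by have := gg_adF 0 1; rw [A01] at this; exact this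
  sF21 := by have := gg_adF 1 0; rw [A10] at this; exact this

theorem kmLift' {L : Type*} [LieRing L] [LieAlgebra ℚ L] {e1' e2' f1' f2' h1' h2' : L}
    (r : KMRel e1' e2' f1' f2' h1' h2') :
    ∃ φ : 𝔤 →ₗ⁅ℚ⁆ L, φ e1 = e1' ∧ φ e2 = e2' ∧ φ f1 = f1' ∧ φ f2 = f2' ∧ φ h1 = h1' ∧ φ h2 = h2' := by
  let f : Generators (Fin 2) → L := fun
    | .H i => ![h1', h2'] i
    | .E i => ![e1', e2'] i
    | .F i => ![f1', f2'] i
  have fH0 : f (.H 0) = h1' := rfl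
  have fH1 : f (.H 1) = h2' := rfl
  have fE0 : f (.E 0) = e1' := rfl
  have fE1 : f (.E 1) = e2' := rfl
  have fF0 : f (.F 0) = f1' := rfl
  have fF1 : f (.F 1) = f2' := rfl
  obtain ⟨φ, hφ⟩ := kmLift f (by
    have two : (-2 : ℤ).toNat = 0 := rfl
    have three : (3 : ℤ).toNat = 3 := rfl
    have h01 : (0 : Fin 2) ≠ 1 := by decide
    have h10 : (1 : Fin 2) ≠ 0 := by decide
    rintro x (((((⟨⟨i, j⟩, rfl⟩ | ⟨⟨i, j⟩, rfl⟩) | ⟨⟨i, j⟩, rfl⟩) | ⟨⟨i, j⟩, rfl⟩) | ⟨⟨i, j⟩, rfl⟩) | ⟨⟨i, j⟩, rfl⟩)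
    · have := r.hh
      have h' : ⁅h2', h1'⁆ = 0 := by rw [← lie_skew, r.hh, neg_zero]
      fin_cases i <;> fin_cases j <;> simp [Relations.HH, fH0, fH1, this, h']
    · fin_cases i <;> fin_cases j <;>
        simp [Relations.EF, fH0, fH1, fE0, fE1, fF0, fF1, r.e1f1, r.e1f2, r.e2f1, r.e2f2]
    · fin_cases i <;> fin_cases j <;>
        simp [Relations.HE, fH0, fH1, fE0, fE1, r.h1e1, r.h1e2, r.h2e1, r.h2e2, A00, A01, A10, A11] <;> module
    · fin_cases i <;> fin_cases j <;>
        simp [Relations.HF, fH0, fH1, fF0, fF1, r.h1f1, r.h1f2, r.h2f1, r.h2f2, A00, A01, A10, A11] <;> module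
    · fin_cases i <;> fin_cases j <;>
        simp [Relations.adE, fE0, fE1, A00, A01, A10, A11, two, pow_succ, r.sE12, r.sE21, three]
    · fin_cases i <;> fin_cases j <;>
        simp [Relations.adF, fF0, fF1, A00, A01, A10, A11, two, pow_succ, r.sF12, r.sF21, three])
  exact ⟨φ, hφ _, hφ _, hφ _, hφ _, hφ _, hφ _⟩

/-! The representation on `T / I`. -/

abbrev Q := T ⧸ I

def q (A : Module.End ℚ T) (h : I ≤ I.comap A) : Module.End ℚ Q := Submodule.mapQ I I A h

lemma q_mk (A h) (u : T) : q A h (Submodule.Quotient.mk u) = Submodule.Quotient.mk (A u) := rfl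

lemma q_lie {A B C : Module.End ℚ T} (hA hB hC) (h : ⁅A, B⁆ = C) : ⁅q A hA, q B hB⁆ = q C hC := by
  subst h
  ext1; ext1 u; rfl

lemma lie_le {A B : Module.End ℚ T} (hA : I ≤ I.comap A) (hB : I ≤ I.comap B) :
    I ≤ I.comap ⁅A, B⁆ := fun x hx => I.sub_mem (hA (hB hx)) (hB (hA hx))

lemma q_lie' {A B : Module.End ℚ T} (hA hB) : ⁅q A hA, q B hB⁆ = q ⁅A, B⁆ (lie_le hA hB) := q_lie _ _ _ rfl

lemma q_lie0 {A B : Module.End ℚ T} (hA hB) (h : ⁅A, B⁆ = 0) : ⁅q A hA, q B hB⁆ = 0 := by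
  rw [q_lie']; ext1; ext1 u
  change Submodule.Quotient.mk (⁅A, B⁆ u) = _
  rw [h]; rfl

lemma q_lie_smul {A B C : Module.End ℚ T} (hA hB hC) (c : ℚ) (h : ⁅A, B⁆ = c • C) :
    ⁅q A hA, q B hB⁆ = c • q C hC := by
  rw [q_lie']; ext1; ext1 u
  change Submodule.Quotient.mk (⁅A, B⁆ u) = _
  rw [h]; rfl

lemma q_rel : KMRel (q E1 I_E1) (q E2 I_E2) (q F1 I_F1) (q F2 I_F2) (q H1 I_H1) (q H2 I_H2) where
  hh := q_lie0 _ _ rel_H1H2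
  e1f1 := q_lie _ _ _ rel_E1F1
  e2f2 := q_lie _ _ _ rel_E2F2
  e1f2 := q_lie0 _ _ rel_E1F2
  e2f1 := q_lie0 _ _ rel_E2F1
  h1e1 := q_lie_smul _ _ _ _ rel_H1E1
  h1e2 := q_lie_smul _ _ _ _ rel_H1E2
  h2e1 := q_lie_smul _ _ _ _ rel_H2E1
  h2e2 := q_lie_smul _ _ _ _ rel_H2E2
  h1f1 := q_lie_smul _ _ _ _ rel_H1F1
  h1f2 := q_lie_smul _ _ _ _ rel_H1F2
  h2f1 := q_lie_smul _ _ _ _ rel_H2F1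
  h2f2 := q_lie_smul _ _ _ _ rel_H2F2
  sE12 := by
    simp only [q_lie']
    ext1; ext1 u
    change Submodule.Quotient.mk (⁅E1, ⁅E1, ⁅E1, ⁅E1, E2⁆⁆⁆⁆ u) = _
    rw [adE1_E2]
    change Submodule.Quotient.mk (-(w1 * u)) = (0 : Q)
    rw [Submodule.Quotient.mk_eq_zero]
    exact I.neg_mem (I_mulRight u (W_mem 0))
  sE21 := by rw [q_lie', q_lie', q_lie']; exact q_lie0 _ _ serre_E21
  sF12 := by rw [q_lie', q_lie', q_lie']; exact q_lie0 _ _ serre_F12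
  sF21 := by rw [q_lie', q_lie', q_lie']; exact q_lie0 _ _ serre_F21

def v0 : 𝔤 := e1
def v1 : 𝔤 := ⁅e2, e1⁆
def v2 : 𝔤 := (1 / 2 : ℚ) • ⁅e2, v1⁆
def v3 : 𝔤 := (1 / 3 : ℚ) • ⁅e2, v2⁆

/-- The elements of level one. -/
def v : Lt → 𝔤
  | L0 => v0 | L1 => v1 | L2 => v2 | L3 => v3

lemma I_Lm (l : Lt) : I ≤ I.comap (Lm l) := I_mulLeft _

lemma exists_rho : ∃ ρ : 𝔤 →ₗ⁅ℚ⁆ Module.End ℚ Q, ∀ l (u : T),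
    ρ (v l) (Submodule.Quotient.mk u) = Submodule.Quotient.mk (X l * u) := by
  obtain ⟨ρ, h1, h2, -⟩ := kmLift' q_rel
  have s0 : ρ (v L0) = q (Lm L0) (I_Lm _) := h1
  have s1 : ρ (v L1) = q (Lm L1) (I_Lm _) := by
    change ρ ⁅e2, e1⁆ = _
    rw [LieHom.map_lie, h1, h2]; exact q_lie _ _ _ (E2_lie L0)
  have s2 : ρ (v L2) = q (Lm L2) (I_Lm _) := by
    change ρ ((1 / 2 : ℚ) • ⁅e2, v L1⁆) = _
    rw [map_smul, LieHom.map_lie, s1, h2, q_lie_smul _ _ (I_Lm _) _ (E2_lie L1), smul_smul]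
    norm_num
  have s3 : ρ (v L3) = q (Lm L3) (I_Lm _) := by
    change ρ ((1 / 3 : ℚ) • ⁅e2, v L2⁆) = _
    rw [map_smul, LieHom.map_lie, s2, h2, q_lie_smul _ _ (I_Lm _) _ (E2_lie L2), smul_smul]
    norm_num
  refine ⟨ρ, ?_⟩
  intro l u
  cases l
  · rw [s0]; rfl
  · rw [s1]; rfl
  · rw [s2]; rfl
  · rw [s3]; rfl

end KMLevel

namespace KMLevel
open Lt

attribute [local instance 100] LieRing.ofAssociativeRing

section
variable {L : Type*} [LieRing L] [LieAlgebra ℚ L]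

/-- Level one elements built from `e1`, `e2`. -/
def vg (e1 e2 : L) : Lt → L
  | L0 => e1
  | L1 => ⁅e2, e1⁆
  | L2 => (1 / 2 : ℚ) • ⁅e2, ⁅e2, e1⁆⁆
  | L3 => (1 / 3 : ℚ) • ⁅e2, (1 / 2 : ℚ) • ⁅e2, ⁅e2, e1⁆⁆⁆

/-- The level spaces (level zero is replaced by the zero space). -/
def Gp (e1 e2 : L) : ℕ → Submodule ℚ L
  | 0 => ⊥
  | 1 => Submodule.span ℚ (Set.range (vg e1 e2))
  | n + 2 => ⨆ l, (Gp e1 e2 (n + 1)).map (LieAlgebra.ad ℚ L (vg e1 e2 l) : L →ₗ[ℚ] L)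

/-- The level zero space. -/
def Zg (e2 f2 h1 h2 : L) : Submodule ℚ L := Submodule.span ℚ {e2, f2, h1, h2}

/-- Stability under `ad`. -/
def Maps (x : L) (A B : Submodule ℚ L) : Prop := ∀ y ∈ A, ⁅x, y⁆ ∈ B

lemma maps_span {x : L} {s : Set L} {B : Submodule ℚ L} (h : ∀ y ∈ s, ⁅x, y⁆ ∈ B) :
    Maps x (Submodule.span ℚ s) B := by
  intro y hy
  have : Submodule.span ℚ s ≤ B.comap (LieAlgebra.ad ℚ L x : L →ₗ[ℚ] L) :=
    Submodule.span_le.2 h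
  exact this hy

lemma maps_swap {A B : Submodule ℚ L} {s : Set L} (h : ∀ x ∈ s, Maps x A B) :
    ∀ x ∈ Submodule.span ℚ s, Maps x A B := by
  intro x hx y hy
  rw [← lie_skew]
  exact B.neg_mem (maps_span (fun z hz => by
    rw [← lie_skew]; exact B.neg_mem (h z hz y hy)) x hx)

lemma maps_iSup {ι : Sort*} {x : L} {A : ι → Submodule ℚ L} {B : Submodule ℚ L}
    (h : ∀ i, Maps x (A i) B) : Maps x (⨆ i, A i) B := by
  intro y hy
  have : (⨆ i, A i) ≤ B.comap (LieAlgebra.ad ℚ L x : L →ₗ[ℚ] L) := iSup_le fun i y hy => h i y hy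
  exact this hy

lemma maps_sup {x : L} {A A' B : Submodule ℚ L}
    (h : Maps x A B) (h' : Maps x A' B) : Maps x (A ⊔ A') B := by
  intro y hy
  have : (A ⊔ A') ≤ B.comap (LieAlgebra.ad ℚ L x : L →ₗ[ℚ] L) :=
    sup_le (fun y hy => h y hy) (fun y hy => h' y hy)
  exact this hy

lemma maps_mono {x : L} {A B B' : Submodule ℚ L} (h : Maps x A B) (hB : B ≤ B') : Maps x A B' :=
  fun y hy => hB (h y hy)

lemma maps_next {e1 e2 x : L} {n : ℕ} {B : Submodule ℚ L}
    (h : ∀ l, ∀ y ∈ Gp e1 e2 (n + 1), ⁅x, ⁅vg e1 e2 l, y⁆⁆ ∈ B) : Maps x (Gp e1 e2 (n + 2)) B := by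
  change Maps x (⨆ l, (Gp e1 e2 (n + 1)).map (LieAlgebra.ad ℚ L (vg e1 e2 l) : L →ₗ[ℚ] L)) B
  apply maps_iSup
  rintro l _ ⟨y, hy, rfl⟩
  exact h l y hy

lemma vg_mem (e1 e2 : L) (l) : vg e1 e2 l ∈ Gp e1 e2 1 := Submodule.subset_span ⟨l, rfl⟩

lemma v_up (e1 e2 : L) (l) (n : ℕ) : Maps (vg e1 e2 l) (Gp e1 e2 (n + 1)) (Gp e1 e2 (n + 2)) := by
  intro y hy
  change _ ∈ (⨆ l, (Gp e1 e2 (n + 1)).map (LieAlgebra.ad ℚ L (vg e1 e2 l) : L →ₗ[ℚ] L))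
  exact Submodule.mem_iSup_of_mem l ⟨y, hy, rfl⟩

lemma V_up (e1 e2 : L) (n : ℕ) : ∀ x ∈ Gp e1 e2 1, Maps x (Gp e1 e2 (n + 1)) (Gp e1 e2 (n + 2)) := by
  apply maps_swap
  rintro _ ⟨l, rfl⟩
  exact v_up e1 e2 l n

lemma Gp_lie (e1 e2 : L) (i j : ℕ) : ∀ x ∈ Gp e1 e2 i, Maps x (Gp e1 e2 j) (Gp e1 e2 (i + j)) := by
  induction i using Nat.twoStepInduction generalizing j with
  | zero =>
    intro x hx y hy
    have : x = 0 := by simpa [Gp] using hx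
    subst this; simp
  | one =>
    cases j with
    | zero =>
      intro x hx y hy
      have : y = 0 := by simpa [Gp] using hy
      subst this; simp
    | succ j => rw [show 1 + (j + 1) = j + 2 by ring]; exact V_up e1 e2 j
  | more i _ ih =>
    cases j with
    | zero =>
      intro x hx y hy
      have : y = 0 := by simpa [Gp] using hy
      subst this; simp
    | succ j =>
      intro x hx y hy
      rw [← lie_skew]
      refine Submodule.neg_mem _ (maps_next (fun l z hz => ?_) x hx)
      rw [← lie_skew, lie_lie]
      refine Submodule.neg_mem _ (Submodule.sub_mem _ ?_ ?_)
      · have := v_up e1 e2 l (i + 1 + j) _ (ih (j + 1) z hz y hy)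
        convert this using 2; ring
      · have := ih (j + 2) z hz _ (v_up e1 e2 l j y hy)
        convert this using 2; ring

lemma Gp_fg (e1 e2 : L) (n : ℕ) : (Gp e1 e2 n).FG := by
  induction n using Nat.twoStepInduction with
  | zero => exact Submodule.fg_bot
  | one => exact Submodule.fg_span (Set.finite_range _)
  | more n _ ih => exact Submodule.fg_iSup _ fun l => ih.map _

variable {e1 e2 f1 f2 h1 h2 : L}

lemma e2_v (r : KMRel e1 e2 f1 f2 h1 h2) (l) : ⁅e2, vg e1 e2 l⁆ = match l with
    | L0 => vg e1 e2 L1 | L1 => (2 : ℚ) • vg e1 e2 L2 | L2 => (3 : ℚ) • vg e1 e2 L3 | L3 => 0 := by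
  cases l
  · rfl
  · simp [vg, smul_smul]
  · simp [vg, smul_smul, lie_smul]
  · simp [vg, lie_smul, r.sE21]

lemma h2_v (r : KMRel e1 e2 f1 f2 h1 h2) (l) : ∃ c : ℚ, ⁅h2, vg e1 e2 l⁆ = c • vg e1 e2 l := by
  have key : ∀ (x : L) (c : ℚ), ⁅h2, x⁆ = c • x → ⁅h2, ⁅e2, x⁆⁆ = (c + 2) • ⁅e2, x⁆ := by
    intro x c hx; rw [leibniz_lie, hx, r.h2e2, smul_lie, lie_smul]; module
  have k1 := key _ _ r.h2e1
  have k2 := key _ _ k1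
  have k3 := key _ _ k2
  cases l
  · exact ⟨_, r.h2e1⟩
  · exact ⟨_, k1⟩
  · simp only [vg, lie_smul, k2]; exact ⟨_, smul_comm _ _ _⟩
  · simp only [vg, lie_smul, k3]; exact ⟨3, by module⟩

lemma h1_v (r : KMRel e1 e2 f1 f2 h1 h2) (l) : ∃ c : ℚ, ⁅h1, vg e1 e2 l⁆ = c • vg e1 e2 l := by
  have key : ∀ (x : L) (c : ℚ), ⁅h1, x⁆ = c • x → ⁅h1, ⁅e2, x⁆⁆ = (c - 3) • ⁅e2, x⁆ := by
    intro x c hx; rw [leibniz_lie, hx, r.h1e2, smul_lie, lie_smul]; module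
  have k1 := key _ _ r.h1e1
  have k2 := key _ _ k1
  have k3 := key _ _ k2
  cases l
  · exact ⟨_, r.h1e1⟩
  · exact ⟨_, k1⟩
  · simp only [vg, lie_smul, k2]; exact ⟨_, smul_comm _ _ _⟩
  · simp only [vg, lie_smul, k3]; exact ⟨-7, by module⟩

lemma f2_v (r : KMRel e1 e2 f1 f2 h1 h2) (l) : ⁅f2, vg e1 e2 l⁆ ∈ Gp e1 e2 1 := by
  have key : ∀ (x : L), ⁅f2, x⁆ ∈ Gp e1 e2 1 → (⁅h2, x⁆ ∈ Gp e1 e2 1) →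
      ⁅f2, ⁅e2, x⁆⁆ ∈ Gp e1 e2 1 := by
    intro x hx hx'
    rw [leibniz_lie, ← lie_skew f2 e2, r.e2f2, neg_lie]
    refine Submodule.add_mem _ (Submodule.neg_mem _ hx') ?_
    refine maps_span ?_ _ hx
    rintro _ ⟨l, rfl⟩
    rw [e2_v r]
    cases l
    · exact vg_mem _ _ _
    · exact Submodule.smul_mem _ _ (vg_mem _ _ _)
    · exact Submodule.smul_mem _ _ (vg_mem _ _ _)
    · exact Submodule.zero_mem _
  have hh : ∀ l, ⁅h2, vg e1 e2 l⁆ ∈ Gp e1 e2 1 := by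
    intro l
    obtain ⟨c, hc⟩ := h2_v r l
    rw [hc]; exact Submodule.smul_mem _ _ (vg_mem _ _ _)
  have k0 : ⁅f2, vg e1 e2 L0⁆ ∈ Gp e1 e2 1 := by
    change ⁅f2, e1⁆ ∈ _
    rw [← lie_skew, r.e1f2, neg_zero]; exact Submodule.zero_mem _
  have k1 : ⁅f2, vg e1 e2 L1⁆ ∈ Gp e1 e2 1 := key _ k0 (hh L0)
  have k2 : ⁅f2, vg e1 e2 L2⁆ ∈ Gp e1 e2 1 := by
    have := key _ k1 (hh L1)
    change ⁅f2, (1 / 2 : ℚ) • ⁅e2, vg e1 e2 L1⁆⁆ ∈ _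
    rw [lie_smul]; exact Submodule.smul_mem _ _ this
  have k3 : ⁅f2, vg e1 e2 L3⁆ ∈ Gp e1 e2 1 := by
    have := key _ k2 (hh L2)
    change ⁅f2, (1 / 3 : ℚ) • ⁅e2, vg e1 e2 L2⁆⁆ ∈ _
    rw [lie_smul]; exact Submodule.smul_mem _ _ this
  cases l <;> assumption

lemma Z_one (r : KMRel e1 e2 f1 f2 h1 h2) : ∀ x ∈ Zg e2 f2 h1 h2, Maps x (Gp e1 e2 1) (Gp e1 e2 1) := by
  apply maps_swap
  intro x hx
  apply maps_span
  rintro _ ⟨l, rfl⟩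
  rcases hx with rfl | rfl | rfl | rfl
  · rw [e2_v r]
    cases l
    · exact vg_mem _ _ _
    · exact Submodule.smul_mem _ _ (vg_mem _ _ _)
    · exact Submodule.smul_mem _ _ (vg_mem _ _ _)
    · exact Submodule.zero_mem _
  · exact f2_v r l
  · obtain ⟨c, hc⟩ := h1_v r l
    rw [hc]; exact Submodule.smul_mem _ _ (vg_mem _ _ _)
  · obtain ⟨c, hc⟩ := h2_v r l
    rw [hc]; exact Submodule.smul_mem _ _ (vg_mem _ _ _)

lemma Z_maps (r : KMRel e1 e2 f1 f2 h1 h2) (n : ℕ) :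
    ∀ x ∈ Zg e2 f2 h1 h2, Maps x (Gp e1 e2 n) (Gp e1 e2 n) := by
  induction n using Nat.twoStepInduction with
  | zero =>
    intro x _ y hy
    have : y = 0 := by simpa [Gp] using hy
    subst this; simp
  | one => exact Z_one r
  | more n _ ih =>
    intro x hx
    apply maps_next
    intro l y hy
    rw [leibniz_lie]
    exact Submodule.add_mem _ (V_up e1 e2 n _ (Z_one r x hx _ (vg_mem _ _ _)) y hy)
      (v_up e1 e2 l n _ (ih x hx y hy))

lemma f1_v (r : KMRel e1 e2 f1 f2 h1 h2) (l) : ⁅f1, vg e1 e2 l⁆ ∈ Zg e2 f2 h1 h2 := by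
  have hf1e2 : ⁅f1, e2⁆ = 0 := by rw [← lie_skew, r.e2f1, neg_zero]
  have key : ∀ x : L, ⁅f1, ⁅e2, x⁆⁆ = ⁅e2, ⁅f1, x⁆⁆ := by
    intro x; rw [leibniz_lie, hf1e2]; simp
  have a0 : ⁅f1, e1⁆ = -h1 := by rw [← lie_skew, r.e1f1]
  have a1 : ⁅e2, -h1⁆ = (-3 : ℚ) • e2 := by rw [lie_neg, lie_skew, r.h1e2]
  cases l
  · simp only [vg, a0]
    exact Submodule.neg_mem _ (Submodule.subset_span (by simp))
  · simp only [vg, key, a0, a1]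
    exact Submodule.smul_mem _ _ (Submodule.subset_span (by simp))
  · simp only [vg, key, a0, a1, lie_smul, lie_self, smul_zero]
    exact Submodule.zero_mem _
  · simp only [vg, key, a0, a1, lie_smul, lie_self, smul_zero, lie_zero]
    exact Submodule.zero_mem _

lemma f1_one (r : KMRel e1 e2 f1 f2 h1 h2) : Maps f1 (Gp e1 e2 1) (Zg e2 f2 h1 h2) := by
  apply maps_span
  rintro _ ⟨l, rfl⟩
  exact f1_v r l

lemma f1_down (r : KMRel e1 e2 f1 f2 h1 h2) (n : ℕ) :
    Maps f1 (Gp e1 e2 (n + 2)) (Gp e1 e2 (n + 1)) := by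
  induction n with
  | zero =>
    apply maps_next
    intro l y hy
    rw [leibniz_lie]
    refine Submodule.add_mem _ (Z_maps r 1 _ (f1_v r l) y hy) ?_
    rw [← lie_skew]
    exact Submodule.neg_mem _ (Z_one r _ (f1_one r y hy) _ (vg_mem _ _ _))
  | succ n ih =>
    apply maps_next
    intro l y hy
    rw [leibniz_lie]
    exact Submodule.add_mem _ (Z_maps r _ _ (f1_v r l) y hy) (v_up e1 e2 l n _ (ih y hy))

lemma e1_Z (r : KMRel e1 e2 f1 f2 h1 h2) : Maps e1 (Zg e2 f2 h1 h2) (Gp e1 e2 1) := by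
  intro y hy
  rw [← lie_skew]
  exact Submodule.neg_mem _ (Z_one r y hy e1 (vg_mem e1 e2 L0))

lemma Zg_swap : Zg f2 e2 (-h1) (-h2) = Zg e2 f2 h1 h2 := by
  unfold Zg
  apply le_antisymm <;> rw [Submodule.span_le] <;> rintro x (rfl | rfl | rfl | rfl)
  · exact Submodule.subset_span (by simp)
  · exact Submodule.subset_span (by simp)
  · exact Submodule.neg_mem _ (Submodule.subset_span (by simp))
  · exact Submodule.neg_mem _ (Submodule.subset_span (by simp))
  · exact Submodule.subset_span (by simp)
  · exact Submodule.subset_span (by simp)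
  · rw [← neg_neg x]; exact Submodule.neg_mem _ (Submodule.subset_span (by simp))
  · rw [← neg_neg x]; exact Submodule.neg_mem _ (Submodule.subset_span (by simp))

lemma Z_Z (r : KMRel e1 e2 f1 f2 h1 h2) :
    ∀ x ∈ Zg e2 f2 h1 h2, Maps x (Zg e2 f2 h1 h2) (Zg e2 f2 h1 h2) := by
  have me2 : e2 ∈ Zg e2 f2 h1 h2 := Submodule.subset_span (by simp)
  have mf2 : f2 ∈ Zg e2 f2 h1 h2 := Submodule.subset_span (by simp)
  have mh2 : h2 ∈ Zg e2 f2 h1 h2 := Submodule.subset_span (by simp)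
  apply maps_swap
  intro x hx
  apply maps_span
  intro y hy
  have H : ∀ x y : L, ⁅x, y⁆ ∈ Zg e2 f2 h1 h2 → ⁅y, x⁆ ∈ Zg e2 f2 h1 h2 := by
    intro x y h; rw [← lie_skew]; exact Submodule.neg_mem _ h
  have a1 : ⁅e2, f2⁆ ∈ Zg e2 f2 h1 h2 := by rw [r.e2f2]; exact mh2
  have a2 : ⁅h1, e2⁆ ∈ Zg e2 f2 h1 h2 := by rw [r.h1e2]; exact Submodule.smul_mem _ _ me2
  have a3 : ⁅h2, e2⁆ ∈ Zg e2 f2 h1 h2 := by rw [r.h2e2]; exact Submodule.smul_mem _ _ me2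
  have a4 : ⁅h1, f2⁆ ∈ Zg e2 f2 h1 h2 := by rw [r.h1f2]; exact Submodule.smul_mem _ _ mf2
  have a5 : ⁅h2, f2⁆ ∈ Zg e2 f2 h1 h2 := by rw [r.h2f2]; exact Submodule.smul_mem _ _ mf2
  have a6 : ⁅h1, h2⁆ ∈ Zg e2 f2 h1 h2 := by rw [r.hh]; exact Submodule.zero_mem _
  have a7 : ∀ z : L, ⁅z, z⁆ ∈ Zg e2 f2 h1 h2 := by intro z; rw [lie_self]; exact Submodule.zero_mem _
  rcases hx with hx | hx | hx | hx <;> rcases hy with hy | hy | hy | hy <;> rw [hx, hy] <;>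
    first | exact a7 _ | assumption | (apply H; assumption)

/-- The sum of all levels. -/
def Sg (e1 e2 f1 f2 h1 h2 : L) : Submodule ℚ L :=
  (⨆ n, Gp e1 e2 n) ⊔ (Zg e2 f2 h1 h2 ⊔ ⨆ n, Gp f1 f2 n)

lemma Sg_swap : Sg f1 f2 e1 e2 (-h1) (-h2) = Sg e1 e2 f1 f2 h1 h2 := by
  unfold Sg; rw [Zg_swap, sup_left_comm, sup_comm (⨆ n, Gp f1 f2 n), sup_left_comm, sup_left_comm]

lemma Sg_p (n) : Gp e1 e2 n ≤ Sg e1 e2 f1 f2 h1 h2 := le_trans (le_iSup _ n) le_sup_left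
lemma Sg_n (n) : Gp f1 f2 n ≤ Sg e1 e2 f1 f2 h1 h2 :=
  le_trans (le_iSup _ n) (le_trans le_sup_right le_sup_right)
lemma Sg_z : Zg e2 f2 h1 h2 ≤ Sg e1 e2 f1 f2 h1 h2 := le_trans le_sup_left le_sup_right

lemma Sg_maps_Z (r : KMRel e1 e2 f1 f2 h1 h2) (x : L) (hx : x ∈ Zg e2 f2 h1 h2) :
    Maps x (Sg e1 e2 f1 f2 h1 h2) (Sg e1 e2 f1 f2 h1 h2) := by
  refine maps_sup (maps_iSup fun n => ?_) (maps_sup ?_ (maps_iSup fun n => ?_))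
  · exact maps_mono (Z_maps r n x hx) (Sg_p n)
  · exact maps_mono (Z_Z r x hx) Sg_z
  · rw [← Zg_swap] at hx
    exact maps_mono (Z_maps r.swap n x hx) (Sg_n n)

lemma Sg_maps_e1 (r : KMRel e1 e2 f1 f2 h1 h2) :
    Maps e1 (Sg e1 e2 f1 f2 h1 h2) (Sg e1 e2 f1 f2 h1 h2) := by
  refine maps_sup (maps_iSup fun n => ?_) (maps_sup ?_ (maps_iSup fun n => ?_))
  · exact maps_mono (Gp_lie e1 e2 1 n e1 (vg_mem e1 e2 L0)) (Sg_p _)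
  · exact maps_mono (e1_Z r) (Sg_p _)
  · match n with
    | 0 =>
      intro y hy
      have : y = 0 := by simpa [Gp] using hy
      subst this; simp
    | 1 =>
      have := f1_one r.swap
      rw [Zg_swap] at this
      exact maps_mono this Sg_z
    | n + 2 => exact maps_mono (f1_down r.swap n) (Sg_n _)

lemma Sg_maps_f1 (r : KMRel e1 e2 f1 f2 h1 h2) :
    Maps f1 (Sg e1 e2 f1 f2 h1 h2) (Sg e1 e2 f1 f2 h1 h2) := by
  have := Sg_maps_e1 r.swap
  rwa [Sg_swap] at this

end

lemma subalg_top (K : LieSubalgebra ℚ 𝔤) (h : ∀ x, KMgen A2hyp x ∈ K) (y : 𝔤) : y ∈ K := by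
  obtain ⟨x, rfl⟩ := pr_surj y
  let f : FreeLieAlgebra ℚ (Generators (Fin 2)) →ₗ⁅ℚ⁆ K := FreeLieAlgebra.lift ℚ fun x => ⟨_, h x⟩
  have : K.incl.comp f = pr := by
    apply FreeLieAlgebra.hom_ext
    intro x
    simp [f, pr_of]
  rw [← this]
  exact (f x).2

lemma gen_cases {P : 𝔤 → Prop} (a1 : P e1) (a2 : P e2) (a3 : P f1) (a4 : P f2) (a5 : P h1) (a6 : P h2)
    (x) : P (KMgen A2hyp x) := by
  cases x with
  | H i => fin_cases i; exacts [a5, a6]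
  | E i => fin_cases i; exacts [a1, a2]
  | F i => fin_cases i; exacts [a3, a4]

abbrev S : Submodule ℚ 𝔤 := Sg e1 e2 f1 f2 h1 h2

lemma mem_Z2 : e2 ∈ Zg e2 f2 h1 h2 ∧ f2 ∈ Zg e2 f2 h1 h2 ∧ h1 ∈ Zg e2 f2 h1 h2 ∧ h2 ∈ Zg e2 f2 h1 h2 := by
  refine ⟨?_, ?_, ?_, ?_⟩ <;> exact Submodule.subset_span (by simp)

lemma S_maps (x : 𝔤) : Maps x S S := by
  let K : LieSubalgebra ℚ 𝔤 :=
    { carrier := {x | Maps x S S}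
      add_mem' := fun {a b} ha hb y hy => by rw [add_lie]; exact S.add_mem (ha y hy) (hb y hy)
      zero_mem' := fun y _ => by rw [zero_lie]; exact S.zero_mem
      smul_mem' := fun c a ha y hy => by rw [smul_lie]; exact S.smul_mem _ (ha y hy)
      lie_mem' := fun {a b} ha hb y hy => by
        rw [lie_lie]; exact S.sub_mem (ha _ (hb y hy)) (hb _ (ha y hy)) }
  refine subalg_top K (gen_cases (P := fun x => x ∈ K) ?_ ?_ ?_ ?_ ?_ ?_) x
  · exact Sg_maps_e1 g_rel
  · exact Sg_maps_Z g_rel _ mem_Z2.1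
  · exact Sg_maps_f1 g_rel
  · exact Sg_maps_Z g_rel _ mem_Z2.2.1
  · exact Sg_maps_Z g_rel _ mem_Z2.2.2.1
  · exact Sg_maps_Z g_rel _ mem_Z2.2.2.2

lemma S_top (x : 𝔤) : x ∈ S := by
  let K : LieSubalgebra ℚ 𝔤 := { S with lie_mem' := fun {a b} _ hb => S_maps a b hb }
  refine subalg_top K (gen_cases (P := fun x => x ∈ S) ?_ ?_ ?_ ?_ ?_ ?_) x
  · exact Sg_p 1 (vg_mem e1 e2 L0)
  · exact Sg_z mem_Z2.1
  · exact Sg_n 1 (vg_mem f1 f2 L0)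
  · exact Sg_z mem_Z2.2.1
  · exact Sg_z mem_Z2.2.2.1
  · exact Sg_z mem_Z2.2.2.2

/-- The level spaces of the Kac-Moody algebra. -/
abbrev G : ℕ → Submodule ℚ 𝔤 := Gp e1 e2

section eig
variable (D : LieDerivation ℚ 𝔤 𝔤)

lemma eig_lie {x y : 𝔤} {a b : ℚ} (hx : D x = a • x) (hy : D y = b • y) :
    D ⁅x, y⁆ = (a + b) • ⁅x, y⁆ := by
  rw [LieDerivation.apply_lie_eq_add, hx, hy, lie_smul, smul_lie]; module

lemma eig_v {a1 a2 : 𝔤} {c : ℚ} (h1 : D a1 = c • a1) (h2 : D a2 = 0) (l) :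
    D (vg a1 a2 l) = c • vg a1 a2 l := by
  have key : ∀ x, D x = c • x → D ⁅a2, x⁆ = c • ⁅a2, x⁆ := by
    intro x hx
    rw [eig_lie D (a := 0) (b := c) (by rw [h2, zero_smul]) hx, zero_add]
  cases l
  · exact h1
  · exact key _ h1
  · simp only [vg, map_smul, key _ (key _ h1)]; rw [smul_comm]
  · simp only [vg, map_smul, lie_smul, key _ (key _ (key _ h1))]; module

lemma eig_Gp {a1 a2 : 𝔤} {c : ℚ} (h1 : D a1 = c • a1) (h2 : D a2 = 0) (n : ℕ) :
    Gp a1 a2 n ≤ Module.End.eigenspace D.toLinearMap (n * c) := by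
  induction n using Nat.twoStepInduction with
  | zero => exact bot_le
  | one =>
    refine Submodule.span_le.2 ?_
    rintro _ ⟨l, rfl⟩
    rw [SetLike.mem_coe, Module.End.mem_eigenspace_iff]
    simpa using eig_v D h1 h2 l
  | more n _ ih =>
    refine iSup_le fun l => ?_
    rintro _ ⟨y, hy, rfl⟩
    have := Module.End.mem_eigenspace_iff.1 (ih hy)
    rw [Module.End.mem_eigenspace_iff]
    change D ⁅vg a1 a2 l, y⁆ = _ • ⁅vg a1 a2 l, y⁆
    rw [eig_lie D (eig_v D h1 h2 l) this]
    congr 1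
    push_cast; ring

lemma eig_eq (he1 : D e1 = e1) (he2 : D e2 = 0) (hf1 : D f1 = -f1) (hf2 : D f2 = 0)
    (hh1 : D h1 = 0) (hh2 : D h2 = 0) (n : ℕ) (hn : 1 ≤ n) :
    Module.End.eigenspace D.toLinearMap (n : ℚ) = G n := by
  have hp : ∀ n, G n ≤ Module.End.eigenspace D.toLinearMap (n : ℚ) := by
    intro n
    have := eig_Gp D (a1 := e1) (a2 := e2) (c := 1) (by simpa using he1) he2 n
    simpa using this
  have hneg : ∀ n, Gp f1 f2 n ≤ Module.End.eigenspace D.toLinearMap (-n : ℚ) := by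
    intro n
    have := eig_Gp D (a1 := f1) (a2 := f2) (c := -1) (by simpa using hf1) hf2 n
    simpa using this
  have hz : Zg e2 f2 h1 h2 ≤ Module.End.eigenspace D.toLinearMap 0 := by
    refine Submodule.span_le.2 ?_
    rintro x (rfl | rfl | rfl | rfl) <;>
      rw [SetLike.mem_coe, Module.End.mem_eigenspace_iff, zero_smul] <;> assumption
  apply le_antisymm _ (hp n)
  set R : Submodule ℚ 𝔤 := ⨆ (μ : ℚ) (_ : μ ≠ n), Module.End.eigenspace D.toLinearMap μ with hR
  have hle : ∀ μ : ℚ, μ ≠ n → Module.End.eigenspace D.toLinearMap μ ≤ R := by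
    intro μ h
    exact le_iSup₂_of_le μ h le_rfl
  have hn' : (0 : ℚ) < n := by exact_mod_cast hn
  have htop : S ≤ G n ⊔ R := by
    refine sup_le (iSup_le fun m => ?_) (sup_le ?_ (iSup_le fun m => ?_))
    · by_cases h : m = n
      · subst h; exact le_sup_left
      · exact le_sup_of_le_right ((hp m).trans (hle _ (by exact_mod_cast h)))
    · exact le_sup_of_le_right (hz.trans (hle _ hn'.ne))
    · refine le_sup_of_le_right ((hneg m).trans (hle _ ?_))
      have : (0 : ℚ) ≤ m := Nat.cast_nonneg m
      linarith
  intro x hx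
  obtain ⟨a, ha, b, hb, rfl⟩ := Submodule.mem_sup.1 (htop (S_top x))
  have hb' : b ∈ Module.End.eigenspace D.toLinearMap (n : ℚ) := by
    have := Submodule.sub_mem _ hx (hp n ha)
    simpa using this
  have ind := Module.End.eigenspaces_iSupIndep D.toLinearMap (n : ℚ)
  have : b = 0 := by
    have := (Submodule.disjoint_def.1 ind) b hb' hb
    exact this
  rw [this, add_zero]; exact ha

end eig

end KMLevel

namespace KMLevel

attribute [local instance 100] LieRing.ofAssociativeRing

open UniversalEnvelopingAlgebra (lift hom_ext lift_ι_apply)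

section step
variable {K K' : Type} [LieRing K] [LieAlgebra ℚ K] [LieRing K'] [LieAlgebra ℚ K']

abbrev U (K : Type) [LieRing K] [LieAlgebra ℚ K] := UniversalEnvelopingAlgebra ℚ K
/-- The canonical map to the enveloping algebra. -/
def iU : K →ₗ⁅ℚ⁆ U K := UniversalEnvelopingAlgebra.ι ℚ

lemma lift_iU {A : Type*} [Ring A] [Algebra ℚ A] (φ : K →ₗ⁅ℚ⁆ A) (k : K) :
    lift ℚ φ (iU k) = φ k := lift_ι_apply ℚ φ k

lemma hom_ext_iU {A : Type*} [Ring A] [Algebra ℚ A] {f g : U K →ₐ[ℚ] A}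
    (h : ∀ k, f (iU k) = g (iU k)) : f = g := by
  apply hom_ext
  ext k
  exact h k

lemma iU_lie (a b : K) : iU ⁅a, b⁆ = iU a * iU b - iU b * iU a := by
  rw [← LieRing.of_associative_ring_bracket]; exact LieHom.map_lie _ _ _

/-- Products of homogeneous elements of total degree `n`. -/
inductive Mon (P : ℕ → Submodule ℚ K) : ℕ → U K → Prop
  | one : Mon P 0 1
  | cons {m n : ℕ} {y : K} {u : U K} (hy : y ∈ P m) (hu : Mon P n u) : Mon P (m + n) (iU y * u)

lemma Mon.mul {P : ℕ → Submodule ℚ K} {n m : ℕ} {u w : U K} (hu : Mon P n u) (hw : Mon P m w) :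
    Mon P (n + m) (u * w) := by
  induction hu with
  | one => simpa using hw
  | cons hy _ ih => rw [mul_assoc, add_assoc]; exact Mon.cons hy ih

/-- The degree `n` part of the enveloping algebra. -/
def EE (P : ℕ → Submodule ℚ K) (n : ℕ) : Submodule ℚ (U K) := Submodule.span ℚ {u | Mon P n u}

lemma EE_mul {P : ℕ → Submodule ℚ K} {n m : ℕ} {u w : U K} (hu : u ∈ EE P n) (hw : w ∈ EE P m) :
    u * w ∈ EE P (n + m) := by
  have : EE P n ≤ (EE P (n + m)).comap (LinearMap.mulRight ℚ w) := by
    refine Submodule.span_le.2 fun u hu => ?_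
    have : EE P m ≤ (EE P (n + m)).comap (LinearMap.mulLeft ℚ u) := by
      refine Submodule.span_le.2 fun w hw => ?_
      exact Submodule.subset_span (Mon.mul hu hw)
    exact this hw
  exact this hu

lemma EE_ι {P : ℕ → Submodule ℚ K} {m : ℕ} {y : K} (hy : y ∈ P m) : iU y ∈ EE P m := by
  have : Mon P (m + 0) (iU y * 1) := Mon.cons hy Mon.one
  rw [add_zero, mul_one] at this
  exact Submodule.subset_span this

lemma EE_one {P : ℕ → Submodule ℚ K} : (1 : U K) ∈ EE P 0 := Submodule.subset_span Mon.one

/-- Extension of a derivation to the enveloping algebra. -/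
lemma exists_der (δ : K →ₗ[ℚ] K) (hδ : ∀ a b, δ ⁅a, b⁆ = ⁅δ a, b⁆ + ⁅a, δ b⁆) :
    ∃ d : U K →ₗ[ℚ] U K, (∀ k, d (iU k) = iU (δ k)) ∧ ∀ u w, d (u * w) = d u * w + u * d w := by
  let φ : K →ₗ⁅ℚ⁆ DualNumber (U K) :=
    { toFun := fun k => TrivSqZeroExt.inl (iU k) + TrivSqZeroExt.inr (iU (δ k))
      map_add' := fun a b => by ext <;> simp
      map_smul' := fun c a => by ext <;> simp
      map_lie' := fun {a b} => by
        rw [LieRing.of_associative_ring_bracket]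
        ext
        · simp [LieRing.of_associative_ring_bracket]
        · simp only [TrivSqZeroExt.snd_add, TrivSqZeroExt.snd_inl, TrivSqZeroExt.snd_inr, hδ,
            TrivSqZeroExt.snd_sub, TrivSqZeroExt.snd_mul, TrivSqZeroExt.fst_add,
            TrivSqZeroExt.fst_inl, TrivSqZeroExt.fst_inr, zero_add, add_zero, smul_eq_mul,
            MulOpposite.smul_eq_mul_unop, MulOpposite.unop_op]
          simp only [map_add, iU_lie]
          abel }
  let Φ := lift ℚ φ
  have hfst : ∀ u, (Φ u).fst = u := by
    intro u
    have : (TrivSqZeroExt.fstHom ℚ (U K) (U K)).comp Φ = AlgHom.id ℚ _ := by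
      apply hom_ext_iU
      intro k
      simp [Φ, φ, lift_iU]
    exact DFunLike.congr_fun this u
  refine ⟨(TrivSqZeroExt.sndHom (U K) (U K)).restrictScalars ℚ ∘ₗ Φ.toLinearMap, ?_, ?_⟩
  · intro k
    simp [Φ, φ, lift_iU]
  · intro u w
    simp [TrivSqZeroExt.snd_mul, hfst]
    abel

lemma der_EE {δ : K →ₗ[ℚ] K} {d : U K →ₗ[ℚ] U K} (h1 : ∀ k, d (iU k) = iU (δ k))
    (h2 : ∀ u w, d (u * w) = d u * w + u * d w) {P : ℕ → Submodule ℚ K} {l : ℕ}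
    (hP : ∀ m, ∀ k ∈ P m, δ k ∈ P (m + l)) (n : ℕ) : EE P n ≤ (EE P (n + l)).comap d := by
  refine Submodule.span_le.2 fun u hu => ?_
  change d u ∈ EE P (n + l)
  induction hu with
  | one =>
    have := h2 1 1
    simp only [mul_one, one_mul] at this
    have : d 1 = 0 := by simpa using this
    rw [this]; exact Submodule.zero_mem _
  | @cons m n y u hy hu ih =>
    rw [h2, h1]
    refine Submodule.add_mem _ ?_ ?_
    · have := EE_mul (EE_ι (hP m y hy)) (Submodule.subset_span hu)
      convert this using 1; ring_nf
    · have := EE_mul (EE_ι hy) ih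
      convert this using 1; ring_nf

/-- Finite-dimensional of given dimension. -/
def HasDim {V : Type*} [AddCommGroup V] [Module ℚ V] (A : Submodule ℚ V) (d : ℕ) : Prop :=
  Module.Finite ℚ A ∧ Module.finrank ℚ A = d

/-- The PBW step. -/
theorem pbw_step (j : K →ₗ⁅ℚ⁆ K') (x : K') (δ : K →ₗ[ℚ] K) (hδ : ∀ k, ⁅x, j k⁆ = j (δ k))
    (bij : Function.Bijective (fun p : K × ℚ => j p.1 + p.2 • x))
    (P : ℕ → Submodule ℚ K) (P' : ℕ → Submodule ℚ K') (l : ℕ) (hl : 1 ≤ l)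
    (hPδ : ∀ m, ∀ k ∈ P m, δ k ∈ P (m + l)) (hPj : ∀ m, ∀ k ∈ P m, j k ∈ P' m) (hx : x ∈ P' l)
    (hP' : ∀ m, ∀ y ∈ P' m, ∃ k ∈ P m, ∃ c : ℚ, y = j k + c • x ∧ (c ≠ 0 → m = l))
    (H : ℕ → ℕ) (N : ℕ) (hH : ∀ n ≤ N, HasDim (EE P n) (H n)) :
    ∀ n ≤ N, HasDim (EE P' n) (∑ a : Fin (n / l + 1), H (n - a * l)) := by
  have jinj : Function.Injective j := by
    intro a b hab
    have := bij.1 (a₁ := (a, 0)) (a₂ := (b, 0)) (by simpa using hab)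
    exact congrArg Prod.fst this
  have hder : ∀ a b, δ ⁅a, b⁆ = ⁅δ a, b⁆ + ⁅a, δ b⁆ := by
    intro a b
    apply jinj
    rw [← hδ, map_add, LieHom.map_lie, LieHom.map_lie, LieHom.map_lie, leibniz_lie, hδ, hδ]
  obtain ⟨d, d1, d2⟩ := exists_der δ hder
  let i : U K →ₐ[ℚ] U K' := lift ℚ (iU.comp j)
  have hi : ∀ k, i (iU k) = iU (j k) := fun k => by simp [i, lift_iU]
  have done : d 1 = 0 := by
    have := d2 1 1
    simp only [mul_one, one_mul] at this
    simpa using this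
  -- the module
  let θ : (K × ℚ) ≃ₗ[ℚ] K' := LinearEquiv.ofBijective
    ((j : K →ₗ[ℚ] K').comp (LinearMap.fst ℚ K ℚ) +
      (LinearMap.toSpanSingleton ℚ K' x).comp (LinearMap.snd ℚ K ℚ)) bij
  have hθ : ∀ (k : K) (c : ℚ), θ (k, c) = j k + c • x := fun k c => rfl
  let Lk : K →ₗ[ℚ] Module.End ℚ (ℕ → U K) :=
    { toFun := fun k => { toFun := fun s a => iU k * s a
                          map_add' := fun s t => by funext a; simp [mul_add]
                          map_smul' := fun c s => by funext a; simp }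
      map_add' := fun k m => by ext s a; simp [add_mul]
      map_smul' := fun c m => by ext s a; simp }
  let Xo : Module.End ℚ (ℕ → U K) :=
    { toFun := fun s a => (match a with | 0 => 0 | b + 1 => s b) + d (s a)
      map_add' := fun s t => by
        funext a; cases a <;> simp <;> abel
      map_smul' := fun c s => by funext a; cases a <;> simp }
  have hXL : ∀ k, ⁅Xo, Lk k⁆ = Lk (δ k) := by
    intro k
    ext1 s; funext a
    rw [LieRing.of_associative_ring_bracket]
    change (Xo (Lk k s) - Lk k (Xo s)) a = _
    cases a <;> simp [Xo, Lk, d2, d1, mul_add] 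
  have hLL : ∀ k m, ⁅Lk k, Lk m⁆ = Lk ⁅k, m⁆ := by
    intro k m
    ext1 s; funext a
    rw [LieRing.of_associative_ring_bracket]
    change (Lk k (Lk m s) - Lk m (Lk k s)) a = _
    change iU k * (iU m * s a) - iU m * (iU k * s a) = iU ⁅k, m⁆ * s a
    rw [iU_lie, sub_mul, mul_assoc, mul_assoc]
  let ψ₀ : K' →ₗ[ℚ] Module.End ℚ (ℕ → U K) :=
    (Lk.comp (LinearMap.fst ℚ K ℚ) + (LinearMap.toSpanSingleton ℚ _ Xo).comp (LinearMap.snd ℚ K ℚ)).comp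
      θ.symm.toLinearMap
  have hψ₀ : ∀ (k : K) (c : ℚ), ψ₀ (j k + c • x) = Lk k + c • Xo := by
    intro k c
    rw [← hθ]
    change (Lk.comp (LinearMap.fst ℚ K ℚ) +
      (LinearMap.toSpanSingleton ℚ _ Xo).comp (LinearMap.snd ℚ K ℚ)) (θ.symm (θ (k, c))) = _
    rw [LinearEquiv.symm_apply_apply]; rfl
  let ψ : K' →ₗ⁅ℚ⁆ Module.End ℚ (ℕ → U K) := { ψ₀ with
    map_lie' := by
      intro a b
      change ψ₀ ⁅a, b⁆ = ⁅ψ₀ a, ψ₀ b⁆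
      obtain ⟨⟨k, c⟩, rfl⟩ := bij.2 a
      obtain ⟨⟨m, e⟩, rfl⟩ := bij.2 b
      have : ⁅j k + c • x, j m + e • x⁆ = j (⁅k, m⁆ + c • δ m - e • δ k) + (0 : ℚ) • x := by
        simp only [add_lie, lie_add, smul_lie, lie_smul, hδ, map_add, map_sub, map_smul,
          LieHom.map_lie, lie_self, smul_zero]
        rw [← lie_skew (j k) x, hδ]; module
      simp only
      rw [this, hψ₀, hψ₀, hψ₀]
      simp only [map_add, map_sub, map_smul, ← hXL, ← hLL, LieRing.of_associative_ring_bracket,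
        add_mul, mul_add, smul_mul_assoc, mul_smul_comm]
      module }
  have hψj : ∀ k, ψ (j k) = Lk k := by
    intro k
    have := hψ₀ k 0
    rw [zero_smul, zero_smul, add_zero, add_zero] at this
    exact this
  have hψx : ψ x = Xo := by
    have := hψ₀ 0 1
    rw [one_smul, one_smul, map_zero, map_zero, zero_add, zero_add] at this
    exact this
  let Ψ : U K' →ₐ[ℚ] Module.End ℚ (ℕ → U K) := lift ℚ ψ
  have hΨi : ∀ u s a, Ψ (i u) s a = u * s a := by
    let lam : U K →ₐ[ℚ] Module.End ℚ (ℕ → U K) :=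
      { toFun := fun u => { toFun := fun s a => u * s a
                            map_add' := fun s t => by funext a; simp [mul_add]
                            map_smul' := fun c s => by funext a; simp }
        map_one' := by ext s a; simp
        map_mul' := fun k m => by ext s a; simp [mul_assoc]
        map_zero' := by ext s a; simp
        map_add' := fun k m => by ext s a; simp [add_mul]
        commutes' := fun c => by ext s a; simp [Algebra.algebraMap_eq_smul_one] }
    have : Ψ.comp i = lam := by
      apply hom_ext_iU
      intro k
      change Ψ (i (iU k)) = lam (iU k)
      rw [hi]
      change Ψ (iU (j k)) = _
      simp only [Ψ, lift_iU, hψj]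
      rfl
    intro u s a
    have := DFunLike.congr_fun this u
    change Ψ (i u) = lam u at this
    rw [this]; rfl
  have hΨx : ∀ s, Ψ (iU x) s = Xo s := by
    intro s; simp only [Ψ, lift_iU, hψx]
  let s0 : ℕ → U K := Pi.single 0 1
  have hxa : ∀ a, Ψ (iU x ^ a) s0 = Pi.single a 1 := by
    intro a
    induction a with
    | zero => simp [s0]
    | succ a ih =>
      rw [pow_succ', map_mul, Module.End.mul_apply, ih, hΨx]
      funext b
      cases b with
      | zero =>
        by_cases h : a = 0
        · subst h; simp [Xo, done]
        · simp [Xo, Pi.single_apply, Ne.symm h]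
      | succ b =>
        by_cases h : b = a
        · subst h; simp [Xo]
        · by_cases h' : b + 1 = a
          · subst h'; simp [Xo, Pi.single_apply, done]
          · simp [Xo, Pi.single_apply, h, h']
  have hΨ : ∀ u a b, Ψ (i u * iU x ^ a) s0 b = if b = a then u else 0 := by
    intro u a b
    rw [map_mul, Module.End.mul_apply, hxa, hΨi, Pi.single_apply]; simp
  -- spanning
  have iMon : ∀ n u, Mon P n u → Mon P' n (i u) := by
    intro n u hu
    induction hu with
    | one => rw [map_one]; exact Mon.one
    | cons hy _ ih => rw [map_mul, hi]; exact Mon.cons (hPj _ _ hy) ih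
  have iEE : ∀ n u, u ∈ EE P n → i u ∈ EE P' n := by
    intro n u hu
    have : EE P n ≤ (EE P' n).comap i.toLinearMap :=
      Submodule.span_le.2 fun u hu => Submodule.subset_span (iMon n u hu)
    exact this hu
  have xpow : ∀ a : ℕ, iU x ^ a ∈ EE P' (a * l) := by
    intro a
    induction a with
    | zero => simpa using EE_one
    | succ a ih => rw [pow_succ, add_mul, one_mul]; exact EE_mul ih (EE_ι hx)
  have comm : ∀ n u, Mon P n u → iU x * i u = i (d u) + i u * iU x := by
    intro n u hu
    induction hu with
    | one => simp [done]
    | @cons m n y u hy hu ih =>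
      have h1 : iU x * iU (j y) = iU (j (δ y)) + iU (j y) * iU x := by
        rw [← hδ, iU_lie]; abel
      rw [map_mul, hi, ← mul_assoc, h1, add_mul, mul_assoc (iU (j y)), ih, d2, map_add, map_mul,
        map_mul, d1, hi, hi, mul_add, mul_assoc]; abel
  let R : ℕ → Submodule ℚ (U K') := fun n =>
    Submodule.span ℚ {z | ∃ m a u, m + a * l = n ∧ Mon P m u ∧ z = i u * iU x ^ a}
  have R_mem : ∀ m a u, u ∈ EE P m → i u * iU x ^ a ∈ R (m + a * l) := by
    intro m a u hu
    have : EE P m ≤ (R (m + a * l)).comap ((LinearMap.mulRight ℚ (iU x ^ a)).comp i.toLinearMap) :=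
      Submodule.span_le.2 fun u hu => Submodule.subset_span ⟨m, a, u, rfl, hu, rfl⟩
    exact this hu
  have Rj : ∀ m k, k ∈ P m → ∀ n, R n ≤ (R (m + n)).comap (LinearMap.mulLeft ℚ (iU (j k))) := by
    intro m k hk n
    refine Submodule.span_le.2 ?_
    rintro _ ⟨m', a, u, rfl, hu, rfl⟩
    refine Submodule.subset_span ⟨m + m', a, iU k * u, by ring, Mon.cons hk hu, ?_⟩
    simp [hi, mul_assoc]
  have Rx : ∀ n, R n ≤ (R (l + n)).comap (LinearMap.mulLeft ℚ (iU x)) := by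
    intro n
    refine Submodule.span_le.2 ?_
    rintro _ ⟨m', a, u, rfl, hu, rfl⟩
    change iU x * (i u * iU x ^ a) ∈ R (l + (m' + a * l))
    rw [← mul_assoc, comm _ u hu, add_mul]
    refine Submodule.add_mem _ ?_ ?_
    · have := R_mem (m' + l) a (d u) (der_EE d1 d2 hPδ m' (Submodule.subset_span hu))
      convert this using 2; ring
    · rw [mul_assoc, ← pow_succ']
      have := R_mem m' (a + 1) u (Submodule.subset_span hu)
      convert this using 2; ring
  have hR : ∀ n, EE P' n = R n := by
    intro n
    apply le_antisymm
    · refine Submodule.span_le.2 fun u hu => ?_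
      change u ∈ R n
      induction hu with
      | one => exact Submodule.subset_span ⟨0, 0, 1, by simp, Mon.one, by simp⟩
      | @cons m n y u hy hu ih =>
        obtain ⟨k, hk, c, rfl, hc⟩ := hP' m y hy
        have e : iU (j k + c • x) = iU (j k) + c • iU x := by
          simp only [map_add, map_smul]
        rw [e, add_mul, smul_mul_assoc]
        refine Submodule.add_mem _ (Rj m k hk n ih) ?_
        by_cases h : c = 0
        · rw [h, zero_smul]; exact Submodule.zero_mem _
        · rw [hc h]; exact Submodule.smul_mem _ _ (Rx n ih)
    · refine Submodule.span_le.2 ?_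
      rintro _ ⟨m, a, u, rfl, hu, rfl⟩
      exact EE_mul (iEE _ _ (Submodule.subset_span hu)) (xpow a)
  -- dimension
  intro n hn
  let Ω : (∀ a : Fin (n / l + 1), EE P (n - a * l)) →ₗ[ℚ] U K' :=
    ∑ a : Fin (n / l + 1), (LinearMap.mulRight ℚ (iU x ^ (a : ℕ))).comp
      (i.toLinearMap.comp ((EE P (n - a * l)).subtype.comp (LinearMap.proj a)))
  have hΩ : ∀ f, Ω f = ∑ a : Fin (n / l + 1), i (f a : U K) * iU x ^ (a : ℕ) := by
    intro f; simp [Ω]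
  have Ωinj : Function.Injective Ω := by
    rw [← LinearMap.ker_eq_bot, LinearMap.ker_eq_bot']
    intro f hf
    funext b
    have := congrArg (fun z => Ψ z s0 (b : ℕ)) hf
    simp only [hΩ, map_sum, LinearMap.sum_apply, Finset.sum_apply, hΨ, map_zero,
      LinearMap.zero_apply, Pi.zero_apply] at this
    rw [Finset.sum_eq_single b] at this
    · apply Subtype.ext; simpa using this
    · intro a _ hab
      rw [if_neg]; intro h; exact hab (Fin.ext h.symm)
    · simp
  have hal : ∀ a : Fin (n / l + 1), (a : ℕ) * l ≤ n := by
    intro a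
    exact (Nat.mul_le_mul_right l (Nat.lt_succ_iff.1 a.2)).trans (Nat.div_mul_le_self n l)
  have Ωrange : LinearMap.range Ω = EE P' n := by
    rw [hR]
    apply le_antisymm
    · rintro _ ⟨f, rfl⟩
      rw [hΩ]
      refine Submodule.sum_mem _ fun a _ => ?_
      have := R_mem (n - a * l) a _ (f a).2
      rwa [Nat.sub_add_cancel (hal a)] at this
    · refine Submodule.span_le.2 ?_
      rintro _ ⟨m, a, u, hm, hu, rfl⟩
      have ha : a < n / l + 1 := by
        rw [Nat.lt_succ_iff, Nat.le_div_iff_mul_le hl]; omega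
      have hmm : n - a * l = m := by omega
      refine ⟨Pi.single ⟨a, ha⟩ ⟨u, by simp only [hmm]; exact Submodule.subset_span hu⟩, ?_⟩
      rw [hΩ, Finset.sum_eq_single ⟨a, ha⟩]
      · simp
      · intro b _ hb
        rw [Pi.single_eq_of_ne hb]; simp
      · simp
  have hfin : ∀ a : Fin (n / l + 1), Module.Finite ℚ (EE P (n - a * l)) :=
    fun a => (hH _ ((Nat.sub_le _ _).trans hn)).1
  have hfr : ∀ a : Fin (n / l + 1), Module.finrank ℚ (EE P (n - a * l)) = H (n - a * l) :=
    fun a => (hH _ ((Nat.sub_le _ _).trans hn)).2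
  let eqv := (LinearEquiv.ofInjective Ω Ωinj).trans (LinearEquiv.ofEq _ _ Ωrange)
  refine ⟨Module.Finite.equiv eqv, ?_⟩
  rw [← eqv.finrank_eq, Module.finrank_pi_fintype]
  exact Finset.sum_congr rfl fun a _ => hfr a

end step

end KMLevel

namespace KMLevel

attribute [local instance 100] LieRing.ofAssociativeRing

section chain
variable {L : Type} [LieRing L] [LieAlgebra ℚ L]

/-- A family of subspaces closed under bracket, additively in the index. -/
@[ext] structure GF (L : Type) [LieRing L] [LieAlgebra ℚ L] where
  F : ℕ → Submodule ℚ L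
  cl : ∀ i j x y, x ∈ F i → y ∈ F j → ⁅x, y⁆ ∈ F (i + j)

/-- If `x` brackets `A i` into `B`, then it brackets the supremum into `B`. -/
lemma iSup_lie_le (F : ℕ → Submodule ℚ L) (B : Submodule ℚ L) (x : L)
    (h : ∀ i, ∀ y ∈ F i, ⁅x, y⁆ ∈ B) : ∀ y ∈ ⨆ i, F i, ⁅x, y⁆ ∈ B := by
  have : (⨆ i, F i) ≤ B.comap (LieAlgebra.ad ℚ L x : L →ₗ[ℚ] L) := iSup_le fun i y hy => h i y hy
  exact fun y hy => this hy

/-- The subalgebra spanned by a graded family. -/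
def GF.SA (G : GF L) : LieSubalgebra ℚ L :=
  { (⨆ i, G.F i : Submodule ℚ L) with
    lie_mem' := by
      intro x y hx hy
      change x ∈ ⨆ i, G.F i at hx
      change y ∈ ⨆ i, G.F i at hy
      change ⁅x, y⁆ ∈ ⨆ i, G.F i
      refine iSup_lie_le G.F _ x (fun i y hy => ?_) y hy
      rw [← lie_skew]
      refine Submodule.neg_mem _ (iSup_lie_le G.F _ y (fun j x hx => ?_) x hx)
      exact Submodule.mem_iSup_of_mem _ (G.cl i j y x hy hx) }

lemma GF.mem_SA (G : GF L) (x : L) : x ∈ G.SA ↔ x ∈ ⨆ i, G.F i := Iff.rfl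

/-- The induced grading. -/
def GF.gr (G : GF L) (n : ℕ) : Submodule ℚ G.SA :=
  (G.F n).comap (G.SA.subtype : G.SA →ₗ[ℚ] L)

lemma GF.mem_gr (G : GF L) (n : ℕ) (x : G.SA) : x ∈ G.gr n ↔ (x : L) ∈ G.F n := Iff.rfl

/-- The enveloping algebra dimensions up to degree `N`. -/
def GF.Dm (G : GF L) (H : ℕ → ℕ) : Prop := ∀ n ≤ 8, HasDim (EE G.gr n) (H n)

/-- Effect of one new generator of degree `l` on the enveloping algebra dimensions. -/
def stepH (l : ℕ) (H : ℕ → ℕ) : ℕ → ℕ := fun n => ∑ a : Fin (n / l + 1), H (n - a * l)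

lemma GF.step (G G' : GF L) (l : ℕ) (hl : 1 ≤ l) (x : L) (hx : x ∈ G'.F l)
    (hxG : x ∉ ⨆ i, G.F i) (hne : ∀ m, m ≠ l → G'.F m = G.F m) (he : G'.F l = G.F l ⊔ ℚ ∙ x)
    (hxb : ∀ m, ∀ y ∈ G.F m, ⁅x, y⁆ ∈ G.F (m + l)) (H : ℕ → ℕ) (hH : G.Dm H) :
    G'.Dm (stepH l H) := by
  have hle : ∀ m, G.F m ≤ G'.F m := by
    intro m
    by_cases h : m = l
    · subst h; rw [he]; exact le_sup_left
    · rw [hne m h]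
  have hSA : G.SA ≤ G'.SA := by
    intro y hy
    exact (iSup_mono hle : (⨆ i, G.F i) ≤ ⨆ i, G'.F i) hy
  let δ : G.SA →ₗ[ℚ] G.SA := (LieAlgebra.ad ℚ L x : L →ₗ[ℚ] L).restrict (p := G.SA.toSubmodule)
    (q := G.SA.toSubmodule)
    (iSup_lie_le G.F _ x fun i y hy => Submodule.mem_iSup_of_mem _ (hxb i y hy))
  let x' : G'.SA := ⟨x, Submodule.mem_iSup_of_mem l hx⟩
  refine pbw_step (LieSubalgebra.inclusion hSA) x' δ ?_ ?_ G.gr G'.gr l hl ?_ ?_ hx ?_ H 8 hH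
  · intro k; rfl
  · constructor
    · rintro ⟨⟨a, ha⟩, c⟩ ⟨⟨b, hb⟩, e⟩ h
      have h : a + c • x = b + e • x := congrArg Subtype.val h
      have hce : c = e := by
        by_contra hce
        apply hxG
        have h2 : (c - e) • x = b - a := by 
          have h3 : c • x = b + e • x - a := by rw [← h]; abel
          rw [sub_smul, h3]; abel
        have h3 : x = (c - e)⁻¹ • (b - a) := by
          rw [← h2, smul_smul, inv_mul_cancel₀ (sub_ne_zero.2 hce), one_smul]
        rw [h3]
        exact Submodule.smul_mem _ _ (Submodule.sub_mem _ hb ha)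
      subst hce
      have : a = b := add_right_cancel h
      subst this; rfl
    · rintro ⟨y, hy⟩
      have : (⨆ i, G'.F i) ≤ (⨆ i, G.F i) ⊔ ℚ ∙ x := by
        refine iSup_le fun m => ?_
        by_cases h : m = l
        · subst h; rw [he]; exact sup_le_sup_right (le_iSup G.F m) _
        · rw [hne m h]; exact (le_iSup G.F m).trans le_sup_left
      obtain ⟨k, hk, z, hz, e⟩ := Submodule.mem_sup.1 (this hy)
      obtain ⟨c, rfl⟩ := Submodule.mem_span_singleton.1 hz
      exact ⟨(⟨k, hk⟩, c), Subtype.ext e⟩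
  · intro m k hk; exact hxb m k hk
  · intro m k hk; exact hle m hk
  · rintro m ⟨y, hy'⟩ hy
    change y ∈ G'.F m at hy
    by_cases h : m = l
    · subst h
      rw [he] at hy
      obtain ⟨k, hk, z, hz, e⟩ := Submodule.mem_sup.1 hy
      obtain ⟨c, rfl⟩ := Submodule.mem_span_singleton.1 hz
      exact ⟨⟨k, Submodule.mem_iSup_of_mem m hk⟩, hk, c, Subtype.ext e.symm, fun _ => rfl⟩
    · rw [hne m h] at hy
      exact ⟨⟨y, Submodule.mem_iSup_of_mem m hy⟩, hy, 0, Subtype.ext (by simp), fun h => absurd rfl h⟩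

/-- Truncated family: `A` in degree `l`, everything in degrees above `l`. -/
def GF.fam (G : GF L) (l : ℕ) (hl : 1 ≤ l) (A : Submodule ℚ L) (hA : A ≤ G.F l) : GF L where
  F m := if m < l then ⊥ else if m = l then A else G.F m
  cl i j x y hx hy := by
    by_cases hi : i < l
    · rw [if_pos hi] at hx
      rw [(Submodule.mem_bot ℚ).1 hx, zero_lie]; exact Submodule.zero_mem _
    by_cases hj : j < l
    · rw [if_pos hj] at hy
      rw [(Submodule.mem_bot ℚ).1 hy, lie_zero]; exact Submodule.zero_mem _
    rw [if_neg (by omega), if_neg (by omega)]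
    rw [if_neg hi] at hx
    rw [if_neg hj] at hy
    apply G.cl
    · split_ifs at hx with h
      · subst h; exact hA hx
      · exact hx
    · split_ifs at hy with h
      · subst h; exact hA hy
      · exact hy

lemma GF.fam_F (G : GF L) (l : ℕ) (hl : 1 ≤ l) (A : Submodule ℚ L) (hA : A ≤ G.F l) (m : ℕ) :
    (G.fam l hl A hA).F m = if m < l then ⊥ else if m = l then A else G.F m := rfl

lemma GF.fam_dim (G : GF L) (hG : iSupIndep G.F) (l : ℕ) (hl : 1 ≤ l)
    (hfin : Module.Finite ℚ (G.F l)) (H : ℕ → ℕ) (hH : (G.fam l hl ⊥ bot_le).Dm H) :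
    ∀ d : ℕ, ∀ A : Submodule ℚ L, ∀ hA : A ≤ G.F l, Module.finrank ℚ A = d →
      (G.fam l hl A hA).Dm ((stepH l)^[d] H) := by
  intro d
  induction d with
  | zero =>
    intro A hA hd
    have : Module.Finite ℚ A := Submodule.finiteDimensional_of_le hA
    have : A = ⊥ := Submodule.finrank_eq_zero.1 hd
    subst this; exact hH
  | succ d ih =>
    intro A hA hd
    have hAf : Module.Finite ℚ A := Submodule.finiteDimensional_of_le hA
    have hnt : Nontrivial A := Module.nontrivial_of_finrank_pos (R := ℚ) (by omega)
    obtain ⟨x, hx0⟩ := exists_ne (0 : A)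
    obtain ⟨C, hC⟩ := Submodule.exists_isCompl (ℚ ∙ x)
    have hA0 : C.map A.subtype ≤ G.F l := (Submodule.map_subtype_le A C).trans hA
    have hfr : Module.finrank ℚ (C.map A.subtype) = d := by
      rw [Submodule.finrank_map_subtype_eq]
      have := Submodule.finrank_add_eq_of_isCompl hC
      rw [finrank_span_singleton hx0, hd] at this
      omega
    have hxC : (x : L) ∉ C.map A.subtype := by
      rintro ⟨y, hy, e⟩
      have : y = x := Subtype.ext e
      subst this
      exact hx0 ((Submodule.disjoint_def.1 hC.disjoint) y (Submodule.mem_span_singleton_self y) hy)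
    rw [Function.iterate_succ_apply']
    refine GF.step (G.fam l hl _ hA0) (G.fam l hl A hA) l hl x ?_ ?_ ?_ ?_ ?_ _ (ih _ hA0 hfr)
    · rw [GF.fam_F, if_neg (by omega), if_pos rfl]; exact x.2
    · intro hx
      have hle : (⨆ i, (G.fam l hl _ hA0).F i) ≤ C.map A.subtype ⊔ ⨆ m, ⨆ (_ : m ≠ l), G.F m := by
        refine iSup_le fun m => ?_
        rw [GF.fam_F]
        split_ifs with h1 h2
        · exact bot_le
        · exact le_sup_left
        · exact le_trans (le_iSup₂ (f := fun m (_ : m ≠ l) => G.F m) m h2) le_sup_right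
      obtain ⟨a, ha, z, hz, e⟩ := Submodule.mem_sup.1 (hle hx)
      have h1 : z ∈ G.F l := by
        have : z = x - a := by rw [← e]; abel
        rw [this]; exact Submodule.sub_mem _ (hA x.2) (hA0 ha)
      have h2 : z = 0 := Submodule.disjoint_def.1 (hG l) z h1 hz
      rw [h2, add_zero] at e
      exact hxC (e ▸ ha)
    · intro m hm
      rw [GF.fam_F, GF.fam_F, if_neg hm, if_neg hm]
    · simp only [GF.fam_F, lt_self_iff_false, if_false, if_true]
      have h := congrArg (Submodule.map A.subtype) hC.sup_eq_top
      rw [Submodule.map_sup, Submodule.map_span, Submodule.map_top, Submodule.range_subtype,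
        Set.image_singleton, sup_comm] at h
      exact h.symm
    · intro m y hy
      rw [GF.fam_F] at hy
      by_cases h : m < l
      · rw [if_pos h] at hy
        rw [(Submodule.mem_bot ℚ).1 hy, lie_zero]; exact Submodule.zero_mem _
      rw [if_neg h] at hy
      rw [GF.fam_F, if_neg (by omega), if_neg (by omega), add_comm]
      refine G.cl l m _ _ (hA x.2) ?_
      split_ifs at hy with h2
      · subst h2; exact hA0 hy
      · exact hy

lemma GF.fam_succ (G : GF L) (l : ℕ) (hl : 1 ≤ l) :
    G.fam l hl ⊥ bot_le = G.fam (l + 1) (by omega) (G.F (l + 1)) le_rfl := by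
  ext1; funext m
  rw [GF.fam_F, GF.fam_F]
  split_ifs <;> first | rfl | omega | (congr 1)

lemma GF.fam_one (G : GF L) (h0 : G.F 0 = ⊥) : G.fam 1 le_rfl (G.F 1) le_rfl = G := by
  ext1; funext m
  rw [GF.fam_F]
  split_ifs with h1 h2
  · rw [show m = 0 by omega, h0]
  · rw [h2]
  · rfl

lemma U_one_ne_zero {K : Type} [LieRing K] [LieAlgebra ℚ K] : (1 : U K) ≠ 0 := by
  intro h
  have := congrArg (UniversalEnvelopingAlgebra.lift ℚ (0 : K →ₗ⁅ℚ⁆ ℚ)) h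
  rw [map_one, map_zero] at this
  exact one_ne_zero this

lemma GF.base (G : GF L) (hG : ∀ m < 9, G.F m = ⊥) : G.Dm (fun n => if n = 0 then 1 else 0) := by
  have key : ∀ n u, Mon G.gr n u → n < 9 → u = 0 ∨ (n = 0 ∧ u = 1) := by
    intro n u hu
    induction hu with
    | one => intro _; right; exact ⟨rfl, rfl⟩
    | @cons m n y u hy hu ih =>
      intro hmn
      left
      have : y = 0 := by
        rw [GF.mem_gr, hG m (by omega)] at hy
        exact Subtype.ext ((Submodule.mem_bot ℚ).1 hy)
      rw [this, map_zero, zero_mul]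
  intro n hn
  by_cases h : n = 0
  · subst h
    have : EE G.gr 0 = ℚ ∙ (1 : U G.SA) := by
      apply le_antisymm
      · refine Submodule.span_le.2 fun u hu => ?_
        rcases key 0 u hu (by omega) with rfl | ⟨_, rfl⟩
        · exact Submodule.zero_mem _
        · exact Submodule.mem_span_singleton_self _
      · rw [Submodule.span_singleton_le_iff_mem]; exact EE_one
    rw [this]
    refine ⟨inferInstance, ?_⟩
    rw [finrank_span_singleton U_one_ne_zero]; rfl
  · have : EE G.gr n = ⊥ := by
      rw [eq_bot_iff]
      refine Submodule.span_le.2 fun u hu => ?_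
      rcases key n u hu (by omega) with rfl | ⟨h', _⟩
      · exact Submodule.zero_mem _
      · exact absurd h' h
    rw [this]
    simp only [if_neg h]
    exact ⟨inferInstance, finrank_bot ℚ _⟩

/-- The dimension functions. -/
def HH (c : ℕ → ℕ) : ℕ → ℕ → ℕ
  | 0 => fun n => if n = 0 then 1 else 0
  | k + 1 => (stepH (8 - k))^[c (8 - k)] (HH c k)

theorem GF.main (G : GF L) (h0 : G.F 0 = ⊥) (hG : iSupIndep G.F)
    (hfin : ∀ l, Module.Finite ℚ (G.F l)) :
    G.Dm (HH (fun m => Module.finrank ℚ (G.F m)) 8) := by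
  have key : ∀ k l, ∀ _ : l + k = 8, ∀ hl : 1 ≤ l, (G.fam l hl ⊥ bot_le).Dm
      (HH (fun m => Module.finrank ℚ (G.F m)) k) := by
    intro k
    induction k with
    | zero =>
      intro l h hl
      apply GF.base
      intro m hm
      rw [GF.fam_F]
      split_ifs <;> first | rfl | omega
    | succ k ih =>
      intro l h hl
      rw [GF.fam_succ]
      have := G.fam_dim hG (l + 1) (by omega) (hfin _) _ (ih (l + 1) (by omega) (by omega)) _
        (G.F (l + 1)) le_rfl rfl
      rw [HH, show 8 - k = l + 1 by omega]
      exact this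
  have := G.fam_dim hG 1 le_rfl (hfin _) _ (key 7 1 rfl le_rfl) _ (G.F 1) le_rfl rfl
  rw [G.fam_one h0] at this
  exact this

end chain

end KMLevel

namespace KMLevel

attribute [local instance 100] LieRing.ofAssociativeRing

open Lt

/-- The positive part as a graded family. -/
def GP : GF 𝔤 := ⟨G, fun i j x y hx hy => Gp_lie e1 e2 i j x hx y hy⟩

/-- The positive part as a Lie algebra. -/
abbrev LP := GP.SA

/-- Homogeneous part of the free algebra. -/
def Tn (n : ℕ) : Submodule ℚ T := Submodule.span ℚ {t | ∃ w : List Lt, w.length = n ∧ t = word w}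

lemma word_mem_Tn {w : List Lt} {n : ℕ} (h : w.length = n) : word w ∈ Tn n :=
  Submodule.subset_span ⟨w, h, rfl⟩

lemma Tn_mul {n m : ℕ} {s t : T} (hs : s ∈ Tn n) (ht : t ∈ Tn m) : s * t ∈ Tn (n + m) := by
  have : Tn n ≤ (Tn (n + m)).comap (LinearMap.mulRight ℚ t) := by
    refine Submodule.span_le.2 ?_
    rintro _ ⟨w, hw, rfl⟩
    have : Tn m ≤ (Tn (n + m)).comap (LinearMap.mulLeft ℚ (word w)) := by
      refine Submodule.span_le.2 ?_
      rintro _ ⟨w', hw', rfl⟩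
      change word w * word w' ∈ Tn (n + m)
      rw [← word_append]
      exact word_mem_Tn (by simp [hw, hw'])
    exact this ht
  exact this hs

lemma X_mem_Tn (l : Lt) : X l ∈ Tn 1 := by
  have := word_mem_Tn (w := [l]) (n := 1) rfl
  simpa using this

lemma v_mem_G (l : Lt) : v l ∈ G 1 := by
  have := vg_mem e1 e2 l
  have h : vg e1 e2 l = v l := by cases l <;> rfl
  rwa [h] at this

/-- Level one generators in `LP`. -/
def vP (l : Lt) : LP := ⟨v l, Submodule.mem_iSup_of_mem 1 (v_mem_G l)⟩

/-- The map from the free algebra to the enveloping algebra of the positive part. -/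
def Psi : T →ₐ[ℚ] U LP := FreeAlgebra.lift ℚ (fun l => iU (vP l))

lemma Psi_X (l) : Psi (X l) = iU (vP l) := FreeAlgebra.lift_ι_apply _ _

lemma map_Psi_mul {n m : ℕ} {s t : U LP} (hs : s ∈ (Tn n).map Psi.toLinearMap)
    (ht : t ∈ (Tn m).map Psi.toLinearMap) : s * t ∈ (Tn (n + m)).map Psi.toLinearMap := by
  obtain ⟨a, ha, rfl⟩ := hs
  obtain ⟨b, hb, rfl⟩ := ht
  exact ⟨a * b, Tn_mul ha hb, map_mul Psi a b⟩

lemma iU_vP_mem (l) : iU (vP l) ∈ (Tn 1).map Psi.toLinearMap := ⟨X l, X_mem_Tn l, Psi_X l⟩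

lemma G_le (m : ℕ) : G m ≤ (((Tn m).map Psi.toLinearMap).comap (iU : LP →ₗ⁅ℚ⁆ U LP).toLinearMap).map
    (GP.SA.subtype : LP →ₗ[ℚ] 𝔤) := by
  induction m using Nat.twoStepInduction with
  | zero => exact bot_le
  | one =>
    refine Submodule.span_le.2 ?_
    rintro _ ⟨l, rfl⟩
    have h : vg e1 e2 l = v l := by cases l <;> rfl
    exact ⟨vP l, iU_vP_mem l, h.symm⟩
  | more n _ ih =>
    refine iSup_le fun l => ?_
    rintro _ ⟨y, hy, rfl⟩
    obtain ⟨z, hz, hzy⟩ := ih hy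
    change LP at z
    subst hzy
    have h : vg e1 e2 l = v l := by cases l <;> rfl
    refine ⟨(⁅vP l, z⁆ : LP), ?_, ?_⟩
    · change iU ⁅vP l, z⁆ ∈ (Tn (n + 2)).map Psi.toLinearMap
      rw [iU_lie]
      refine Submodule.sub_mem _ ?_ ?_
      · have := map_Psi_mul (iU_vP_mem l) hz
        rwa [show 1 + (n + 1) = n + 2 by ring] at this
      · have := map_Psi_mul (n := n + 1) (m := 1) hz (iU_vP_mem l)
        exact this
    · rw [h]; rfl

lemma EE_eq (n : ℕ) : EE GP.gr n = (Tn n).map Psi.toLinearMap := by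
  apply le_antisymm
  · refine Submodule.span_le.2 fun u hu => ?_
    change u ∈ _
    induction hu with
    | one => exact ⟨1, word_mem_Tn (w := []) rfl, map_one Psi⟩
    | @cons m n y u hy hu ih =>
      refine map_Psi_mul ?_ ih
      obtain ⟨z, hz, e⟩ := G_le m hy
      have : z = y := Subtype.ext e
      subst this
      exact hz
  · rw [Submodule.map_le_iff_le_comap]
    refine Submodule.span_le.2 ?_
    rintro _ ⟨w, rfl, rfl⟩
    refine Submodule.subset_span ?_
    change Mon GP.gr w.length (Psi (word w))
    induction w with
    | nil => rw [word_nil, map_one]; exact Mon.one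
    | cons l w ih =>
      rw [word_cons, map_mul, Psi_X, List.length_cons, add_comm]
      exact Mon.cons (v_mem_G l) ih

/-- `Psi` intertwines the derivations. -/
lemma Psi_E2 : ∃ d : U LP →ₗ[ℚ] U LP, ∀ t, Psi (E2 t) = d (Psi t) := by
  let δ : LP →ₗ[ℚ] LP := (LieAlgebra.ad ℚ 𝔤 e2 : 𝔤 →ₗ[ℚ] 𝔤).restrict (p := GP.SA.toSubmodule)
    (q := GP.SA.toSubmodule)
    (iSup_lie_le GP.F _ e2 fun i y hy =>
      Submodule.mem_iSup_of_mem i (Z_maps g_rel i e2 mem_Z2.1 y hy))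
  have hδ : ∀ y : LP, ((δ y : LP) : 𝔤) = ⁅e2, (y : 𝔤)⁆ := fun y => rfl
  obtain ⟨d, d1, d2⟩ := exists_der δ (fun a b => Subtype.ext (by
    change ⁅e2, ⁅(a : 𝔤), (b : 𝔤)⁆⁆ = ⁅⁅e2, (a : 𝔤)⁆, (b : 𝔤)⁆ + ⁅(a : 𝔤), ⁅e2, (b : 𝔤)⁆⁆
    exact leibniz_lie _ _ _))
  have done : d 1 = 0 := by
    have := d2 1 1
    simp only [mul_one, one_mul] at this
    simpa using this
  have hv : ∀ l, Psi (E2 (X l)) = iU (δ (vP l)) := by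
    intro l
    have hE : E2 (X l) = ⁅E2, Lm l⁆ 1 := by simp [LieRing.of_associative_ring_bracket]
    have he := e2_v g_rel l
    have hvv : ∀ l, vg e1 e2 l = v l := by intro l; cases l <;> rfl
    simp only [hvv] at he
    rw [hE, E2_lie]
    cases l
    · have : δ (vP L0) = vP L1 := Subtype.ext he
      rw [this]; simp [Psi_X]
    · have : δ (vP L1) = (2 : ℚ) • vP L2 := Subtype.ext he
      rw [this, map_smul]; simp [Psi_X]
    · have : δ (vP L2) = (3 : ℚ) • vP L3 := Subtype.ext he
      rw [this, map_smul]; simp [Psi_X]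
    · have : δ (vP L3) = 0 := Subtype.ext he
      rw [this, map_zero]; simp
  refine ⟨d, fun t => ?_⟩
  have : Psi.toLinearMap ∘ₗ E2 = d ∘ₗ Psi.toLinearMap := by
    apply lin_ext
    intro w
    change Psi (E2 (word w)) = d (Psi (word w))
    induction w with
    | nil => simp [done]
    | cons l w ih => rw [word_cons, E2_der, map_add, map_mul, map_mul, map_mul, d2, ih, hv, Psi_X, d1]
  exact LinearMap.congr_fun this t

lemma Psi_lie (a b : T) : Psi ⁅a, b⁆ = Psi a * Psi b - Psi b * Psi a := by
  rw [LieRing.of_associative_ring_bracket, map_sub, map_mul, map_mul]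

lemma Psi_W (k : ℕ) : Psi (W k) = 0 := by
  induction k with
  | zero =>
    have : Psi w1 = iU ⁅vP L0, ⁅vP L0, ⁅vP L0, vP L1⁆⁆⁆ := by
      unfold w1
      simp only [Psi_lie, Psi_X, iU_lie]
    change Psi w1 = 0
    rw [this]
    have h : ⁅vP L0, ⁅vP L0, ⁅vP L0, vP L1⁆⁆⁆ = 0 := by
      apply Subtype.ext
      change ⁅e1, ⁅e1, ⁅e1, ⁅e2, e1⁆⁆⁆⁆ = 0
      rw [← lie_skew e2 e1, lie_neg, lie_neg, lie_neg, g_rel.sE12, neg_zero]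
    rw [h, map_zero]
  | succ k ih =>
    obtain ⟨d, hd⟩ := Psi_E2
    change Psi (E2 (W k)) = 0
    rw [hd, ih, map_zero]

lemma Psi_eq_zero (t : T) : Psi t = 0 ↔ t ∈ I := by
  constructor
  · intro ht
    obtain ⟨ρ, hρ⟩ := exists_rho
    let R : U LP →ₐ[ℚ] Module.End ℚ Q := UniversalEnvelopingAlgebra.lift ℚ (ρ.comp GP.SA.incl)
    have key : ∀ w, R (Psi (word w)) (Submodule.Quotient.mk 1) = Submodule.Quotient.mk (word w) := by
      intro w
      induction w with
      | nil => simp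
      | cons l w ih =>
        rw [word_cons, map_mul, map_mul, Module.End.mul_apply, ih, Psi_X]
        have : R (iU (vP l)) = ρ (v l) := lift_iU _ _
        rw [this, hρ]
    have : (LinearMap.applyₗ (Submodule.Quotient.mk 1 : Q)) ∘ₗ R.toLinearMap ∘ₗ Psi.toLinearMap
        = I.mkQ := lin_ext key
    have h2 := LinearMap.congr_fun this t
    change R (Psi t) (Submodule.Quotient.mk 1) = I.mkQ t at h2
    rw [ht, map_zero] at h2
    exact (Submodule.Quotient.mk_eq_zero I).1 h2.symm
  · intro ht
    have : I ≤ LinearMap.ker Psi.toLinearMap := by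
      refine Submodule.span_le.2 ?_
      rintro _ ⟨u, k, v, rfl⟩
      change Psi _ = 0
      rw [map_mul, map_mul, Psi_W, mul_zero, zero_mul]
    exact this ht

lemma Tn_fin (n : ℕ) : Module.Finite ℚ (Tn n) := by
  have : {t | ∃ w : List Lt, w.length = n ∧ t = word w} =
      word '' {w : List Lt | w.length = n} := by
    ext t; constructor
    · rintro ⟨w, h, rfl⟩; exact ⟨w, h, rfl⟩
    · rintro ⟨w, h, rfl⟩; exact ⟨w, h, rfl⟩
  unfold Tn
  rw [this]
  exact FiniteDimensional.span_of_finite ℚ ((List.finite_length_eq Lt n).image _)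

lemma Tn_finrank (n : ℕ) : Module.finrank ℚ (Tn n) = 4 ^ n := by
  let b : List.Vector Lt n → T := fun w => word w.1
  have hb : LinearIndependent ℚ b := by
    have h := wordBasis.linearIndependent
    have : b = wordBasis ∘ (fun w : List.Vector Lt n => FreeMonoid.ofList w.1) := by
      funext w; exact (wordBasis_apply _).symm
    rw [this]
    exact h.comp _ (fun a c h => Subtype.ext (FreeMonoid.ofList.injective h))
  have hr : Tn n = Submodule.span ℚ (Set.range b) := by
    unfold Tn
    congr 1
    ext t; constructor
    · rintro ⟨w, h, rfl⟩; exact ⟨⟨w, h⟩, rfl⟩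
    · rintro ⟨w, rfl⟩; exact ⟨w.1, w.2, rfl⟩
  rw [hr, finrank_span_eq_card hb, card_vector]; rfl

lemma EE_finrank (n : ℕ) :
    Module.finrank ℚ (EE GP.gr n) + Module.finrank ℚ (Tn n ⊓ I : Submodule ℚ T) = 4 ^ n := by
  have := Tn_fin n
  have h := (Psi.toLinearMap.domRestrict (Tn n)).finrank_range_add_finrank_ker
  rw [Tn_finrank, LinearMap.range_domRestrict, ← EE_eq] at h
  rw [← h]
  congr 1
  have : (Tn n ⊓ I : Submodule ℚ T) =
      (LinearMap.ker (Psi.toLinearMap.domRestrict (Tn n))).map (Tn n).subtype := by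
    ext t; constructor
    · rintro ⟨h1, h2⟩
      exact ⟨⟨t, h1⟩, (Psi_eq_zero t).2 h2, rfl⟩
    · rintro ⟨⟨t, h1⟩, h2, rfl⟩
      exact ⟨h1, (Psi_eq_zero t).1 h2⟩
  rw [this, Submodule.finrank_map_subtype_eq]

end KMLevel

namespace KMLevel

attribute [local instance 100] LieRing.ofAssociativeRing

open Lt

/-- Noncommutative polynomials with integer coefficients, as tries. -/
inductive Tr
  | z : Tr
  | nd (c : ℤ) (t0 t1 t2 t3 : Tr) : Tr

namespace Tr

/-- The element of the free algebra. -/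
def ev : Tr → T
  | z => 0
  | nd c t0 t1 t2 t3 =>
    (c : ℚ) • (1 : T) + (X L0 * ev t0 + X L1 * ev t1 + X L2 * ev t2 + X L3 * ev t3)

/-- Test for zero. -/
def iz : ℤ → Bool
  | .ofNat n => n.beq 0
  | .negSucc _ => false

lemma iz_eq {c : ℤ} : iz c = true ↔ c = 0 := by
  cases c with
  | ofNat n =>
    change n.beq 0 = true ↔ _
    rw [Nat.beq_eq]; simp
  | negSucc n => simp [iz]

/-- Test for the zero trie. -/
def isz : Tr → Bool
  | z => true
  | nd _ _ _ _ _ => false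

lemma isz_eq {t : Tr} : isz t = true ↔ t = z := by cases t <;> simp [isz]

/-- Constructor which evaluates the coefficient. -/
def fnd (c : ℤ) (t0 t1 t2 t3 : Tr) : Tr :=
  Int.rec (fun n => Nat.rec (nd 0 t0 t1 t2 t3) (fun k _ => nd (Int.ofNat (Nat.succ k)) t0 t1 t2 t3) n)
    (fun n => Nat.rec (nd (Int.negSucc 0) t0 t1 t2 t3)
      (fun k _ => nd (Int.negSucc (Nat.succ k)) t0 t1 t2 t3) n) c

lemma fnd_eq (c t0 t1 t2 t3) : fnd c t0 t1 t2 t3 = nd c t0 t1 t2 t3 := by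
  cases c with
  | ofNat n => cases n <;> rfl
  | negSucc n => cases n <;> rfl

/-- Normalising constructor. -/
def mk (c : ℤ) (t0 t1 t2 t3 : Tr) : Tr :=
  match iz c && (isz t0 && (isz t1 && (isz t2 && isz t3))) with
  | true => z
  | false => fnd c t0 t1 t2 t3

lemma ev_mk (c t0 t1 t2 t3) : ev (mk c t0 t1 t2 t3) = ev (nd c t0 t1 t2 t3) := by
  unfold mk
  split
  · next h =>
    simp only [Bool.and_eq_true, iz_eq, isz_eq] at h
    obtain ⟨rfl, rfl, rfl, rfl, rfl⟩ := h
    simp [ev]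
  · rw [fnd_eq]

/-- Sum. -/
def add (s : Tr) : Tr → Tr :=
  Tr.rec (motive := fun _ => Tr → Tr) (fun t => t)
    (fun c t0 t1 t2 t3 h0 h1 h2 h3 t =>
      Tr.rec (motive := fun _ => Tr) (nd c t0 t1 t2 t3)
        (fun d s0 s1 s2 s3 _ _ _ _ => mk (c + d) (h0 s0) (h1 s1) (h2 s2) (h3 s3)) t) s

lemma add_z (t) : add z t = t := rfl
lemma add_nz (c t0 t1 t2 t3) : add (nd c t0 t1 t2 t3) z = nd c t0 t1 t2 t3 := rfl
lemma add_nn (c t0 t1 t2 t3 d s0 s1 s2 s3) : add (nd c t0 t1 t2 t3) (nd d s0 s1 s2 s3) =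
  mk (c + d) (add t0 s0) (add t1 s1) (add t2 s2) (add t3 s3) := rfl

lemma ev_add (s t : Tr) : ev (add s t) = ev s + ev t := by
  induction s generalizing t with
  | z => simp [add_z, ev]
  | nd c t0 t1 t2 t3 h0 h1 h2 h3 =>
    cases t with
    | z => simp [add_nz, ev]
    | nd d s0 s1 s2 s3 =>
      simp only [add_nn, ev_mk]
      simp only [ev, h0, h1, h2, h3, mul_add, Int.cast_add, add_smul]
      abel

/-- Scaling. -/
def smul (k : ℤ) (t : Tr) : Tr :=
  Tr.rec (motive := fun _ => Tr) z (fun c _ _ _ _ h0 h1 h2 h3 => fnd (k * c) h0 h1 h2 h3) t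

lemma smul_z (k) : smul k z = z := rfl
lemma smul_n (k c t0 t1 t2 t3) : smul k (nd c t0 t1 t2 t3) =
    nd (k * c) (smul k t0) (smul k t1) (smul k t2) (smul k t3) := fnd_eq _ _ _ _ _

lemma ev_smul (k : ℤ) (t : Tr) : ev (smul k t) = (k : ℚ) • ev t := by
  induction t with
  | z => simp [smul_z, ev]
  | nd c t0 t1 t2 t3 h0 h1 h2 h3 =>
    simp only [smul_n, ev, h0, h1, h2, h3, smul_add, mul_smul_comm, Int.cast_mul, mul_smul]

/-- Left multiplication by a letter. -/
def pre (l : Lt) (t : Tr) : Tr :=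
  match l with
  | L0 => nd 0 t z z z
  | L1 => nd 0 z t z z
  | L2 => nd 0 z z t z
  | L3 => nd 0 z z z t

lemma ev_pre (l t) : ev (pre l t) = X l * ev t := by cases l <;> simp [pre, ev]

/-- Left multiplication by a word. -/
def lsh : List Lt → Tr → Tr
  | [], t => t
  | l :: w, t => pre l (lsh w t)

lemma ev_lsh (w t) : ev (lsh w t) = word w * ev t := by
  induction w with
  | nil => simp [lsh]
  | cons l w ih => simp [lsh, ev_pre, ih, mul_assoc]

/-- Simultaneous scaling and right multiplication by the word encoded by the trie `w`. -/
def rsh (w t : Tr) : Tr :=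
  Tr.rec (motive := fun _ => Tr) z (fun c _ _ _ _ h0 h1 h2 h3 =>
    match iz c with
    | true => nd 0 h0 h1 h2 h3
    | false => add (nd 0 h0 h1 h2 h3) (smul c w)) t

lemma rsh_z (w) : rsh w z = z := rfl
lemma rsh_n (w c t0 t1 t2 t3) : rsh w (nd c t0 t1 t2 t3) =
    match iz c with
    | true => nd 0 (rsh w t0) (rsh w t1) (rsh w t2) (rsh w t3)
    | false => add (nd 0 (rsh w t0) (rsh w t1) (rsh w t2) (rsh w t3)) (smul c w) := rfl

lemma ev_rsh (w t) : ev (rsh w t) = ev t * ev w := by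
  induction t with
  | z => simp [rsh_z, ev]
  | nd c t0 t1 t2 t3 h0 h1 h2 h3 =>
    rw [rsh_n]
    split
    · next h =>
      rw [iz_eq] at h
      subst h
      simp [ev, h0, h1, h2, h3, add_mul, mul_assoc]
    · simp only [ev_add, ev, h0, h1, h2, h3, ev_smul]
      simp only [Int.cast_zero, zero_smul, zero_add, add_mul, smul_mul_assoc, one_mul, mul_assoc]
      abel

/-- The derivation. -/
def der : Tr → Tr
  | z => z
  | nd _ t0 t1 t2 t3 => mk 0 (der t0) (add (der t1) t0) (add (der t2) (smul 2 t1))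
      (add (der t3) (smul 3 t2))

lemma E2_Xmul (l : Lt) (u : T) : E2 (X l * u) = X l * E2 u + (match l with
    | L0 => X L1 * u | L1 => (2 : ℚ) • (X L2 * u) | L2 => (3 : ℚ) • (X L3 * u) | L3 => 0) := by
  have := LinearMap.congr_fun (E2_lie l) u
  rw [br_apply, sub_eq_iff_eq_add, Lm_apply, Lm_apply] at this
  rw [this, add_comm]
  cases l <;> simp

lemma ev_der (t) : ev (der t) = E2 (ev t) := by
  induction t with
  | z => simp [der, ev]
  | nd c t0 t1 t2 t3 h0 h1 h2 h3 =>
    simp only [der, ev_mk]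
    simp only [ev, h0, h1, h2, h3, ev_add, ev_smul, map_add, map_smul, E2_one, E2_Xmul, mul_add,
      Int.cast_zero, zero_smul, smul_zero, zero_add, add_zero, mul_smul_comm, Int.cast_ofNat]
    abel

/-- Exact division. -/
def div (q : ℤ) (t : Tr) : Tr :=
  Tr.rec (motive := fun _ => Tr) z (fun c _ _ _ _ h0 h1 h2 h3 => fnd (c / q) h0 h1 h2 h3) t

lemma div_n (q c t0 t1 t2 t3) : div q (nd c t0 t1 t2 t3) =
    nd (c / q) (div q t0) (div q t1) (div q t2) (div q t3) := fnd_eq _ _ _ _ _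

/-- Divisibility test. -/
def chk (q : ℤ) (t : Tr) : Bool :=
  Tr.rec (motive := fun _ => Bool) true
    (fun c _ _ _ _ h0 h1 h2 h3 => iz (c % q) && (h0 && (h1 && (h2 && h3)))) t

lemma chk_n (q c t0 t1 t2 t3) : chk q (nd c t0 t1 t2 t3) =
  (iz (c % q) && (chk q t0 && (chk q t1 && (chk q t2 && chk q t3)))) := rfl

lemma ev_div (q : ℤ) (t) (h : chk q t = true) : (q : ℚ) • ev (div q t) = ev t := by
  induction t with
  | z => simp [div, ev]
  | nd c t0 t1 t2 t3 h0 h1 h2 h3 =>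
    simp only [chk_n, Bool.and_eq_true, iz_eq] at h
    obtain ⟨h, a0, a1, a2, a3⟩ := h
    have : (q : ℚ) * ((c / q : ℤ) : ℚ) = c := by
      exact_mod_cast Int.mul_ediv_cancel' (Int.dvd_of_emod_eq_zero h)
    simp only [div_n, ev, smul_add, ← mul_smul_comm, h0 a0, h1 a1, h2 a2, h3 a3, smul_smul, this]

/-- Homogeneity test. -/
def hom : ℕ → Tr → Bool
  | _, z => true
  | 0, nd _ t0 t1 t2 t3 => isz t0 && (isz t1 && (isz t2 && isz t3))
  | n + 1, nd c t0 t1 t2 t3 => iz c && (hom n t0 && (hom n t1 && (hom n t2 && hom n t3)))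

/-- Leading word test (lexicographically largest). -/
def lead : List Lt → Tr → Bool
  | _, z => false
  | [], nd c _ _ _ _ => !(iz c)
  | L0 :: w, nd _ t0 t1 t2 t3 => lead w t0 && (isz t1 && (isz t2 && isz t3))
  | L1 :: w, nd _ _ t1 t2 t3 => lead w t1 && (isz t2 && isz t3)
  | L2 :: w, nd _ _ _ t2 t3 => lead w t2 && isz t3
  | L3 :: w, nd _ _ _ _ t3 => lead w t3

end Tr

/-- Numerical value of a letter. -/
def dg : Lt → ℕ
  | L0 => 0 | L1 => 1 | L2 => 2 | L3 => 3

lemma dg_lt (l) : dg l < 4 := by cases l <;> decide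

/-- Numerical value of a word. -/
def val : List Lt → ℕ
  | [] => 0
  | l :: w => dg l * 4 ^ w.length + val w

lemma val_lt (w : List Lt) : val w < 4 ^ w.length := by
  induction w with
  | nil => simp [val]
  | cons l w ih =>
    have := dg_lt l
    simp only [val, List.length_cons, pow_succ]
    nlinarith [pow_pos (show 0 < 4 by norm_num) w.length]

lemma val_append (a b : List Lt) : val (a ++ b) = val a * 4 ^ b.length + val b := by
  induction a with
  | nil => simp [val]
  | cons l w ih =>
    simp only [List.cons_append, val, ih, List.length_append, pow_add]; ring

/-- Span of the words of length `n` of value smaller than `m`. -/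
def Low (n m : ℕ) : Submodule ℚ T :=
  Submodule.span ℚ {t | ∃ w : List Lt, w.length = n ∧ val w < m ∧ t = word w}

lemma Low_X (l : Lt) {n m : ℕ} {t : T} (ht : t ∈ Low n m) (m' : ℕ) (hm : dg l * 4 ^ n + m ≤ m') :
    X l * t ∈ Low (n + 1) m' := by
  have : Low n m ≤ (Low (n + 1) m').comap (LinearMap.mulLeft ℚ (X l)) := by
    refine Submodule.span_le.2 ?_
    rintro _ ⟨w, h1, h2, rfl⟩
    refine Submodule.subset_span ⟨l :: w, by simp [h1], ?_, (word_cons l w).symm⟩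
    simp only [val, h1]; omega
  exact this ht

lemma hom_low (n : ℕ) (t : Tr) (h : t.hom n = true) : t.ev ∈ Low n (4 ^ n) := by
  induction n generalizing t with
  | zero =>
    cases t with
    | z => exact Submodule.zero_mem _
    | nd c t0 t1 t2 t3 =>
      simp only [Tr.hom, Bool.and_eq_true, Tr.isz_eq] at h
      obtain ⟨rfl, rfl, rfl, rfl⟩ := h
      simp only [Tr.ev, mul_zero, add_zero]
      exact Submodule.smul_mem _ _ (Submodule.subset_span ⟨[], rfl, by simp [val], rfl⟩)
  | succ n ih =>
    cases t with
    | z => exact Submodule.zero_mem _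
    | nd c t0 t1 t2 t3 =>
      simp only [Tr.hom, Bool.and_eq_true, Tr.iz_eq] at h
      obtain ⟨rfl, h0, h1, h2, h3⟩ := h
      simp only [Tr.ev, Int.cast_zero, zero_smul, zero_add]
      refine Submodule.add_mem _ (Submodule.add_mem _ (Submodule.add_mem _ ?_ ?_) ?_) ?_
      · exact Low_X _ (ih _ h0) _ (by simp only [dg]; rw [pow_succ]; omega)
      · exact Low_X _ (ih _ h1) _ (by simp only [dg]; rw [pow_succ]; omega)
      · exact Low_X _ (ih _ h2) _ (by simp only [dg]; rw [pow_succ]; omega)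
      · exact Low_X _ (ih _ h3) _ (by simp only [dg]; rw [pow_succ]; omega)

lemma lead_low (w : List Lt) (t : Tr) (hh : t.hom w.length = true) (hl : t.lead w = true) :
    ∃ c : ℚ, c ≠ 0 ∧ t.ev - c • word w ∈ Low w.length (val w) := by
  induction w generalizing t with
  | nil =>
    cases t with
    | z => simp [Tr.lead] at hl
    | nd c t0 t1 t2 t3 =>
      simp only [List.length_nil, Tr.hom, Bool.and_eq_true, Tr.isz_eq] at hh
      obtain ⟨rfl, rfl, rfl, rfl⟩ := hh
      refine ⟨c, ?_, ?_⟩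
      · intro h
        have : c = 0 := by exact_mod_cast h
        subst this
        simp [Tr.lead, Tr.iz] at hl
      · simp [Tr.ev]
  | cons l w ih =>
    cases t with
    | z => simp [Tr.lead] at hl
    | nd c t0 t1 t2 t3 =>
      simp only [List.length_cons, Tr.hom, Bool.and_eq_true, Tr.iz_eq] at hh
      obtain ⟨rfl, h0, h1, h2, h3⟩ := hh
      have lw := fun t h => hom_low w.length t h
      cases l with
      | L0 =>
        simp only [Tr.lead, Bool.and_eq_true, Tr.isz_eq] at hl
        obtain ⟨hl, rfl, rfl, rfl⟩ := hl
        obtain ⟨c, hc, hm⟩ := ih _ h0 hl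
        refine ⟨c, hc, ?_⟩
        have := Low_X L0 hm (val (L0 :: w)) (by simp [val])
        have e : (Tr.nd 0 t0 .z .z .z).ev - c • word (L0 :: w) = X L0 * (t0.ev - c • word w) := by
          simp only [Tr.ev, word_cons, mul_sub, mul_smul_comm, Int.cast_zero, zero_smul, mul_zero,
            zero_add, add_zero]
          try abel
        rw [e]; exact this
      | L1 =>
        simp only [Tr.lead, Bool.and_eq_true, Tr.isz_eq] at hl
        obtain ⟨hl, rfl, rfl⟩ := hl
        obtain ⟨c, hc, hm⟩ := ih _ h1 hl
        refine ⟨c, hc, ?_⟩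
        have := Low_X L1 hm (val (L1 :: w)) (by simp [val])
        have k0 := Low_X L0 (lw _ h0) (val (L1 :: w)) (by simp [val, dg])
        have e : (Tr.nd 0 t0 t1 .z .z).ev - c • word (L1 :: w) = X L0 * t0.ev + X L1 * (t1.ev - c • word w) := by
          simp only [Tr.ev, word_cons, mul_sub, mul_smul_comm, Int.cast_zero, zero_smul, mul_zero,
            zero_add, add_zero]
          try abel
        rw [e]; exact Submodule.add_mem _ k0 this
      | L2 =>
        simp only [Tr.lead, Bool.and_eq_true, Tr.isz_eq] at hl
        obtain ⟨hl, rfl⟩ := hl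
        obtain ⟨c, hc, hm⟩ := ih _ h2 hl
        refine ⟨c, hc, ?_⟩
        have := Low_X L2 hm (val (L2 :: w)) (by simp [val])
        have k0 := Low_X L0 (lw _ h0) (val (L2 :: w)) (by simp [val, dg]; omega)
        have k1 := Low_X L1 (lw _ h1) (val (L2 :: w)) (by simp [val, dg]; omega)
        have e : (Tr.nd 0 t0 t1 t2 .z).ev - c • word (L2 :: w) = X L0 * t0.ev + X L1 * t1.ev + X L2 * (t2.ev - c • word w) := by
          simp only [Tr.ev, word_cons, mul_sub, mul_smul_comm, Int.cast_zero, zero_smul, mul_zero,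
            zero_add, add_zero]
          try abel
        rw [e]; exact Submodule.add_mem _ (Submodule.add_mem _ k0 k1) this
      | L3 =>
        simp only [Tr.lead] at hl
        obtain ⟨c, hc, hm⟩ := ih _ h3 hl
        refine ⟨c, hc, ?_⟩
        have := Low_X L3 hm (val (L3 :: w)) (by simp [val])
        have k0 := Low_X L0 (lw _ h0) (val (L3 :: w)) (by simp [val, dg]; omega)
        have k1 := Low_X L1 (lw _ h1) (val (L3 :: w)) (by simp [val, dg]; omega)
        have k2 := Low_X L2 (lw _ h2) (val (L3 :: w)) (by simp [val, dg]; omega)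
        have e : (Tr.nd 0 t0 t1 t2 t3).ev - c • word (L3 :: w) = X L0 * t0.ev + X L1 * t1.ev + X L2 * t2.ev + X L3 * (t3.ev - c • word w) := by
          simp only [Tr.ev, word_cons, mul_sub, mul_smul_comm, Int.cast_zero, zero_smul, mul_zero,
            zero_add, add_zero]
          try abel
        rw [e]; exact Submodule.add_mem _ (Submodule.add_mem _ (Submodule.add_mem _ k0 k1) k2) this

/-- `m` is the leading word of an element of the ideal. -/
def Good (m : List Lt) : Prop := ∃ t : Tr, t.ev ∈ I ∧ t.hom m.length = true ∧ t.lead m = true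

/-- Words having no factor in a given set. -/
lemma reduce (N : List Lt → Prop)
    (hN : ∀ w, ¬ N w → ∃ a m b, w = a ++ (m ++ b) ∧ Good m) (w : List Lt) :
    word w ∈ I ⊔ Submodule.span ℚ {t | ∃ u : List Lt, u.length = w.length ∧ N u ∧ t = word u} := by
  obtain ⟨n, hn⟩ : ∃ n, n = val w := ⟨_, rfl⟩
  induction n using Nat.strong_induction_on generalizing w with
  | _ n ih =>
    by_cases h : N w
    · exact Submodule.mem_sup_right (Submodule.subset_span ⟨w, rfl, h, rfl⟩)
    obtain ⟨a, m, b, rfl, t, htI, hth, htl⟩ := hN w h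
    obtain ⟨c, hc, hlow⟩ := lead_low m t hth htl
    set S := I ⊔ Submodule.span ℚ {t | ∃ u : List Lt, u.length = (a ++ (m ++ b)).length ∧ N u ∧
      t = word u} with hS
    have h1 : word a * (t.ev * word b) ∈ S :=
      Submodule.mem_sup_left (I_mulLeft _ (I_mulRight _ htI))
    have h2 : word a * ((t.ev - c • word m) * word b) ∈ S := by
      have : Low m.length (val m) ≤ S.comap
          ((LinearMap.mulLeft ℚ (word a)).comp (LinearMap.mulRight ℚ (word b))) := by
        refine Submodule.span_le.2 ?_
        rintro _ ⟨u, hu1, hu2, rfl⟩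
        change word a * (word u * word b) ∈ S
        rw [← word_append, ← word_append]
        have hlen : (a ++ (u ++ b)).length = (a ++ (m ++ b)).length := by simp [hu1]
        have hv : val (a ++ (u ++ b)) < n := by
          rw [hn]
          simp only [val_append, List.length_append, hu1]
          have := Nat.mul_lt_mul_of_pos_right hu2 (pow_pos (show 0 < 4 by norm_num) b.length)
          omega
        have := ih _ hv (a ++ (u ++ b)) rfl
        rwa [hlen] at this
      exact this hlow
    have h3 : word (a ++ (m ++ b)) = c⁻¹ • (word a * (t.ev * word b) -
        word a * ((t.ev - c • word m) * word b)) := by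
      rw [word_append, word_append, ← mul_sub, ← sub_mul, sub_sub_cancel, smul_mul_assoc,
        mul_smul_comm, smul_smul, inv_mul_cancel₀ hc, one_smul]
    rw [h3]
    exact Submodule.smul_mem _ _ (Submodule.sub_mem _ h1 h2)

end KMLevel

namespace KMLevel

attribute [local instance 100] LieRing.ofAssociativeRing

open Lt

/-- Letter from a digit. -/
def ltr : ℕ → Lt
  | 0 => L0 | 1 => L1 | 2 => L2 | _ => L3

/-- Word from its decimal code, which starts with the digit 1. -/
def dec : ℕ → ℕ → List Lt → List Lt
  | 0, _, acc => acc
  | k + 1, n, acc =>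
    match n.ble 1 with
    | true => acc
    | false => dec k (n / 10) (ltr (n % 10) :: acc)

/-- Lookup. -/
def getT : List Tr → ℕ → Tr
  | [], _ => .z
  | t :: _, 0 => t
  | _ :: ts, k + 1 => getT ts k

/-- Signed number from its code. -/
def sgn (c : ℕ) : ℤ :=
  match (c % 2).beq 0 with
  | true => Int.ofNat (c / 2)
  | false => Int.neg (Int.ofNat (c / 2))

/-- A term of a recipe. -/
def trm (gs : List Tr) (n : ℕ) : Tr :=
  Tr.lsh (dec 5 (n / 100000 % 100000) [])
    (Tr.rsh (Tr.lsh (dec 5 (n % 100000) []) (.nd (sgn (n / 1000000000000)) .z .z .z .z))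
      (getT gs (n / 10000000000 % 100)))

/-- A combination. -/
def comb (gs : List Tr) : List ℕ → Tr → Tr
  | [], acc => acc
  | n :: ns, acc => comb gs ns (Tr.add (trm gs n) acc)

/-- The leading word of a recipe. -/
def ldw (n : ℕ) : List Lt := dec 9 n []

/-- Division by `q + 1`. -/
def cdiv (q : ℕ) (t : Tr) : Tr :=
  Nat.rec t (fun k _ => Tr.div (Int.ofNat (k + 2)) t) q

/-- Divisibility by `q + 1`. -/
def cchk (q : ℕ) (t : Tr) : Bool :=
  Nat.rec true (fun k _ => Tr.chk (Int.ofNat (k + 2)) t) q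

lemma cdiv_mem (q : ℕ) (t : Tr) (h : cchk q t = true) (ht : t.ev ∈ I) : (cdiv q t).ev ∈ I := by
  cases q with
  | zero => exact ht
  | succ k =>
    change (Tr.div (Int.ofNat (k + 2)) t).ev ∈ I
    change Tr.chk (Int.ofNat (k + 2)) t = true at h
    have e := Tr.ev_div _ _ h
    have hq : ((Int.ofNat (k + 2) : ℤ) : ℚ) ≠ 0 := by
      simp only [Int.ofNat_eq_natCast, Int.cast_natCast]
      exact Nat.cast_ne_zero.2 (Nat.succ_ne_zero (k + 1))
    rw [← e] at ht
    have := Submodule.smul_mem I (((Int.ofNat (k + 2) : ℤ) : ℚ)⁻¹) ht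
    rwa [smul_smul, inv_mul_cancel₀ hq, one_smul] at this

/-- Evaluate a number and continue. -/
def fInt (c : ℤ) (k : ℤ → Bool) : Bool :=
  Int.rec (motive := fun _ => Bool)
    (fun n => Nat.rec (motive := fun _ => Bool) (k (Int.ofNat 0)) (fun m _ => k (Int.ofNat (Nat.succ m))) n)
    (fun n => Nat.rec (motive := fun _ => Bool) (k (Int.negSucc 0)) (fun m _ => k (Int.negSucc (Nat.succ m))) n) c

lemma fInt_eq (c k) : fInt c k = k c := by
  cases c with
  | ofNat n => cases n <;> rfl
  | negSucc n => cases n <;> rfl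

/-- Evaluate a trie and continue. -/
def fTr (t : Tr) : (Tr → Bool) → Bool :=
  Tr.rec (motive := fun _ => (Tr → Bool) → Bool) (fun k => k .z)
    (fun c _ _ _ _ h0 h1 h2 h3 k => fInt c fun c => h0 fun t0 => h1 fun t1 => h2 fun t2 =>
      h3 fun t3 => k (.nd c t0 t1 t2 t3)) t

lemma fTr_eq (t k) : fTr t k = k t := by
  induction t generalizing k with
  | z => rfl
  | nd c t0 t1 t2 t3 h0 h1 h2 h3 =>
    change (fInt c fun c => fTr t0 fun t0 => fTr t1 fun t1 => fTr t2 fun t2 =>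
      fTr t3 fun t3 => k (.nd c t0 t1 t2 t3)) = _
    rw [fInt_eq, h0, h1, h2, h3]

/-- Run the recipes. -/
def runC : List Tr → List (ℕ × ℕ × List ℕ) → Bool
  | _, [] => true
  | gs, (q, m, ns) :: rs =>
    fTr (comb gs ns .z) fun t => cchk q t && fTr (cdiv q t) fun g =>
    (Tr.hom (ldw m).length g && (Tr.lead (ldw m) g && runC (g :: gs) rs))

lemma getT_mem {gs : List Tr} (h : ∀ t ∈ gs, t.ev ∈ I) (k : ℕ) : (getT gs k).ev ∈ I := by
  induction gs generalizing k with
  | nil => exact Submodule.zero_mem _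
  | cons t ts ih =>
    cases k with
    | zero => exact h t (by simp)
    | succ k => exact ih (fun t ht => h t (by simp [ht])) k

lemma trm_mem {gs : List Tr} (h : ∀ t ∈ gs, t.ev ∈ I) (n : ℕ) : (trm gs n).ev ∈ I := by
  unfold trm
  rw [Tr.ev_lsh, Tr.ev_rsh]
  exact I_mulLeft _ (I_mulRight _ (getT_mem h _))

lemma comb_mem {gs : List Tr} (h : ∀ t ∈ gs, t.ev ∈ I) (ns : List ℕ) (acc : Tr)
    (ha : acc.ev ∈ I) : (comb gs ns acc).ev ∈ I := by
  induction ns generalizing acc with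
  | nil => exact ha
  | cons n ns ih =>
    refine ih _ ?_
    rw [Tr.ev_add]
    exact Submodule.add_mem _ (trm_mem h n) ha

lemma runC_sound (rs : List (ℕ × ℕ × List ℕ)) (gs : List Tr) (h : ∀ t ∈ gs, t.ev ∈ I)
    (hr : runC gs rs = true) : ∀ r ∈ rs, Good (ldw r.2.1) := by
  induction rs generalizing gs with
  | nil => simp
  | cons r rs ih =>
    obtain ⟨q, m, ns⟩ := r
    simp only [runC, fTr_eq, Bool.and_eq_true] at hr
    obtain ⟨h1, h2, h3, h4⟩ := hr
    have hg : (cdiv q (comb gs ns .z)).ev ∈ I :=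
      cdiv_mem _ _ h1 (comb_mem h ns .z (Submodule.zero_mem _))
    intro r hr
    rcases List.mem_cons.1 hr with rfl | hr
    · exact ⟨_, hg, h2, h3⟩
    · refine ih _ ?_ h4 r hr
      intro t ht
      rcases List.mem_cons.1 ht with rfl | ht
      · exact hg
      · exact h t ht

/-- Commutator with a letter. -/
def cmm (l : Lt) (t : Tr) : Tr :=
  Tr.add (Tr.pre l t) (Tr.smul (-1) (Tr.rsh (Tr.pre l (.nd 1 .z .z .z .z)) t))

lemma ev_cmm (l t) : (cmm l t).ev = ⁅X l, t.ev⁆ := by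
  simp [cmm, Tr.ev_add, Tr.ev_pre, Tr.ev_smul, Tr.ev_rsh, Tr.ev,
    LieRing.of_associative_ring_bracket, sub_eq_add_neg]

/-- The Serre element as a trie. -/
def w1T : Tr := cmm L0 (cmm L0 (cmm L0 (Tr.pre L1 (.nd 1 .z .z .z .z))))

lemma ev_w1T : w1T.ev = W 0 := by
  simp [w1T, ev_cmm, W, w1, Tr.ev_pre, Tr.ev]

/-- Iterated derivation. -/
def WT : ℕ → Tr
  | 0 => w1T
  | k + 1 => Tr.der (WT k)

lemma ev_WT (k) : (WT k).ev = W k := by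
  induction k with
  | zero => exact ev_w1T
  | succ k ih => rw [WT, Tr.ev_der, ih]; rfl

/-- List of iterated derivatives. -/
def WL : ℕ → Tr → List Tr → List Tr
  | 0, _, acc => acc
  | k + 1, t, acc => WL k t.der (t :: acc)

lemma WL_mem (k : ℕ) (j : ℕ) (acc : List Tr) (ha : ∀ t ∈ acc, t.ev ∈ I) :
    ∀ t ∈ WL k (WT j) acc, t.ev ∈ I := by
  induction k generalizing j acc with
  | zero => exact ha
  | succ k ih =>
    refine ih (j + 1) _ ?_
    intro t ht
    rcases List.mem_cons.1 ht with rfl | ht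
    · rw [ev_WT]; exact W_mem j
    · exact ha t ht

/-- Tries of words. -/
inductive LTr
  | e : LTr
  | f : LTr
  | n (a b c d : LTr) : LTr
deriving DecidableEq

/-- Insertion of a word. -/
def LTr.ins : List Lt → LTr → LTr
  | [], _ => .f
  | _ :: _, .f => .f
  | L0 :: w, .n a b c d => .n (ins w a) b c d
  | L1 :: w, .n a b c d => .n a (ins w b) c d
  | L2 :: w, .n a b c d => .n a b (ins w c) d
  | L3 :: w, .n a b c d => .n a b c (ins w d)
  | L0 :: w, .e => .n (ins w .e) .e .e .e
  | L1 :: w, .e => .n .e (ins w .e) .e .e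
  | L2 :: w, .e => .n .e .e (ins w .e) .e
  | L3 :: w, .e => .n .e .e .e (ins w .e)

/-- Does the word have a prefix in the trie? -/
def LTr.hit (t : LTr) : List Lt → Bool :=
  LTr.rec (motive := fun _ => List Lt → Bool) (fun _ => false) (fun _ => true)
    (fun _ _ _ _ ha hb hc hd w => List.rec (motive := fun _ => Bool) false
      (fun l w _ => Lt.rec (motive := fun _ => Bool) (ha w) (hb w) (hc w) (hd w) l) w) t

lemma LTr.hit_e (w) : LTr.e.hit w = false := rfl
lemma LTr.hit_nil (a b c d) : (LTr.n a b c d).hit [] = false := rfl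
lemma LTr.hit_0 (a b c d w) : (LTr.n a b c d).hit (L0 :: w) = a.hit w := rfl
lemma LTr.hit_1 (a b c d w) : (LTr.n a b c d).hit (L1 :: w) = b.hit w := rfl
lemma LTr.hit_2 (a b c d w) : (LTr.n a b c d).hit (L2 :: w) = c.hit w := rfl
lemma LTr.hit_3 (a b c d w) : (LTr.n a b c d).hit (L3 :: w) = d.hit w := rfl

lemma LTr.hit_ins (m w : List Lt) (t : LTr) (h : (t.ins m).hit w = true) :
    m <+: w ∨ t.hit w = true := by
  induction m generalizing t w with
  | nil => left; exact List.nil_prefix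
  | cons l m ih =>
    cases t with
    | f => right; rfl
    | e =>
      cases w with
      | nil => cases l <;> simp [LTr.ins, LTr.hit_e, LTr.hit_nil, LTr.hit_0, LTr.hit_1, LTr.hit_2, LTr.hit_3] at h
      | cons x w =>
        left
        have k : ∀ h : (LTr.ins m .e).hit w = true, m <+: w := fun h => by
          rcases ih w .e h with h | h
          · exact h
          · simp [LTr.hit_e] at h
        cases l <;> cases x <;> simp [LTr.ins, LTr.hit_e, LTr.hit_nil, LTr.hit_0, LTr.hit_1, LTr.hit_2, LTr.hit_3] at h <;>
          simpa using k h
    | n a b c d =>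
      cases w with
      | nil => cases l <;> simp [LTr.ins, LTr.hit_e, LTr.hit_nil, LTr.hit_0, LTr.hit_1, LTr.hit_2, LTr.hit_3] at h
      | cons x w =>
        cases l <;> cases x <;> simp only [LTr.ins, LTr.hit_e, LTr.hit_nil, LTr.hit_0, LTr.hit_1, LTr.hit_2, LTr.hit_3] at h <;>
          simp only [LTr.hit_0, LTr.hit_1, LTr.hit_2, LTr.hit_3, List.cons_prefix_cons, true_and] <;>
          first
          | exact ih _ _ h
          | exact Or.inr h

/-- Trie of a list of words. -/
def LTr.build : List (List Lt) → LTr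
  | [] => .e
  | m :: ms => LTr.ins m (build ms)

lemma LTr.hit_build (ms : List (List Lt)) (w : List Lt) (h : (build ms).hit w = true) :
    ∃ m ∈ ms, m <+: w := by
  induction ms with
  | nil => simp [build, hit_e] at h
  | cons m ms ih =>
    rcases hit_ins _ _ _ h with h | h
    · exact ⟨m, by simp, h⟩
    · obtain ⟨m', h1, h2⟩ := ih h
      exact ⟨m', by simp [h1], h2⟩

/-- Words without a factor in the trie. -/
def nrm (t : LTr) : List Lt → Bool
  | [] => true
  | l :: w => !(t.hit (l :: w)) && nrm t w

lemma nrm_false (t : LTr) (w : List Lt) (h : ¬ nrm t w = true) :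
    ∃ a b, w = a ++ b ∧ t.hit b = true := by
  induction w with
  | nil => simp [nrm] at h
  | cons l w ih =>
    by_cases h1 : t.hit (l :: w) = true
    · exact ⟨[], l :: w, rfl, h1⟩
    · have : ¬ nrm t w = true := by
        intro h2; apply h; simp [nrm, h1, h2]
      obtain ⟨a, b, rfl, hb⟩ := ih this
      exact ⟨l :: a, b, rfl, hb⟩

/-- Number of normal words of length `r` more than that of `w` ending with `w`. -/
def cnt (t : LTr) (r : ℕ) : List Lt → ℕ :=
  Nat.rec (motive := fun _ => List Lt → ℕ) (fun _ => 1) (fun _ c w =>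
    Nat.add (Bool.rec (motive := fun _ => ℕ) (c (L0 :: w)) 0 (t.hit (L0 :: w)))
    (Nat.add (Bool.rec (motive := fun _ => ℕ) (c (L1 :: w)) 0 (t.hit (L1 :: w)))
    (Nat.add (Bool.rec (motive := fun _ => ℕ) (c (L2 :: w)) 0 (t.hit (L2 :: w)))
      (Bool.rec (motive := fun _ => ℕ) (c (L3 :: w)) 0 (t.hit (L3 :: w)))))) r

/-- The words counted by `cnt`. -/
def lst (t : LTr) : ℕ → List Lt → List (List Lt)
  | 0, w => [w]
  | r + 1, w =>
    (cond (t.hit (L0 :: w)) [] (lst t r (L0 :: w)) ++ cond (t.hit (L1 :: w)) [] (lst t r (L1 :: w))) ++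
    (cond (t.hit (L2 :: w)) [] (lst t r (L2 :: w)) ++ cond (t.hit (L3 :: w)) [] (lst t r (L3 :: w)))

lemma lst_length (t : LTr) (r : ℕ) (w) : (lst t r w).length = cnt t r w := by
  induction r generalizing w with
  | zero => rfl
  | succ r ih =>
    have e : cnt t (r + 1) w =
      (Bool.rec (motive := fun _ => ℕ) (cnt t r (L0 :: w)) 0 (t.hit (L0 :: w)) : ℕ) +
      ((Bool.rec (motive := fun _ => ℕ) (cnt t r (L1 :: w)) 0 (t.hit (L1 :: w)) : ℕ) +
      ((Bool.rec (motive := fun _ => ℕ) (cnt t r (L2 :: w)) 0 (t.hit (L2 :: w)) : ℕ) +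
      (Bool.rec (motive := fun _ => ℕ) (cnt t r (L3 :: w)) 0 (t.hit (L3 :: w)) : ℕ))) := rfl
    rw [e]
    simp only [lst, List.length_append, ← ih, add_assoc]
    cases t.hit (L0 :: w) <;> cases t.hit (L1 :: w) <;> cases t.hit (L2 :: w) <;>
      cases t.hit (L3 :: w) <;> rfl

lemma nrm_tail (t : LTr) (a b : List Lt) (h : nrm t (a ++ b) = true) : nrm t b = true := by
  induction a with
  | nil => exact h
  | cons l a ih =>
    simp only [List.cons_append, nrm, Bool.and_eq_true] at h
    exact ih h.2

lemma mem_lst (t : LTr) (r : ℕ) (a w : List Lt) (hr : a.length = r) (h : nrm t (a ++ w) = true) :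
    a ++ w ∈ lst t r w := by
  induction r generalizing a w with
  | zero =>
    rw [List.length_eq_zero_iff] at hr
    subst hr; simp [lst]
  | succ r ih =>
    obtain ⟨b, l, rfl⟩ : ∃ b l, a = b ++ [l] := by
      rcases List.eq_nil_or_concat a with rfl | ⟨b, l, h⟩
      · simp at hr
      · exact ⟨b, l, by simpa using h⟩
    have hb : b.length = r := by simpa using hr
    rw [List.append_assoc, List.singleton_append] at h ⊢
    have h1 := ih b (l :: w) hb h
    have h2 := nrm_tail t _ _ h
    simp only [nrm, Bool.and_eq_true, Bool.not_eq_true'] at h2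
    have h3 := h2.1
    simp only [lst, List.mem_append]
    cases l
    · left; left; rw [h3]; exact h1
    · left; right; rw [h3]; exact h1
    · right; left; rw [h3]; exact h1
    · right; right; rw [h3]; exact h1

end KMLevel

namespace KMLevel

attribute [local instance 100] LieRing.ofAssociativeRing

open Lt

/-- Recipes for elements of the ideal. -/
def recs : List (ℕ × ℕ × List ℕ) := [
  (0, 11000, [2100000100001]),
  (1, 12000, [2100000100001]),
  (1, 13000, [2100000100001]),
  (11, 13010, [2100000100001]),
  (23, 13200, [2100000100001]),
  (239, 13300, [2100000100001]),
  (719, 13310, [2100000100001]),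
  (10079, 13311, [2100000100001]),
  (40319, 13330, [2100000100001]),
  (725759, 13331, [2100000100001]),
  (3628799, 13332, [2100000100001]),
  (0, 131010, [3060000100010, 7090001300001]),
  (0, 132100, [3060000100010, 3090001300001]),
  (0, 133210, [2040000100010, 2070001300001]),
  (0, 133211, [19040000100010, 7070001300001, 15050000100011]),
  (0, 133230, [13050000100011, 7070001300001, 9060000100012]),
  (0, 1300100, [3120000100100, 6150013000001]),
  (0, 1321100, [18100000100100, 54160013300001, 96130001300010, 86110000100110, 18140001300011,
    138150013200001]),
  (0, 1330110, [10110000100110, 7060001300001]),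
  (0, 1332010, [3100000100100, 2160013300001]),
  (0, 1332200, [6110000100110, 7160013300001, 2110000100101]),
  (0, 1332210, [55100000100100, 19160013300001, 54110000100110, 19110000100101, 54120000100120,
    30120000100111, 6120000100102, 32050000100010]),
  (0, 1332211, [19110000100110, 19080001300001, 37110000100101, 37120000100120, 18120000100111,
    19120000100102, 19130000100130, 24130000100121, 12130000100112, 20060000100011]),
  (0, 1332320, [20120000100111, 3080001300001, 30120000100102, 40130000100121, 7130000100112,
    18130000100103, 20140000100131, 15140000100122, 7140000100113]),
  (0, 1332330, [19130000100130, 3080001300001, 6130000100121, 14130000100112, 18130000100103,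
    12140000100131, 28140000100122, 14150000100132, 7150000100123]),
  (0, 1311010, [7120000100010, 6240013200001, 8200000100110, 6230001300011, 12230013100001]),
  (0, 13201100, [21200000101100, 6090001300001, 19230001300110, 6230001300101, 13240013200010,
    7250132100001, 13240132000001]),
  (0, 13220100, [12190000101000, 24260133100001, 25200000101100, 24200000101010, 24260013300011,
    48250133000001, 6080000100010, 60230001300110, 24230001300101, 12210000101200,
    38210000101110, 31240001300120, 9240001300111, 16240001300102, 30240013200010,
    36260132200001]),
  (0, 13301110, [91200000101010, 13020001300001, 18200000101001, 21210000101110, 24210000101101,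
    61210000101020, 25210000101011, 73270013300012, 37250133000001]),
  (0, 13322010, [40200000101110, 6100001300001, 36200000101101, 61200000101020, 19200000101011,
    18200000101002, 42260133200001, 2070000100010]),
  (0, 13320200, [7200000101000, 6290133300001, 6210000101100, 7210000101010, 2210000101001, 7280133200001,
    7160000100110, 3160000100101]),
  (0, 13321200, [319200000101000, 318290133300001, 318210000101100, 637210000101010, 318220000101200,
    212220000101101, 319220000101020, 107220000101011, 106220000101002, 319280133200001,
    6010000100001, 32100000100011]),
  (0, 13323100, [7210000101100, 6190013300001, 18210000101010, 6210000101001, 13220000101200,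
    12220000101110, 19220000101101, 36220000101020, 18220000101011, 7220000101002,
    7230000101300, 2230000101210, 15230000101201, 10230000101120, 3230000101111,
    11230000101102, 18230000101030, 10230000101021, 2230000101012, 7230000101003]),
  (0, 13322200, [270220000101010, 55130001300001, 54220000101001, 54230000101110, 163230000101101,
    378230000101020, 162230000101011, 55230000101002, 55240000101210, 127240000101201,
    54240000101120, 19240000101111, 91240000101102, 162240000101030, 90240000101021,
    18240000101012, 55240000101003, 19000000100001, 180290133200001, 20170000100101]),
  (0, 13323110, [12230000101200, 3130001300001, 13230000101110, 4230000101101, 25230000101020,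
    13230000101011, 24240000101300, 25240000101210, 8240000101201, 13240000101120,
    12240000101102, 31240000101030, 19240000101021, 7240000101012, 6240000101003,
    13250000101310, 4250000101301, 4250000101211, 8250000101202, 7250000101130, 3250000101121,
    2250000101112, 6250000101103, 9250000101031, 5250000101022, 13290133200001]),
  (0, 13323120, [180240000101210, 7130001300001, 324240000101201, 240240000101120, 145240000101111,
    144240000101102, 270240000101030, 379240000101021, 163240000101012, 54240000101003,
    360250000101310, 648250000101301, 480250000101220, 289250000101211, 288250000101202,
    379250000101130, 163250000101121, 54250000101112, 270250000101103, 487250000101031,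
    271250000101022, 55250000101013, 240260000101320, 145260000101311, 144260000101302,
    343260000101230, 18260000101221, 90260000101212, 162260000101203, 91260000101131,
    19260000101122, 54260000101113, 127260000101032, 55260000101023, 258290133200001,
    92110000100011]),
  (0, 13323220, [60250000101211, 3130001300001, 72250000101202, 80250000101121, 13250000101112,
    36250000101103, 90250000101031, 55250000101022, 19250000101013, 120260000101311,
    144260000101302, 160260000101221, 25260000101212, 72260000101203, 55260000101131,
    19260000101122, 18260000101113, 73260000101032, 37260000101023, 80270000101321,
    13270000101312, 36270000101303, 67270000101231, 6270000101222, 18270000101213,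
    13270000101132, 19270000101033, 24290133200001]),
  (0, 13323320, [31260000101320, 2130001300001, 20260000101311, 144260000101302, 31260000101230,
    20260000101221, 12260000101212, 60260000101203, 20260000101131, 33260000101122,
    55260000101032, 31260000101023, 61270000101330, 40270000101321, 24270000101312,
    120270000101303, 40270000101231, 65270000101222, 31270000101132, 7270000101123,
    43270000101033, 20280000101331, 33280000101322, 3280000101232, 6280000101223,
    7280000101133]),
  (0, 13323321, [60270000101330, 3130001300001, 21270000101312, 85270000101303, 21270000101222,
    13270000101213, 21270000101132, 12270000101123, 24270000101033, 41280000101322,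
    25280000101313, 41280000101232, 24280000101223, 12280000101133, 21290000101332,
    12290000101323, 42290133200001]),
  (0, 13100100, [3270000100100, 11380131000001]),
  (0, 13320110, [19250000100100, 7220001300001, 541260000100110, 54260000100101, 11090000100001]),
  (0, 12100100, [6240000100010, 60400130000001, 42380000101100, 55380000101010, 20380000101001,
    13390001200100, 7400012100010]),
  (2, 13201010, [5240000100010, 121410132100001, 324290000100110, 121410013200011, 241400132000001,
    11150000100001]),
  (0, 13323101, [6190000100010, 30380133200001, 2080000100001]),
  (8, 13323111, [30190000100010, 300380133200001, 40200000100011, 5080000100001]),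
  (0, 132101100, [181380000110100, 37050001300001, 541440013300110, 180440013300101, 180441330100001,
    313410001301100, 721410001301010, 720440133000011, 360431330000001, 261390000111100,
    541390000111010, 163280001300011, 324420001301200, 181420001301110, 66420001301101,
    361420001301020, 43420001301011, 120420001301002, 85420013200100, 121440132200010,
    121441322000001, 1201430013200110, 204430013200101, 241430132100010, 121441321100001,
    4270000100110, 79440132100011, 241431321000001]),
  (0, 133220200, [101370000111110, 7170001300001, 61370000111101, 348370000111020, 132370000111011,
    252370000111002, 121370000110210, 144370000110201, 145370000110120, 37370000110102,
    217370000110030, 145370000110021, 36370000110012, 108370000110003, 216451332300001,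
    360420133200010, 90300000101010, 126430133200011, 612441332200001, 12230000100100,
    43240000100110, 6240000100101]),
  (0, 133222100, [2700360000111100, 90290013300001, 8101360000111010, 810360000111001, 5400360000110200,
    901360000110110, 8370360000110101, 18631360000110020, 7021360000110011, 6210360000110002,
    9990370000113000, 270370000112100, 1350370000112010, 4050370000112001, 9451370000111200,
    3871370000111110, 811370000111101, 8640370000111020, 2430370000111011, 19171370000110300,
    9091370000110210, 5671370000110201, 4321370000110120, 2431370000110111, 4320370000110030,
    810370000110021, 1350380000113100, 541380000113010, 2430380000113001, 1891380000112200,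
    2281380000112110, 810380000112101, 5760380000112020, 1890380000112011, 5131380000111300,
    4021380000111210, 811380000111201, 1440380000111120, 270380000111111, 4320380000111030,
    1350380000111021, 5761380000110310, 2431380000110301, 2881380000110220, 1351380000110211,
    271380000110121, 810380000110031, 810451332300001, 865120000100010, 4500350133200001,
    162140000100011, 1153310000101200, 2769310000101110, 720430133200011, 2056310000101020,
    848310000101011, 1980440133200012, 120441332200001]),
  (8, 133231020, [6678370000112010, 43180001300001, 882370000112001, 841370000111200, 1219370000111110,
    3403370000111101, 7308370000111020, 3024370000111011, 1261370000111002, 1891370000110300,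
    5797370000110210, 6175370000110201, 2646370000110120, 883370000110111, 4411370000110102,
    7938370000110030, 4410370000110021, 882370000110012, 2647370000110003, 630380000113100,
    6804380000113010, 3738380000112200, 4201380000112110, 3781380000112101, 5670380000112020,
    1890380000112011, 1891380000112002, 630380000111210, 1891380000110310, 1302390000113200,
    2101390000113110, 2269390000113101, 3402390000113020, 1134390000113011, 1135390000113002,
    2017390000112300, 1470390000112210, 630390000111310, 1807451332300001, 5587350133200001,
    728240000100110, 378430133200011, 15120000100010, 91030000100010, 253130000100011]),
  (0, 133221200, [108541380000110200, 12060180001300001, 72361380000110110, 96481380000110101,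
    108540380000110020, 36180380000110011, 36181380000110002, 108541390000113000,
    180900390000112100, 253261390000112010, 36180390000112001, 36180390000111110,
    12060390000111101, 36181390000110210, 12061390000110201, 108540400000113100,
    144721400000113010, 24120400000113001, 48240400000112110, 16080400000112101,
    24120400000111210, 8040400000111201, 72360471332300001, 7236140000100010,
    36181370133200001, 1609160000100011, 2413330000101200, 50652330000101110,
    23316330000101020, 9648330000101011, 24120460133200012, 24121461332200001, 13010000100001,
    267150000100011]),
  (0, 133232110, [270390000113100, 19170001300001, 271390000113010, 163390000113001, 54390000112200,
    55390000112110, 162390000112101, 163390000112020, 163390000112011, 54390000112002,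
    163390000111300, 127390000111210, 126390000111201, 91390000111120, 18390000111111,
    90390000111102, 55390000111030, 91390000111021, 19390000111012, 54390000111003,
    271390000110310, 163390000110220, 55390000110130, 378400000113200, 163400000113110,
    486400000113101, 703400000113020, 487400000113011, 162400000113002, 162400000112300,
    91400000112210, 630400000112201, 343400000112120, 90400000112111, 450400000112102,
    595400000112030, 451400000112021, 91400000112012, 270400000112003, 163400000111310,
    55400000111220, 54400000111130, 217400000110320, 109400000110230, 162410000113300,
    19410000113210, 378410000113201, 199410000113120, 54410000113111, 270410000113102,
    379410000113030, 271410000113021, 55410000113012, 162410000113003, 19410000112310,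
    18410000112220, 54410000112130, 37410000111320, 55410000110330, 217430133200010,
    613461332300001, 97440133200011, 15130000100010]),
  (29, 133232101, [1080400000112200, 6170001300001, 541400000112110, 360400000112101, 1513400000112020,
    1081400000112011, 2160400000111300, 1200400000111201, 1189400000111120, 1080400000111102,
    2377400000111030, 1621400000111021, 541400000111012, 540400000111003, 810400000110310,
    2160400000110301, 487400000110220, 1080400000110211, 2160400000110202, 1783400000110130,
    541400000110121, 540400000110112, 1620400000110103, 2161400000110031, 1081400000110022,
    361410000113101, 1296410000113020, 1081410000112210, 841410000112201, 217410000112120,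
    648410000112030, 487410000111310, 163410000111220, 162410000111130, 649410000110320,
    325410000110230, 541420000113210, 421420000113201, 109420000113120, 324420000113030,
    55420000112310, 180420000112301, 54420000112220, 162420000112130, 109420000111320,
    163420000110330, 216440133200010, 180471332300001, 62140000100010, 41000000100001]),
  (2, 133232120, [270410000113110, 18170001300001, 90410000113101, 324410000113020, 216410000113011,
    108410000113002, 541410000112300, 271410000112210, 451410000112201, 432410000112120,
    108410000112111, 217410000112102, 918410000112030, 594410000112021, 270410000112012,
    55410000112003, 811410000111310, 991410000111301, 108410000111220, 289410000111211,
    685410000111202, 702410000111130, 306410000111121, 91410000111112, 487410000111103,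
    900410000111031, 504410000111022, 108410000111013, 325410000110320, 757410000110311,
    1189410000110302, 324410000110230, 109410000110221, 541410000110212, 973410000110203,
    540410000110131, 108410000110122, 325410000110113, 756410000110032, 324410000110023,
    648420000113300, 271420000113210, 342420000113201, 325420000113120, 324420000113102,
    811420000113030, 487420000113021, 163420000113012, 162420000113003, 379420000112310,
    234420000112301, 180420000112211, 360420000112202, 271420000112130, 91420000112121,
    90420000112112, 270420000112103, 361420000112031, 181420000112022, 163430000113310,
    162430000113301, 108430000113211, 216430000113202, 163430000113130, 55430000113121,
    54430000113112, 162430000113103, 217430000113031, 109430000113022, 108471332300001,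
    433440133200010, 97450133200011, 37270000100120, 9270000100111, 73460133200012,
    17150000100011]),
  (0, 133233120, [301420000113120, 2170001300001, 680420000113111, 780420000113102, 702420000113030,
    4458420000113021, 1003420000113012, 162420000113003, 300420000112310, 300420000112301,
    980420000112211, 1080420000112202, 835420000112130, 127420000112121, 54420000112112,
    786420000112103, 984420000112031, 1045420000112022, 313420000112013, 300420000111320,
    1280420000111311, 1380420000111302, 1147420000111230, 1455420000111221, 606420000111212,
    1194420000111203, 865420000111131, 277420000111122, 312420000111113, 1159420000111032,
    571420000111023, 1153420000110330, 1969420000110321, 1032420000110312, 1548420000110303,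
    1639420000110231, 258420000110222, 774420000110213, 517420000110132, 775420000110033,
    163430000113310, 979430000113301, 462430000113220, 1606430000113211, 990430000113202,
    18430000113130, 618430000113121, 162430000113112, 810430000113103, 4062430000113031,
    811430000113022, 163430000113013, 246430000112320, 1390430000112311, 774430000112302,
    1423430000112230, 2855430000112221, 450430000112212, 810430000112203, 451430000112131,
    91430000112122, 270430000112113, 631430000112032, 271430000112023, 577430000111330,
    1381430000111321, 277430000111231, 1933430000110331, 150440000113320, 758440000113311,
    486440000113302, 739440000113230, 1419440000113221, 270440000113212, 486440000113203,
    271440000113131, 55440000113122, 162440000113113, 379440000113032, 163440000113023,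
    93440000112321, 276440000112231, 277440000111331, 54440133200010, 486390133200001]),
  (0, 133233220, [91430000113220, 2170001300001, 60430000113211, 300430000113202, 181430000113130,
    20430000113121, 180430000113103, 306430000113031, 331430000113022, 127430000113013,
    31430000112320, 120430000112311, 360430000112302, 121430000112230, 80430000112221,
    60430000112212, 240430000112203, 103430000112131, 91430000112122, 42430000112113,
    289430000112032, 157430000112023, 61430000111330, 140430000111321, 120430000111312,
    300430000111303, 199430000111231, 30430000111222, 138430000111213, 133430000111132,
    25430000111123, 187430000111033, 217430000110331, 120430000110322, 216430000110313,
    25430000110232, 72430000110223, 73430000110133, 91440000113320, 54440000113311,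
    378440000113302, 37440000113230, 208440000113221, 12440000113212, 216440000113203,
    78440000113131, 55440000113122, 54440000113113, 217440000113032, 109440000113023,
    73440000112330, 172440000112321, 25440000112312, 180440000112303, 271440000112231,
    30440000112222, 90440000112213, 61440000112132, 91440000112033, 121440000111331,
    37450000113330, 92450000113321, 108450000113303, 139450000113231, 18450000113222,
    54450000113213, 37450000113132, 55450000113033, 18440133200010, 12450133200011]),
  (0, 133233221, [90440000113320, 3170001300001, 14440000113311, 343440000113302, 54440000113230,
    23440000113221, 49440000113212, 145440000113203, 59440000113131, 26440000113122,
    31440000113113, 162440000113032, 90440000113023, 78440000112330, 2440000112321,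
    25440000112312, 121440000112303, 35440000112231, 50440000112222, 7440000112213,
    30440000112132, 6440000112123, 42440000112033, 11440000111331, 74440000111322,
    18440000111313, 2440000111232, 7440000111223, 6440000111133, 162450000113330,
    15450000113321, 91450000113312, 307450000113303, 51450000113231, 94450000113222,
    43450000113213, 90450000113132, 18450000113123, 126450000113033, 27450000112331,
    118450000112322, 19450000112313, 10450000112232, 31450000112223, 30450000112133,
    43451333000001, 40460000113322, 61460000113313, 34460000113232, 19460000113223,
    60460000113133, 29460000112323, 14460000112233, 15460000111333, 180440133200010,
    82450133200011, 209460133200012, 69390133200001]),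
  (0, 133233222, [60450000113321, 2170001300001, 200450000113312, 180450000113303, 211450000113231,
    71450000113222, 90450000113213, 341450000113132, 121450000113123, 307450000113033,
    31450000112331, 110450000112322, 270450000112313, 161450000112232, 60450000112223,
    199450000112133, 20450000111332, 240450000111323, 43450000111233, 126450000110333,
    24460000113331, 45460000113322, 73460000113313, 63460000113232, 30460000113223,
    36460000113133, 51460000112332, 42460000112323, 79451333000001, 61470000113323,
    78470000113233, 27470000112333, 55471332300001, 120450133200011, 376460133200012,
    96470133200013]),
  (2, 133232111, [721460000113101, 37130001300001, 3565460000113020, 2268460000113011, 324460000113002,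
    1081460000112300, 1081460000112210, 1801460000112201, 1188460000112120, 324460000112111,
    1189460000112102, 864460000112030, 2592460000112021, 1080460000112012, 433460000112003,
    2161460000111310, 2881460000111301, 2052460000111220, 1045460000111211, 2413460000111202,
    2376460000111130, 1008460000111121, 361460000111112, 1729460000111103, 3060460000111031,
    1692460000111022, 324460000111013, 1944460000110320, 2269460000110311, 3565460000110302,
    2592460000110230, 325460000110221, 1621460000110212, 2917460000110203, 1620460000110131,
    324460000110122, 973460000110113, 2268460000110032, 972460000110023, 1944470000113300,
    1621470000113210, 685470000113201, 649470000113120, 649470000113102, 4861470000113030,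
    972470000113021, 324470000113012, 325470000113003, 1405470000112310, 469470000112301,
    3456470000112220, 361470000112211, 721470000112202, 540470000112130, 180470000112121,
    181470000112112, 541470000112103, 720470000112031, 360470000112022, 1620470000111320,
    324470000111230, 2268470000110330, 757480000113310, 325480000113301, 1728480000113220,
    217480000113211, 433480000113202, 324480000113130, 108480000113121, 109480000113112,
    325480000113103, 432480000113031, 216480000113022, 108480000112320, 325480000112230,
    324480000111330, 217521332300001, 1945490133200010, 732500133200011, 433320000100120,
    412320000100111, 397510133200012, 185200000100011, 19040000100001]),
  (0, 133232310, [1261470000113111, 18130001300001, 1261470000113102, 1945470000113030, 7237470000113021,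
    1404470000113012, 325470000113003, 1261470000112211, 1261470000112202, 648470000112130,
    109470000112121, 109470000112112, 973470000112103, 2269470000112031, 1188470000112022,
    324470000112013, 1261470000111311, 1261470000111302, 1512470000111230, 2268470000111221,
    613470000111212, 1189470000111203, 828470000111131, 252470000111122, 325470000111113,
    1116470000111032, 540470000111023, 1944470000110330, 3456470000110321, 865470000110312,
    1297470000110303, 2376470000110231, 217470000110222, 649470000110213, 432470000110132,
    648470000110033, 324480000113310, 756480000113301, 325480000113220, 2413480000113211,
    1981480000113202, 324480000113130, 757480000113121, 325480000113112, 1621480000113103,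
    5725480000113031, 1620480000113022, 324480000113013, 108480000112320, 1981480000112311,
    1549480000112302, 2484480000112230, 4428480000112221, 901480000112212, 1621480000112203,
    900480000112131, 180480000112122, 541480000112113, 1260480000112032, 540480000112023,
    972480000111330, 2160480000111321, 432480000111231, 3024480000110331, 1117490000113311,
    973490000113302, 1296490000113230, 2196490000113221, 541490000113212, 973490000113203,
    540490000113131, 108490000113122, 325490000113113, 756490000113032, 324490000113023,
    144490000112321, 433490000112231, 432490000111331, 162490133200010, 973440133200001,
    739500133200011, 1308510133200012, 217330000100130, 553330000100121, 478330000100112,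
    216520133200013]),
  (1, 132010010, [421460000101100, 15170001300001, 420580013200110, 141580013200101, 84570132000010,
    3160000100010]),
  (0, 133120100, [9450000101000, 80591332100001, 241460000101100, 240460000101010, 80590133200011,
    120581332000001, 19330001300001, 115400000100110, 102400000100101, 121550001301200,
    52550001301110, 57550001301101, 577580013300120, 149580013300111, 228580013300102,
    72570133100010, 286591331200001]),
  (0, 132210100, [541410000100100, 2700601332000001, 2881560001301100, 8101590013300110, 2700590013300101,
    540601331100001, 4321530000110100, 4860530000110010, 3240600133100011, 3780591331000001,
    841540000111100, 2881540000111010, 1441540000111001, 3601540000110200, 720540000110101,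
    11341600013300120, 541600013300111, 3780600013300102, 1621601330200001, 6480590133000011,
    1620591330100001, 193320000100010, 1458420000100110, 180420000100101, 3456570001301200,
    7572570001301110, 1320570001301101, 4897570001301020, 1081570001301011, 12960600133000012,
    1620581330000001, 1440550000112100, 4572550000112010, 1441550000112001, 2880550000111200,
    4738550000111110, 260550000111101, 8041550000111020, 3601550000111011, 2917440001300012,
    2593580001301300, 1315580001301210, 1261580001301201, 4249580001301120, 1801580001301111,
    253580001301102, 1405580001301030, 541580001301021, 864580001301012, 1620580001301003,
    4212600132300010, 26460601323000001, 6589440013200001, 1782580013200110, 3492580013200101,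
    9180590132200010, 6048601322100001]),
  (0, 133011110, [126420000100110, 6190001300001, 43420000100101, 37570001301200, 121570001301110,
    25570001301101, 324600013300120, 60600013300111, 181600013300102, 109590133100010,
    91611331200001, 241600133100011, 181601331100001, 253540000111010, 84540000111001,
    127540000110110, 12540000110101, 379540000110020, 121540000110011, 361610133100012,
    91591331000001, 127550000112010, 42550000112001, 99550000111110, 26550000111101,
    186550000111020, 110550000111011, 270550000111002, 43550000110210, 7550000110201,
    127550000110120, 51550000110111, 211550000110102, 486610013300130, 210610013300121,
    271610013300112, 271610013300103, 91611330300001, 217580133000010, 121590133000011,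
    181601330200001, 721600133000012, 91591330100001]),
  (0, 133201200, [319410000100100, 9540621332200001, 288330000100010, 5779420000100110, 9540610133200011,
    18480611332100001, 1920480000101100, 4831480000101010, 954480000101001, 12961490000101200,
    9180490000101110, 17881490000101101, 46800490000101020, 18480490000101011,
    18480620133200012, 9090601332000001, 580320000100011]),
  (0, 131100100, [3380000100100, 30631311000001]),
  (0, 132101010, [20370000100010, 300641322000001, 61630013200110, 300630013200101, 720630132100010,
    300641321100001, 40470000100110, 600640132100011, 600631321000001, 2190000100001]),
  (52, 133201110, [1200360000100010, 12720380001300001, 99601450000100110, 534240640133200011,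
    481920641332100001, 24960510000101100, 112081510000101010, 38160510000101001,
    244801520000101200, 78000520000101110, 48001520000101101, 1409760520000101020,
    532800520000101011, 583680650133200012, 246960631332000001, 19200350000100011,
    27020000100001]),
  (4, 133220110, [9330000100010, 1441651332200001, 25440000100100, 80450000100110, 10200000100001]),
  (0, 133233121, [2290000100011, 6530133200001, 3300000100012]),
  (0, 130010100, [3290000100010, 30681310000001, 60680001301100, 81680001301010, 30680001301001,
    10680130100010, 18681301000001, 68650000110100, 285680013000110, 108680013000101,
    20670130000010, 26681300100001]),
  (0, 120010100, [3280000100010, 61691210000001, 121690001201100, 160690001201010, 61690001201001,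
    12680012000100, 210691201000001, 51690012000110, 30690012000101, 30691200100001])]

/-- Trie of the leading words. -/
def LT : LTr :=
  (.n .e (.n (.n (.n .f .e .e .e) .e .e .e) .e .e .e) (.n (.n (.n .f (.n (.n .e (.n (.n .f .e .e
    .e) .e .e .e) .e .e) .e .e .e) .e .e) .e .e .e) (.n (.n (.n .e (.n (.n .f .e .e .e) .e .e .e)
    .e .e) .e .e .e) .e .e .e) .e .e) (.n (.n (.n .f (.n (.n .f (.n (.n .f .e .e .e) .e .e .e) .e
    .e) .e .e .e) .e .e) (.n .f .e .e .e) .e .e) (.n (.n (.n .e (.n (.n .f .e .e .e) .e .e .e) .e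
    .e) (.n .f .e .e .e) .e .e) (.n (.n (.n .e (.n (.n .f .e .e .e) .e .e .e) .e .e) (.n .f .e .e
    .e) .e .e) .e .e .e) .e .e) (.n (.n .f (.n (.n (.n .e (.n .f .e .e .e) .e .e) (.n .f .e .e .e)
    .e .e) (.n (.n .f .e .e .e) .e .e .e) .e .e) .e .e) (.n (.n .f (.n (.n .e (.n .f .e .e .e) .e
    .e) (.n (.n .f .e .e .e) .e .e .e) .e .e) .e .e) (.n (.n .f .e .e .e) .e .e .e) .e .e) (.n (.n
    .e (.n (.n .f .e .e .e) .e .e .e) .e .e) (.n (.n .e (.n (.n .f .e .e .e) .e .e .e) .e .e) .e .e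
    .e) .e .e) .e) (.n (.n .f (.n .e (.n .f (.n .f (.n .f .e .e .e) .e .e) .e .e) .e .e) .e .e) (.n
    .f .f (.n (.n .e (.n (.n .f .e .e .e) .e .e .e) .e .e) .e .e .e) .e) (.n (.n .e (.n .f (.n .f
    (.n .f .e .e .e) .e .e) (.n (.n .f .e .e .e) .e .e .e) .e) (.n (.n .f .e .e .e) .e .e .e) .e)
    (.n .f .f (.n (.n .f .e .e .e) .e .e .e) .e) (.n (.n .f (.n .f (.n .f .e .e .e) .e .e) (.n (.n
    .f .e .e .e) .e .e .e) .e) (.n .f .f (.n (.n .f .e .e .e) .e .e .e) .e) (.n (.n .f .e .e .e)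
    (.n (.n .f .e .e .e) .e .e .e) .e .e) .e) (.n .f (.n (.n .f .f (.n .f .e .e .e) .e) (.n .f .f
    .e .e) (.n .f .e .e .e) .e) (.n .f (.n (.n .e .f .e .e) (.n .f .f .e .e) (.n .f .e .e .e) .e)
    (.n .f .e .e .e) (.n .e (.n .f .e .e .e) .e .e)) (.n .f (.n .e .e (.n .f .f .e .e) .e) (.n .f
    .f (.n .f .f .f .e) .e) .e))) (.n .f .f .f .e))))

lemma LT_eq : LT = LTr.build (recs.map fun r => ldw r.2.1) := by decide +kernel

lemma runC_recs : runC (WL 11 (WT 0) []) recs = true := by decide +kernel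

lemma W11_isz : (WT 11).isz = true := by decide +kernel

lemma cnt_LT : (cnt LT 4 [] = 245 ∧ cnt LT 5 [] = 936 ∧ cnt LT 6 [] = 3568) ∧
    cnt LT 7 [] = 13568 ∧ cnt LT 8 [] = 51577 := by decide +kernel

end KMLevel

namespace KMLevel

attribute [local instance 100] LieRing.ofAssociativeRing

open Lt

lemma recs_good : ∀ r ∈ recs, Good (ldw r.2.1) :=
  runC_sound recs _ (WL_mem 11 0 [] (by simp)) runC_recs

lemma LT_good (w : List Lt) (h : ¬ nrm LT w = true) :
    ∃ a m b, w = a ++ (m ++ b) ∧ Good m := by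
  obtain ⟨a, b, rfl, hb⟩ := nrm_false _ _ h
  rw [LT_eq] at hb
  obtain ⟨m, hm, c, rfl⟩ := LTr.hit_build _ _ hb
  obtain ⟨r, hr, rfl⟩ := List.mem_map.1 hm
  exact ⟨a, _, c, rfl, recs_good r hr⟩

/-- The normal words. -/
def NW (n : ℕ) : List (List Lt) := lst LT n []

lemma reduce_LT (w : List Lt) :
    word w ∈ I ⊔ Submodule.span ℚ {t | ∃ u ∈ NW w.length, t = word u} := by
  have key := reduce (fun u => nrm LT u = true) LT_good w
  revert key
  suffices h : Submodule.span ℚ {t | ∃ u : List Lt, u.length = w.length ∧ nrm LT u = true ∧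
      t = word u} ≤ Submodule.span ℚ {t | ∃ u ∈ NW w.length, t = word u} from
    fun key => sup_le_sup_left h I key
  refine Submodule.span_mono ?_
  rintro _ ⟨u, h1, h2, rfl⟩
  refine ⟨u, ?_, rfl⟩
  have := mem_lst LT u.length u [] rfl (by simpa using h2)
  rw [List.append_nil] at this
  rwa [← h1]

/-- `S` is spanned by at most `d` elements, up to inclusion. -/
def Sp {M : Type*} [AddCommGroup M] [Module ℚ M] (S : Submodule ℚ M) (d : ℕ) : Prop :=
  ∃ s : Finset M, s.card ≤ d ∧ S ≤ Submodule.span ℚ (s : Set M)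

section Sp
variable {M N : Type*} [AddCommGroup M] [Module ℚ M] [AddCommGroup N] [Module ℚ N]

lemma Sp.finrank {S : Submodule ℚ M} {d : ℕ} (h : Sp S d) : Module.finrank ℚ S ≤ d := by
  obtain ⟨s, h1, h2⟩ := h
  have : Module.Finite ℚ (Submodule.span ℚ (s : Set M)) :=
    Module.Finite.span_of_finite ℚ s.finite_toSet
  exact (Submodule.finrank_mono h2).trans ((finrank_span_finset_le_card s).trans h1)

lemma Sp.mono {S S' : Submodule ℚ M} {d : ℕ} (h : Sp S d) (h' : S' ≤ S) : Sp S' d := by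
  obtain ⟨s, h1, h2⟩ := h
  exact ⟨s, h1, h'.trans h2⟩

lemma Sp.sup {S S' : Submodule ℚ M} {d d' : ℕ} (h : Sp S d) (h' : Sp S' d') :
    Sp (S ⊔ S') (d + d') := by
  classical
  obtain ⟨s, h1, h2⟩ := h
  obtain ⟨s', h1', h2'⟩ := h'
  refine ⟨s ∪ s', (Finset.card_union_le _ _).trans (add_le_add h1 h1'), ?_⟩
  rw [Finset.coe_union, Submodule.span_union]
  exact sup_le_sup h2 h2'

lemma Sp.map {S : Submodule ℚ M} {d : ℕ} (h : Sp S d) (f : M →ₗ[ℚ] N) : Sp (S.map f) d := by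
  classical
  obtain ⟨s, h1, h2⟩ := h
  refine ⟨s.image f, Finset.card_image_le.trans h1, ?_⟩
  rw [Finset.coe_image, ← Submodule.map_span]
  exact Submodule.map_mono h2

lemma Sp.list {α : Type*} (L : List α) (f : α → M) :
    Sp (Submodule.span ℚ {t | ∃ a ∈ L, t = f a}) L.length := by
  classical
  refine ⟨(L.map f).toFinset, (List.toFinset_card_le _).trans (by simp), ?_⟩
  refine Submodule.span_mono ?_
  rintro _ ⟨a, ha, rfl⟩
  simp only [List.coe_toFinset, List.mem_map, Set.mem_ofPred_eq]
  exact ⟨a, ha, rfl⟩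
end Sp

lemma EE_upper (n : ℕ) : Module.finrank ℚ (EE GP.gr n) ≤ cnt LT n [] := by
  rw [EE_eq, ← lst_length]
  refine Sp.finrank ((Sp.list (NW n) fun u => Psi (word u)).mono ?_)
  rw [Submodule.map_le_iff_le_comap]
  refine Submodule.span_le.2 ?_
  rintro _ ⟨w, rfl, rfl⟩
  obtain ⟨x, hx, y, hy, e⟩ := Submodule.mem_sup.1 (reduce_LT w)
  rw [← e]
  change Psi (x + y) ∈ Submodule.span ℚ {t | ∃ a ∈ NW w.length, t = Psi (word a)}
  rw [map_add, (Psi_eq_zero x).2 hx, zero_add]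
  have : Submodule.span ℚ {t | ∃ u ∈ NW w.length, t = word u} ≤
      (Submodule.span ℚ {t | ∃ a ∈ NW w.length, t = Psi (word a)}).comap Psi.toLinearMap := by
    refine Submodule.span_le.2 ?_
    rintro _ ⟨u, hu, rfl⟩
    exact Submodule.subset_span ⟨u, hu, rfl⟩
  exact this hy

end KMLevel

namespace KMLevel

attribute [local instance 100] LieRing.ofAssociativeRing

open Lt

lemma E2_Tn (n : ℕ) : Tn n ≤ (Tn n).comap E2 := by
  refine Submodule.span_le.2 ?_
  rintro _ ⟨w, rfl, rfl⟩
  change E2 (word w) ∈ Tn w.length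
  induction w with
  | nil => rw [word_nil, E2_one]; exact Submodule.zero_mem _
  | cons l w ih =>
    rw [word_cons, Tr.E2_Xmul, List.length_cons, add_comm]
    refine Submodule.add_mem _ (Tn_mul (X_mem_Tn l) ih) ?_
    have hw : word w ∈ Tn w.length := word_mem_Tn rfl
    cases l
    · exact Tn_mul (X_mem_Tn _) hw
    · exact Submodule.smul_mem _ _ (Tn_mul (X_mem_Tn _) hw)
    · exact Submodule.smul_mem _ _ (Tn_mul (X_mem_Tn _) hw)
    · exact Submodule.zero_mem _

lemma lie_Tn {n : ℕ} (l : Lt) {t : T} (ht : t ∈ Tn n) : ⁅X l, t⁆ ∈ Tn (n + 1) := by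
  rw [LieRing.of_associative_ring_bracket]
  refine Submodule.sub_mem _ ?_ (Tn_mul ht (X_mem_Tn l))
  rw [add_comm]
  exact Tn_mul (X_mem_Tn l) ht

lemma W_Tn (k : ℕ) : W k ∈ Tn 4 := by
  induction k with
  | zero => exact lie_Tn L0 (lie_Tn L0 (lie_Tn L0 (X_mem_Tn L1)))
  | succ k ih => exact E2_Tn 4 ih

lemma W_zero (k : ℕ) : W (k + 11) = 0 := by
  induction k with
  | zero => rw [← ev_WT, Tr.isz_eq.1 W11_isz]; rfl
  | succ k ih =>
    have : W (k + 1 + 11) = E2 (W (k + 11)) := rfl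
    rw [this, ih, map_zero]

/-- Degree `n` part of the ideal. -/
def J (n : ℕ) : Submodule ℚ T := Submodule.span ℚ {t | ∃ (a : List Lt) (k : ℕ) (b : List Lt),
  k < 11 ∧ a.length + 4 + b.length = n ∧ t = word a * W k * word b}

lemma J_mem (a : List Lt) (k : ℕ) (b : List Lt) {n : ℕ} (h : a.length + 4 + b.length = n) :
    word a * W k * word b ∈ J n := by
  by_cases hk : k < 11
  · exact Submodule.subset_span ⟨a, k, b, hk, h, rfl⟩
  · obtain ⟨j, rfl⟩ := Nat.exists_eq_add_of_le' (not_lt.1 hk)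
    rw [W_zero]; simp

/-- Projection to degree `n`. -/
def Pn (n : ℕ) : T →ₗ[ℚ] T := ext' fun w => if w.length = n then word w else 0

lemma Pn_self (n : ℕ) {t : T} (ht : t ∈ Tn n) : Pn n t = t := by
  have : Tn n ≤ LinearMap.eqLocus (Pn n) LinearMap.id := by
    refine Submodule.span_le.2 ?_
    rintro _ ⟨w, hw, rfl⟩
    change Pn n (word w) = word w
    rw [Pn, ext'_word, if_pos hw]
  exact this ht

lemma Pn_ne {n m : ℕ} (h : m ≠ n) {t : T} (ht : t ∈ Tn m) : Pn n t = 0 := by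
  have : Tn m ≤ LinearMap.ker (Pn n) := by
    refine Submodule.span_le.2 ?_
    rintro _ ⟨w, hw, rfl⟩
    change Pn n (word w) = 0
    rw [Pn, ext'_word, if_neg (by omega)]
  exact this ht

lemma word_span (t : T) : t ∈ Submodule.span ℚ (Set.range word) := by
  have h : (Submodule.span ℚ (Set.range word)).mkQ = 0 := by
    apply lin_ext
    intro w
    simp only [LinearMap.zero_apply, Submodule.mkQ_apply, Submodule.Quotient.mk_eq_zero]
    exact Submodule.subset_span ⟨w, rfl⟩
  have := LinearMap.congr_fun h t
  simpa using this

lemma Pn_I (n : ℕ) {t : T} (ht : t ∈ I) : Pn n t ∈ J n := by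
  have key : ∀ (a : List Lt) (k : ℕ) (b : List Lt), Pn n (word a * W k * word b) ∈ J n := by
    intro a k b
    have hm : word a * W k * word b ∈ Tn (a.length + 4 + b.length) :=
      Tn_mul (Tn_mul (word_mem_Tn rfl) (W_Tn k)) (word_mem_Tn rfl)
    by_cases h : a.length + 4 + b.length = n
    · rw [Pn_self n (h ▸ hm)]
      exact J_mem a k b h
    · rw [Pn_ne h hm]; exact Submodule.zero_mem _
  have : I ≤ (J n).comap (Pn n) := by
    refine Submodule.span_le.2 ?_
    rintro _ ⟨u, k, v, rfl⟩
    change Pn n (u * W k * v) ∈ J n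
    have h1 : ∀ b : List Lt, Submodule.span ℚ (Set.range word) ≤ (J n).comap ((Pn n).comp
        ((LinearMap.mulRight ℚ (word b)).comp (LinearMap.mulRight ℚ (W k)))) := by
      intro b
      refine Submodule.span_le.2 ?_
      rintro _ ⟨a, rfl⟩
      exact key a k b
    have h2 : Submodule.span ℚ (Set.range word) ≤ (J n).comap ((Pn n).comp
        (LinearMap.mulLeft ℚ (u * W k))) := by
      refine Submodule.span_le.2 ?_
      rintro _ ⟨b, rfl⟩
      exact h1 b (word_span u)
    exact h2 (word_span v)
  exact this ht

lemma TI_le (n : ℕ) : Tn n ⊓ I ≤ J n := by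
  rintro t ⟨h1, h2⟩
  have := Pn_I n h2
  rwa [Pn_self n h1] at this

/-- Right multiples by letters. -/
def RM (S : Submodule ℚ T) : Submodule ℚ T :=
  (S.map (LinearMap.mulRight ℚ (X L0)) ⊔ S.map (LinearMap.mulRight ℚ (X L1))) ⊔
  (S.map (LinearMap.mulRight ℚ (X L2)) ⊔ S.map (LinearMap.mulRight ℚ (X L3)))

lemma Sp.RM {S : Submodule ℚ T} {d : ℕ} (h : Sp S d) : Sp (RM S) (4 * d) := by
  have := ((h.map (LinearMap.mulRight ℚ (X L0))).sup (h.map (LinearMap.mulRight ℚ (X L1)))).sup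
    ((h.map (LinearMap.mulRight ℚ (X L2))).sup (h.map (LinearMap.mulRight ℚ (X L3))))
  have e : 4 * d = d + d + (d + d) := by ring
  rw [e]; exact this

lemma mem_RM {S : Submodule ℚ T} {t : T} (ht : t ∈ S) (l : Lt) : t * X l ∈ RM S := by
  have : t * X l ∈ S.map (LinearMap.mulRight ℚ (X l)) := ⟨t, ht, rfl⟩
  cases l
  · exact Submodule.mem_sup_left (Submodule.mem_sup_left this)
  · exact Submodule.mem_sup_left (Submodule.mem_sup_right this)
  · exact Submodule.mem_sup_right (Submodule.mem_sup_left this)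
  · exact Submodule.mem_sup_right (Submodule.mem_sup_right this)

/-- Left multiples of the relations by words from a list. -/
def Kof (L : List (List Lt)) : Submodule ℚ T :=
  Submodule.span ℚ {t | ∃ p ∈ L ×ˢ List.range 11, t = word p.1 * W p.2}

lemma Kof_mem {L : List (List Lt)} {a : List Lt} {k : ℕ} (ha : a ∈ L) (hk : k < 11) :
    word a * W k ∈ Kof L :=
  Submodule.subset_span ⟨(a, k), by simp [ha, hk], rfl⟩

lemma Sp_Kof (L : List (List Lt)) : Sp (Kof L) (L.length * 11) := by
  have := Sp.list (L ×ˢ List.range 11) fun p : List Lt × ℕ => word p.1 * W p.2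
  rwa [List.length_product, List.length_range] at this

lemma nrm_e (w : List Lt) : nrm .e w = true := by
  induction w with
  | nil => rfl
  | cons l w ih => simp [nrm, ih, LTr.hit_e]

lemma mem_all (a : List Lt) : a ∈ lst .e a.length [] := by
  have := mem_lst .e a.length a [] rfl (nrm_e _)
  rwa [List.append_nil] at this

lemma J_zero (n : ℕ) (h : n < 4) : Sp (J n) 0 := by
  refine ⟨∅, by simp, ?_⟩
  refine Submodule.span_le.2 ?_
  rintro _ ⟨a, k, b, -, h', rfl⟩
  omega

lemma word_snoc (b : List Lt) (l : Lt) : word (b ++ [l]) = word b * X l := by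
  rw [word_append]; simp

lemma J_succ_le (n : ℕ) (S : Submodule ℚ T) (hS : RM (J n) ≤ S)
    (h : ∀ (a : List Lt) (k : ℕ), k < 11 → a.length + 4 = n + 1 → word a * W k ∈ S) :
    J (n + 1) ≤ S := by
  refine Submodule.span_le.2 ?_
  rintro _ ⟨a, k, b, hk, h', rfl⟩
  rcases List.eq_nil_or_concat b with rfl | ⟨b, l, rfl⟩
  · rw [word_nil, mul_one]; exact h a k hk (by simpa using h')
  · rw [List.concat_eq_append, word_snoc, ← mul_assoc]
    refine hS (mem_RM (J_mem a k b ?_) l)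
    simp at h'; omega

lemma J_succ (n m d : ℕ) (hm : m + 4 = n + 1) (h : Sp (J n) d) :
    Sp (J (n + 1)) (4 * d + cnt .e m [] * 11) := by
  rw [← lst_length]
  refine (h.RM.sup (Sp_Kof _)).mono (J_succ_le n _ le_sup_left ?_)
  intro a k hk ha
  refine Submodule.mem_sup_right (Kof_mem ?_ hk)
  have : m = a.length := by omega
  rw [this]; exact mem_all a

lemma J4 : Sp (J 4) 11 := J_succ 3 0 0 rfl (J_zero 3 (by norm_num))
lemma J5 : Sp (J 5) 88 := J_succ 4 1 11 rfl J4
lemma J6 : Sp (J 6) 528 := J_succ 5 2 88 rfl J5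
lemma J7 : Sp (J 7) 2816 := by
  have := J_succ 6 3 528 rfl J6
  have e : cnt .e 3 [] = 64 := by decide +kernel
  rw [e] at this; exact this

lemma J4_mul {x : T} (hx : x ∈ J 4) {y : T} (hy : y ∈ Tn 4) : x * y ∈ RM (J 7) := by
  have h : J 4 ≤ (RM (J 7)).comap (LinearMap.mulRight ℚ y) := by
    refine Submodule.span_le.2 ?_
    rintro _ ⟨a, k, b, hk, h', rfl⟩
    have h2 : Tn 4 ≤ (RM (J 7)).comap (LinearMap.mulLeft ℚ (word a * W k * word b)) := by
      refine Submodule.span_le.2 ?_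
      rintro _ ⟨c, hc, rfl⟩
      change word a * W k * word b * word c ∈ RM (J 7)
      rcases List.eq_nil_or_concat c with rfl | ⟨c, l, rfl⟩
      · simp at hc
      · rw [List.concat_eq_append, word_snoc, ← mul_assoc]
        refine mem_RM ?_ l
        rw [mul_assoc (word a * W k), ← word_append]
        refine J_mem a k _ ?_
        simp at hc h' ⊢; omega
    exact h2 hy
  exact h hx

lemma lst_len (t : LTr) (r : ℕ) (w u : List Lt) (h : u ∈ lst t r w) : u.length = w.length + r := by
  induction r generalizing w with
  | zero => simp only [lst, List.mem_singleton] at h; simp [h]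
  | succ r ih =>
    have key : ∀ l, u ∈ lst t r (l :: w) → u.length = w.length + (r + 1) := fun l h => by
      have := ih _ h; simp only [List.length_cons] at this; omega
    have k2 : ∀ (b : Bool) l, u ∈ cond b [] (lst t r (l :: w)) → u.length = w.length + (r + 1) := by
      intro b l h
      cases b
      · exact key l h
      · simp at h
    simp only [lst, List.mem_append] at h
    rcases h with (h | h) | (h | h)
    all_goals exact k2 _ _ h

lemma J8 : Sp (J 8) 13959 := by
  have h : Sp (RM (J 7) ⊔ Kof (NW 4)) (4 * 2816 + (NW 4).length * 11) := J7.RM.sup (Sp_Kof _)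
  rw [NW, lst_length, cnt_LT.1.1] at h
  refine h.mono (J_succ_le 7 _ le_sup_left ?_)
  intro a k hk ha
  have ha : a.length = 4 := by omega
  obtain ⟨x, hx, y, hy, e⟩ := Submodule.mem_sup.1 (reduce_LT a)
  rw [ha] at hy
  have hyT : y ∈ Tn 4 := by
    refine Submodule.span_le.2 ?_ hy
    rintro _ ⟨u, hu, rfl⟩
    exact word_mem_Tn (by simpa using lst_len _ _ _ _ hu)
  have hxT : x ∈ Tn 4 := by
    have : x = word a - y := by rw [← e]; abel
    rw [this]; exact Submodule.sub_mem _ (word_mem_Tn ha) hyT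
  rw [← e, add_mul]
  refine Submodule.add_mem _ (Submodule.mem_sup_left (J4_mul (TI_le 4 ⟨hxT, hx⟩) (W_Tn k)))
    (Submodule.mem_sup_right ?_)
  have h3 : Submodule.span ℚ {t | ∃ u ∈ NW 4, t = word u} ≤
      (Kof (NW 4)).comap (LinearMap.mulRight ℚ (W k)) := by
    refine Submodule.span_le.2 ?_
    rintro _ ⟨u, hu, rfl⟩
    exact Kof_mem hu hk
  exact h3 hy

/-- Values of the Hilbert series. -/
def aa : ℕ → ℕ
  | 0 => 1 | 1 => 4 | 2 => 16 | 3 => 64 | 4 => 245 | 5 => 936 | 6 => 3568 | 7 => 13568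
  | 8 => 51577 | _ => 0

lemma EE_val (n : ℕ) (hn : n ≤ 8) : Module.finrank ℚ (EE GP.gr n) = aa n := by
  have h1 := EE_finrank n
  have h2 := EE_upper n
  have fin := fun m => Tn_fin m
  have h3 : ∀ d, Sp (J n) d → Module.finrank ℚ (Tn n ⊓ I : Submodule ℚ T) ≤ d :=
    fun d h => (h.mono (TI_le n)).finrank
  obtain ⟨⟨c4, c5, c6⟩, c7, c8⟩ := cnt_LT
  interval_cases n
  · have := h3 _ (J_zero 0 (by norm_num)); simp only [aa]; omega
  · have := h3 _ (J_zero 1 (by norm_num)); simp only [aa]; omega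
  · have := h3 _ (J_zero 2 (by norm_num)); simp only [aa]; omega
  · have := h3 _ (J_zero 3 (by norm_num)); simp only [aa]; omega
  · have := h3 _ J4; simp only [aa]; omega
  · have := h3 _ J5; simp only [aa]; omega
  · have := h3 _ J6; simp only [aa]; omega
  · have := h3 _ J7; simp only [aa]; omega
  · have := h3 _ J8; simp only [aa]; omega

end KMLevel

namespace KMLevel

lemma stepH_lt {l n : ℕ} (H : ℕ → ℕ) (h : n < l) : stepH l H n = H n := by
  unfold stepH
  have e : n / l = 0 := Nat.div_eq_of_lt h
  rw [e]; simp

lemma stepH_ge {l n : ℕ} (H : ℕ → ℕ) (hl : 1 ≤ l) (h : l ≤ n) :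
    stepH l H n = H n + stepH l H (n - l) := by
  unfold stepH
  have e : n / l = (n - l) / l + 1 := by
    rw [Nat.div_eq_sub_div (by omega) h]
  rw [e, Fin.sum_univ_succ]
  simp only [Fin.val_zero, zero_mul, Nat.sub_zero, Fin.val_succ]
  congr 1
  refine Finset.sum_congr rfl fun a _ => ?_
  congr 1
  rw [Nat.sub_sub]; congr 1; ring

lemma iter_lt {l n : ℕ} (H : ℕ → ℕ) (h : n < l) (c : ℕ) : (stepH l)^[c] H n = H n := by
  induction c with
  | zero => rfl
  | succ c ih => rw [Function.iterate_succ_apply', stepH_lt _ h, ih]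

lemma iter_l {l : ℕ} (H : ℕ → ℕ) (h : 1 ≤ l) (c : ℕ) : (stepH l)^[c] H l = H l + c * H 0 := by
  induction c with
  | zero => simp
  | succ c ih =>
    rw [Function.iterate_succ_apply', stepH_ge _ h le_rfl, ih, Nat.sub_self, stepH_lt _ (by omega),
      iter_lt _ (by omega)]
    ring

lemma iter_mid {l n : ℕ} (H : ℕ → ℕ) (h : 1 ≤ l) (h1 : l < n) (h2 : n < 2 * l) (h3 : H (n - l) = 0)
    (c : ℕ) : (stepH l)^[c] H n = H n := by
  induction c with
  | zero => simp
  | succ c ih =>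
    rw [Function.iterate_succ_apply', stepH_ge _ h h1.le, ih, stepH_lt _ (by omega),
      iter_lt _ (by omega), h3, add_zero]

lemma HH_zero (c : ℕ → ℕ) (k : ℕ) (hk : k ≤ 8) : HH c k 0 = 1 := by
  induction k with
  | zero => rfl
  | succ k ih => rw [HH, iter_lt _ (by omega), ih (by omega)]

lemma HH_small (c : ℕ → ℕ) (k n : ℕ) (hn : 1 ≤ n) (h : n + k ≤ 8) : HH c k n = 0 := by
  induction k with
  | zero => simp only [HH]; rw [if_neg (by omega)]
  | succ k ih => rw [HH, iter_lt _ (by omega), ih (by omega)]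

/-- `H` takes the values listed in `xs`. -/
def Agr (H : ℕ → ℕ) (xs : List ℕ) : Prop := ∀ n ≤ 8, H n = xs.getD n 0

/-- Difference operator. -/
def dif (l : ℕ) (xs : List ℕ) : List ℕ :=
  (List.range 9).map fun n => xs.getD n 0 - if n < l then 0 else xs.getD (n - l) 0

lemma Agr.dif {H : ℕ → ℕ} {xs : List ℕ} {l : ℕ} (hl : 1 ≤ l) (h : Agr (stepH l H) xs) :
    Agr H (dif l xs) := by
  intro n hn
  have e : (KMLevel.dif l xs).getD n 0 = xs.getD n 0 - if n < l then 0 else xs.getD (n - l) 0 := by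
    unfold KMLevel.dif
    rw [List.getD_eq_getElem _ _ (by simp; omega)]
    simp
  rw [e]
  by_cases hn' : n < l
  · rw [if_pos hn', ← h n hn, stepH_lt _ hn', Nat.sub_zero]
  · rw [if_neg hn', ← h n hn, ← h (n - l) (by omega), stepH_ge _ hl (by omega)]
    omega

lemma Agr.iter {H : ℕ → ℕ} {xs : List ℕ} {l : ℕ} (hl : 1 ≤ l) (c : ℕ) (h : Agr ((stepH l)^[c] H) xs) :
    Agr H ((KMLevel.dif l)^[c] xs) := by
  induction c generalizing xs with
  | zero => exact h
  | succ c ih =>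
    rw [Function.iterate_succ_apply]
    rw [Function.iterate_succ_apply'] at h
    exact ih (Agr.dif hl h)

lemma HH_top (c : ℕ → ℕ) (k : ℕ) (hk : k < 8) : HH c (k + 1) (8 - k) = c (8 - k) := by
  rw [HH, iter_l _ (by omega), HH_small _ _ _ (by omega) (by omega), HH_zero _ _ (by omega)]
  ring

lemma HH_stay (c : ℕ → ℕ) (k n : ℕ) (h1 : 8 - k < n) (h2 : n < 2 * (8 - k)) :
    HH c (k + 1) n = HH c k n := by
  rw [HH, iter_mid _ (by omega) h1 h2 (HH_small _ _ _ (by omega) (by omega))]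

lemma solve (c : ℕ → ℕ) (h : ∀ n ≤ 8, HH c 8 n = aa n) :
    c 1 = 4 ∧ c 2 = 6 ∧ c 3 = 20 ∧ c 4 = 49 ∧ c 5 = 160 ∧ c 6 = 494 ∧ c 7 = 1636 ∧ c 8 = 5410 := by
  have A8 : Agr (HH c 8) [1, 4, 16, 64, 245, 936, 3568, 13568, 51577] := by
    intro n hn
    rw [h n hn]
    interval_cases n <;> rfl
  have c1 : c 1 = 4 := (HH_top c 7 (by norm_num)).symm.trans (A8 1 (by norm_num))
  have A7 := Agr.iter (H := HH c 7) (l := 1) le_rfl (c 1) A8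
  have e7 : (dif 1)^[4] [1, 4, 16, 64, 245, 936, 3568, 13568, 51577] = [1, 0, 6, 20, 70, 280, 1054, 3996, 15214] := by
    decide +kernel
  rw [c1, e7] at A7
  have c2 : c 2 = 6 := (HH_top c 6 (by norm_num)).symm.trans (A7 2 (by norm_num))
  have A6 := Agr.iter (H := HH c 6) (l := 2) (by norm_num) (c 2) A7
  have e6 : (dif 2)^[6] [1, 0, 6, 20, 70, 280, 1054, 3996, 15214] = [1, 0, 0, 20, 49, 160, 704, 2616, 9835] := by decide +kernel
  rw [c2, e6] at A6
  have c3 : c 3 = 20 := (HH_top c 5 (by norm_num)).symm.trans (A6 3 (by norm_num))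
  have A5 := Agr.iter (H := HH c 5) (l := 3) (by norm_num) (c 3) A6
  have e5 : (dif 3)^[20] [1, 0, 0, 20, 49, 160, 704, 2616, 9835] = [1, 0, 0, 0, 49, 160, 494, 1636, 6635] := by decide +kernel
  rw [c3, e5] at A5
  have c4 : c 4 = 49 := (HH_top c 4 (by norm_num)).symm.trans (A5 4 (by norm_num))
  have A4 := Agr.iter (H := HH c 4) (l := 4) (by norm_num) (c 4) A5
  have e4 : (dif 4)^[49] [1, 0, 0, 0, 49, 160, 494, 1636, 6635] = [1, 0, 0, 0, 0, 160, 494, 1636, 5410] := by decide +kernel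
  rw [c4, e4] at A4
  have c5 : c 5 = 160 := (HH_top c 3 (by norm_num)).symm.trans (A4 5 (by norm_num))
  have s6 : HH c 3 6 = 494 := (HH_stay c 3 6 (by norm_num) (by norm_num)).symm.trans (A4 6 (by norm_num))
  have s7 : HH c 3 7 = 1636 := (HH_stay c 3 7 (by norm_num) (by norm_num)).symm.trans (A4 7 (by norm_num))
  have s8 : HH c 3 8 = 5410 := (HH_stay c 3 8 (by norm_num) (by norm_num)).symm.trans (A4 8 (by norm_num))
  have c6 : c 6 = 494 := (HH_top c 2 (by norm_num)).symm.trans s6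
  have t7 : HH c 2 7 = 1636 := (HH_stay c 2 7 (by norm_num) (by norm_num)).symm.trans s7
  have t8 : HH c 2 8 = 5410 := (HH_stay c 2 8 (by norm_num) (by norm_num)).symm.trans s8
  have c7 : c 7 = 1636 := (HH_top c 1 (by norm_num)).symm.trans t7
  have c8 : c 8 = 5410 := (HH_top c 0 (by norm_num)).symm.trans
    ((HH_stay c 1 8 (by norm_num) (by norm_num)).symm.trans t8)
  exact ⟨c1, c2, c3, c4, c5, c6, c7, c8⟩

lemma dims (h : iSupIndep G) :
    Module.finrank ℚ (G 1) = 4 ∧ Module.finrank ℚ (G 2) = 6 ∧ Module.finrank ℚ (G 3) = 20 ∧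
    Module.finrank ℚ (G 4) = 49 ∧ Module.finrank ℚ (G 5) = 160 ∧ Module.finrank ℚ (G 6) = 494 ∧
    Module.finrank ℚ (G 7) = 1636 ∧ Module.finrank ℚ (G 8) = 5410 := by
  have hm := GF.main GP rfl h (fun l => Module.Finite.iff_fg.2 (Gp_fg e1 e2 l))
  refine solve (fun m => Module.finrank ℚ (GP.F m)) fun n hn => ?_
  rw [← EE_val n hn]
  exact (hm n hn).2.symm

end KMLevel

/-- **Dimensions of the graded levels of the simplest rank-2 hyperbolic Kac–Moody algebra
with respect to its standard `sl₂` subalgebra.** Here `D` is the level derivation with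
respect to node 1 (index `0`), and the eigenspaces of `D` with eigenvalues `1,…,8` have
dimensions `4, 6, 20, 49, 160, 494, 1636, 5410`. -/
theorem rank2_level_dims
    (D : LieDerivation ℚ (Matrix.ToLieAlgebra ℚ A2hyp) (Matrix.ToLieAlgebra ℚ A2hyp))
    (hDe : ∀ i, D (gE A2hyp i) = if i = 0 then gE A2hyp i else 0)
    (hDf : ∀ i, D (gF A2hyp i) = if i = 0 then -gF A2hyp i else 0)
    (hDh : ∀ i, D (gH A2hyp i) = 0) :
    Module.finrank ℚ (Module.End.eigenspace D.toLinearMap (1 : ℚ)) = 4 ∧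
    Module.finrank ℚ (Module.End.eigenspace D.toLinearMap (2 : ℚ)) = 6 ∧
    Module.finrank ℚ (Module.End.eigenspace D.toLinearMap (3 : ℚ)) = 20 ∧
    Module.finrank ℚ (Module.End.eigenspace D.toLinearMap (4 : ℚ)) = 49 ∧
    Module.finrank ℚ (Module.End.eigenspace D.toLinearMap (5 : ℚ)) = 160 ∧
    Module.finrank ℚ (Module.End.eigenspace D.toLinearMap (6 : ℚ)) = 494 ∧
    Module.finrank ℚ (Module.End.eigenspace D.toLinearMap (7 : ℚ)) = 1636 ∧
    Module.finrank ℚ (Module.End.eigenspace D.toLinearMap (8 : ℚ)) = 5410 := by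
  have he1 : D KMLevel.e1 = KMLevel.e1 := by
    have h := hDe 0
    simp only [if_true] at h
    exact h
  have he2 : D KMLevel.e2 = 0 := by
    have h := hDe 1
    simp only [one_ne_zero, if_false] at h
    exact h
  have hf1 : D KMLevel.f1 = -KMLevel.f1 := by
    have h := hDf 0
    simp only [if_true] at h
    exact h
  have hf2 : D KMLevel.f2 = 0 := by
    have h := hDf 1
    simp only [one_ne_zero, if_false] at h
    exact h
  have key := KMLevel.eig_eq D he1 he2 hf1 hf2 (hDh 0) (hDh 1)
  have hind : iSupIndep KMLevel.G := by
    have h0 := (Module.End.eigenspaces_iSupIndep D.toLinearMap).comp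
      (f := fun n : ℕ => (n : ℚ)) Nat.cast_injective
    refine h0.mono fun n => ?_
    have := KMLevel.eig_Gp D (a1 := KMLevel.e1) (a2 := KMLevel.e2) (c := 1)
      (by simpa using he1) he2 n
    rw [mul_one] at this
    exact this
  have hd := KMLevel.dims hind
  have k : ∀ n : ℕ, 1 ≤ n → ∀ q : ℚ, q = n →
      Module.finrank ℚ (Module.End.eigenspace D.toLinearMap q) = Module.finrank ℚ (KMLevel.G n) := by
    rintro n hn q rfl
    rw [key n hn]
  rw [k 1 (by norm_num) 1 (by norm_num), k 2 (by norm_num) 2 (by norm_num),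
    k 3 (by norm_num) 3 (by norm_num), k 4 (by norm_num) 4 (by norm_num),
    k 5 (by norm_num) 5 (by norm_num), k 6 (by norm_num) 6 (by norm_num),
    k 7 (by norm_num) 7 (by norm_num), k 8 (by norm_num) 8 (by norm_num)]
  exact hd
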